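/- arXiv:2408.06020 — 2 statements merged into one kernel-verified Lean document; each statement's English description precedes it below -/
import Mathlib

section
/- g_r(k) > f(k) holds in each of the following six cases, and in each case the maximum defining g_r(k) is attained by the indicated vector: (1) r = 2, k = 3, attained by a = (1,1); (2) r = 2, k = 4, attained by a = (1,2); (3) r = 2, k = 5, attained by a = (0,4); (4) r = 3, k = 3, attained by a = (0,0,2); (5) r = 3, k = 4, attained by a = (0,0,3); (6) r = 4, k = 3, attained by a = (0,0,0,2). -/
open Finset

def HyperUniform {V : Type*} (k : ℕ) (H : Finset (Finset V)) : Prop := ∀ e ∈ H, e.card = k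

def IsPM {V : Type*} [Fintype V] (H M : Finset (Finset V)) : Prop :=
  M ⊆ H ∧ (∀ e ∈ M, ∀ f ∈ M, e ≠ f → Disjoint e f) ∧ ∀ v : V, ∃ e ∈ M, v ∈ e

def hdeg {V : Type*} [DecidableEq V] (H : Finset (Finset V)) (v : V) : ℕ :=
  (H.filter (fun e => v ∈ e)).card

def IsVec (k r : ℕ) (a : ℕ → ℕ) : Prop :=
  (∀ i j : ℕ, i ≤ j → j < r → a i ≤ a j) ∧ (∑ i ∈ Finset.range r, a i) = k - 1

noncomputable def gfun (k r : ℕ) (a : ℕ → ℕ) : ℝ :=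
  (((k - 1).factorial : ℝ) / (∏ i ∈ Finset.range r, ((a i).factorial : ℝ))) *
    (∏ i ∈ Finset.range r, (((r * a i + 1 : ℕ) : ℝ) / ((r * k : ℕ) : ℝ)) ^ (a i)) *
    (1 + ((a 0 : ℝ) / ((r * a 0 + 1 : ℕ) : ℝ)) *
      ∑ i ∈ Finset.Ico 1 r, ((r * a i + 1 : ℕ) : ℝ) / ((a i + 1 : ℕ) : ℝ))

noncomputable def gThr (k r : ℕ) : ℝ :=
  sSup {x : ℝ | ∃ a : ℕ → ℕ, IsVec k r a ∧ x = gfun k r a}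

noncomputable def mThr (k n : ℕ) : ℕ :=
  sInf {m : ℕ | ∀ H : Finset (Finset (Fin n)), HyperUniform k H →
    (∀ v : Fin n, m ≤ hdeg H v) → ∃ M, IsPM H M}

noncomputable def fThr (k : ℕ) : ℝ :=
  Filter.limsup (fun n : ℕ => (mThr k n : ℝ) / ((n - 1).choose (k - 1) : ℝ))
    (Filter.atTop ⊓ Filter.principal {n : ℕ | k ∣ n})

set_option linter.unusedSimpArgs false
set_option linter.unusedVariables false
set_option linter.style.whitespace false


lemma gThr_eq_of {k r : ℕ} {a : ℕ → ℕ} (ha : IsVec k r a)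
    (h : ∀ b, IsVec k r b → gfun k r b ≤ gfun k r a) : gThr k r = gfun k r a := by
  apply IsGreatest.csSup_eq
  refine ⟨⟨a, ha, rfl⟩, ?_⟩
  rintro x ⟨b, hb, rfl⟩
  exact h b hb

lemma gThr32 : gThr 3 2 = gfun 3 2 (fun _ => 1) := by
  apply gThr_eq_of
  · refine ⟨by simp, by simp⟩
  · rintro b ⟨h1, h2⟩
    have h01 := h1 0 1 (by norm_num) (by norm_num)
    simp only [Finset.sum_range_succ, Finset.sum_range_zero] at h2
    generalize hx : b 0 = x at *
    generalize hy : b 1 = y at *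
    have hx2 : x ≤ 2 := by omega
    interval_cases x
    · obtain rfl : y = 2 := by omega
      simp [gfun, Finset.prod_range_succ, hx, hy, Nat.factorial]; norm_num
    · obtain rfl : y = 1 := by omega
      simp [gfun, Finset.prod_range_succ, hx, hy, Nat.factorial]; try norm_num
    · omega

lemma gThr42 : gThr 4 2 = gfun 4 2 (fun i => if i = 0 then 1 else 2) := by
  apply gThr_eq_of
  · refine ⟨fun i j hij hj => ?_, by simp [Finset.sum_range_succ]⟩
    interval_cases j <;> interval_cases i <;> simp
  · rintro b ⟨h1, h2⟩
    have h01 := h1 0 1 (by norm_num) (by norm_num)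
    simp only [Finset.sum_range_succ, Finset.sum_range_zero] at h2
    generalize hx : b 0 = x at *
    generalize hy : b 1 = y at *
    have hx2 : x ≤ 1 := by omega
    interval_cases x
    · obtain rfl : y = 3 := by omega
      simp [gfun, Finset.prod_range_succ, hx, hy, Nat.factorial]; norm_num
    · obtain rfl : y = 2 := by omega
      simp [gfun, Finset.prod_range_succ, hx, hy, Nat.factorial]; try norm_num

lemma gThr52 : gThr 5 2 = gfun 5 2 (fun i => if i = 0 then 0 else 4) := by
  apply gThr_eq_of
  · refine ⟨fun i j hij hj => ?_, by simp [Finset.sum_range_succ]⟩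
    interval_cases j <;> interval_cases i <;> simp
  · rintro b ⟨h1, h2⟩
    have h01 := h1 0 1 (by norm_num) (by norm_num)
    simp only [Finset.sum_range_succ, Finset.sum_range_zero] at h2
    generalize hx : b 0 = x at *
    generalize hy : b 1 = y at *
    have hx2 : x ≤ 2 := by omega
    interval_cases x
    · obtain rfl : y = 4 := by omega
      simp [gfun, Finset.prod_range_succ, hx, hy, Nat.factorial]; try norm_num
    · obtain rfl : y = 3 := by omega
      simp [gfun, Finset.prod_range_succ, hx, hy, Nat.factorial]; norm_num
    · obtain rfl : y = 2 := by omega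
      simp [gfun, Finset.prod_range_succ, hx, hy, Nat.factorial]; norm_num

lemma gThr33 : gThr 3 3 = gfun 3 3 (fun i => if i < 2 then 0 else 2) := by
  apply gThr_eq_of
  · refine ⟨fun i j hij hj => ?_, by simp [Finset.sum_range_succ]⟩
    interval_cases j <;> interval_cases i <;> simp
  · rintro b ⟨h1, h2⟩
    have h01 := h1 0 1 (by norm_num) (by norm_num)
    have h12 := h1 1 2 (by norm_num) (by norm_num)
    simp only [Finset.sum_range_succ, Finset.sum_range_zero] at h2
    generalize hx : b 0 = x at *
    generalize hy : b 1 = y at *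
    generalize hz : b 2 = z at *
    obtain rfl : x = 0 := by omega
    have hx2 : y ≤ 1 := by omega
    interval_cases y
    · obtain rfl : z = 2 := by omega
      simp [gfun, Finset.prod_range_succ, hx, hy, hz, Nat.factorial]; try norm_num
    · obtain rfl : z = 1 := by omega
      simp [gfun, Finset.prod_range_succ, hx, hy, hz, Nat.factorial]; norm_num

lemma gThr43 : gThr 4 3 = gfun 4 3 (fun i => if i < 2 then 0 else 3) := by
  apply gThr_eq_of
  · refine ⟨fun i j hij hj => ?_, by simp [Finset.sum_range_succ]⟩
    interval_cases j <;> interval_cases i <;> simp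
  · rintro b ⟨h1, h2⟩
    have h01 := h1 0 1 (by norm_num) (by norm_num)
    have h12 := h1 1 2 (by norm_num) (by norm_num)
    simp only [Finset.sum_range_succ, Finset.sum_range_zero] at h2
    generalize hx : b 0 = x at *
    generalize hy : b 1 = y at *
    generalize hz : b 2 = z at *
    have hx1 : x ≤ 1 := by omega
    have hx2 : y ≤ 1 := by omega
    interval_cases x <;> interval_cases y
    · obtain rfl : z = 3 := by omega
      simp [gfun, Finset.prod_range_succ, hx, hy, hz, Nat.factorial]; try norm_num
    · obtain rfl : z = 2 := by omega
      simp [gfun, Finset.prod_range_succ, hx, hy, hz, Nat.factorial]; norm_num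
    · obtain rfl : z = 1 := by omega
      simp [gfun, Finset.prod_range_succ, Finset.sum_Ico_succ_top, hx, hy, hz, Nat.factorial]; norm_num

lemma gThr34 : gThr 3 4 = gfun 3 4 (fun i => if i < 3 then 0 else 2) := by
  apply gThr_eq_of
  · refine ⟨fun i j hij hj => ?_, by simp [Finset.sum_range_succ]⟩
    interval_cases j <;> interval_cases i <;> simp
  · rintro b ⟨h1, h2⟩
    have h01 := h1 0 1 (by norm_num) (by norm_num)
    have h12 := h1 1 2 (by norm_num) (by norm_num)
    have h23 := h1 2 3 (by norm_num) (by norm_num)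
    simp only [Finset.sum_range_succ, Finset.sum_range_zero] at h2
    generalize hx : b 0 = x at *
    generalize hy : b 1 = y at *
    generalize hz : b 2 = z at *
    generalize hw : b 3 = w at *
    obtain rfl : x = 0 := by omega
    obtain rfl : y = 0 := by omega
    have hx2 : z ≤ 1 := by omega
    interval_cases z
    · obtain rfl : w = 2 := by omega
      simp [gfun, Finset.prod_range_succ, hx, hy, hz, hw, Nat.factorial]; try norm_num
    · obtain rfl : w = 1 := by omega
      simp [gfun, Finset.prod_range_succ, hx, hy, hz, hw, Nat.factorial]; norm_num

lemma g_gt_f_of (h3 : fThr 3 < 9/16) (h4 : fThr 4 < 125/216) (h5 : fThr 5 < 6561/10000) :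
    (fThr 3 < gThr 3 2 ∧ gThr 3 2 = gfun 3 2 (fun _ => 1)) ∧
    (fThr 4 < gThr 4 2 ∧ gThr 4 2 = gfun 4 2 (fun i => if i = 0 then 1 else 2)) ∧
    (fThr 5 < gThr 5 2 ∧ gThr 5 2 = gfun 5 2 (fun i => if i = 0 then 0 else 4)) ∧
    (fThr 3 < gThr 3 3 ∧ gThr 3 3 = gfun 3 3 (fun i => if i < 2 then 0 else 2)) ∧
    (fThr 4 < gThr 4 3 ∧ gThr 4 3 = gfun 4 3 (fun i => if i < 2 then 0 else 3)) ∧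
    (fThr 3 < gThr 3 4 ∧ gThr 3 4 = gfun 3 4 (fun i => if i < 3 then 0 else 2)) := by
  refine ⟨⟨?_, gThr32⟩, ⟨?_, gThr42⟩, ⟨?_, gThr52⟩, ⟨?_, gThr33⟩, ⟨?_, gThr43⟩, ⟨?_, gThr34⟩⟩
  · rw [gThr32]; refine lt_of_lt_of_le h3 ?_
    simp [gfun, Finset.prod_range_succ]; norm_num
  · rw [gThr42]; refine lt_of_lt_of_le h4 ?_
    simp [gfun, Finset.prod_range_succ, Nat.factorial]; norm_num
  · rw [gThr52]; refine lt_of_lt_of_le h5 ?_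
    simp [gfun, Finset.prod_range_succ, Nat.factorial]; norm_num
  · rw [gThr33]; refine lt_of_lt_of_le h3 ?_
    simp [gfun, Finset.prod_range_succ]; norm_num
  · rw [gThr43]; refine lt_of_lt_of_le h4 ?_
    simp [gfun, Finset.prod_range_succ, Nat.factorial]; norm_num
  · rw [gThr34]; refine lt_of_lt_of_le h3 ?_
    simp [gfun, Finset.prod_range_succ]; norm_num


/-! Real inequalities for three two-valued variables -/

lemma r3_A_aux {c1 c2 c3 : ℝ} (h1 : 0 ≤ c1) (h2 : 0 ≤ c2) (h3 : 0 ≤ c3)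
    (k1 : c1 ≤ 1) (k2 : c2 ≤ 1) (k3 : c3 ≤ 1) : 27 * (1 + c1 + c2 + c3) ^ 3 ≤
      64 * ((1 + c2 + c3) * (1 + c1 + c3) * (1 + c1 + c2)) := by
  obtain ⟨S, hS⟩ : ∃ S, S = c1 + c2 + c3 := ⟨_, rfl⟩
  obtain ⟨P2, hP2⟩ : ∃ P2, P2 = (1 - c1) * (1 - c2) + (1 - c1) * (1 - c3) + (1 - c2) * (1 - c3) := ⟨_, rfl⟩
  obtain ⟨P3, hP3⟩ : ∃ P3, P3 = (1 - c1) * (1 - c2) * (1 - c3) := ⟨_, rfl⟩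
  have p30 : 0 ≤ P3 := by
    rw [hP3]; exact mul_nonneg (mul_nonneg (by linarith) (by linarith)) (by linarith)
  have p20 : 0 ≤ P2 := by
    rw [hP2]
    have := mul_nonneg (sub_nonneg.2 k1) (sub_nonneg.2 k2)
    have := mul_nonneg (sub_nonneg.2 k1) (sub_nonneg.2 k3)
    have := mul_nonneg (sub_nonneg.2 k2) (sub_nonneg.2 k3)
    linarith
  have S0 : 0 ≤ S := by linarith
  have S3 : S ≤ 3 := by linarith
  have q1 : 2 - S ≤ P2 - P3 := by
    have := mul_nonneg (mul_nonneg h1 h2) h3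
    rw [hP2, hP3, hS]; nlinarith
  have q2 : 3 - 2 * S ≤ P2 := by
    have := mul_nonneg h1 h2
    have := mul_nonneg h1 h3
    have := mul_nonneg h2 h3
    rw [hP2, hS]; nlinarith
  have e : (1 + c2 + c3) * (1 + c1 + c3) * (1 + c1 + c2) = 3 * S ^ 2 + S * P2 + P3 := by
    rw [hP2, hP3, hS]; ring
  have e2 : 1 + c1 + c2 + c3 = S + 1 := by rw [hS]; ring
  have q3 : 1 - S ≤ P3 := by
    have a1 : 1 - c1 - c2 ≤ (1 - c1) * (1 - c2) := by nlinarith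
    by_cases hc : 0 ≤ 1 - c1 - c2
    · have := mul_le_mul_of_nonneg_right a1 (sub_nonneg.2 k3)
      rw [hP3, hS]; nlinarith
    · linarith
  rw [e, e2]
  clear e e2 hP2 hP3 h1 h2 h3 k1 k2 k3 hS
  by_cases c2 : 2 ≤ S
  · have := mul_nonneg S0 p20
    nlinarith [mul_nonneg (sub_nonneg.2 c2) (sub_nonneg.2 S3), mul_nonneg (mul_nonneg (sub_nonneg.2 c2) (sub_nonneg.2 S3)) S0]
  · push Not at c2
    by_cases c1 : 1 ≤ S
    · have h := mul_le_mul_of_nonneg_left (by linarith : 2 - S ≤ P2) S0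
      have : 0 ≤ (S - 1) * (2 - S) := mul_nonneg (by linarith) (by linarith)
      nlinarith [mul_nonneg this S0]
    · push Not at c1
      have h := mul_le_mul_of_nonneg_left q2 S0
      nlinarith [mul_nonneg S0 (sub_nonneg.2 c1.le), mul_nonneg (mul_nonneg S0 S0) (sub_nonneg.2 c1.le)]

lemma r3_C_aux {m c1 : ℝ} (hm0 : 0 ≤ m) (h1 : 0 ≤ c1) (hm1 : m ≤ 1) (k1 : c1 ≤ 1) :
    4 * (1 + m + c1) ^ 2 ≤ 9 * ((1 + m) * (1 + c1)) := by
  nlinarith [mul_nonneg hm0 (sub_nonneg.2 hm1), mul_nonneg h1 (sub_nonneg.2 k1),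
    mul_nonneg (sub_nonneg.2 hm1) (sub_nonneg.2 k1)]

lemma r3_D_aux {h t : ℝ} (h0 : 0 ≤ h) (h1 : h ≤ 1) (t1 : 1 ≤ t) (t2 : t ≤ 2) :
    t * (h + t) - h * (t - 1) ≤ 37/64 * ((h + t)^2 * (2 - h)) := by
  obtain ⟨A, hA⟩ : ∃ A, A = 37/64 * (2 - h) := ⟨_, rfl⟩
  have f1 : 0 ≤ A * (1 + h)^2 - 1 - h := by
    rw [hA]
    have : 1 ≤ (1 + h) * (37/64 * (2 - h)) := by nlinarith
    nlinarith
  have f2 : 0 ≤ A * (2 + h)^2 - 4 - h := by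
    rw [hA]
    nlinarith [mul_nonneg h0 (sub_nonneg.2 h1), mul_nonneg (mul_nonneg h0 h0) (sub_nonneg.2 h1)]
  have A0 : 0 ≤ A := by rw [hA]; nlinarith
  have goal : 0 ≤ A * (h + t)^2 - t^2 - h := by
    by_cases hc : A ≤ 1
    · have e : A * (h + t)^2 - t^2 - h = (2 - t) * (A * (1 + h)^2 - 1 - h) +
        (t - 1) * (A * (2 + h)^2 - 4 - h) + (1 - A) * ((t - 1) * (2 - t)) := by ring
      rw [e]
      have := mul_nonneg (sub_nonneg.2 t2) f1
      have := mul_nonneg (sub_nonneg.2 t1) f2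
      have := mul_nonneg (sub_nonneg.2 hc) (mul_nonneg (sub_nonneg.2 t1) (sub_nonneg.2 t2))
      linarith
    · push Not at hc
      have e : A * (h + t)^2 - t^2 - h = (A * (1 + h)^2 - 1 - h) +
        (A - 1) * ((t - 1) * (t + 1)) + 2 * A * h * (t - 1) := by ring
      rw [e]
      have := mul_nonneg (sub_nonneg.2 hc.le) (mul_nonneg (sub_nonneg.2 t1) (by linarith : 0 ≤ t + 1))
      have := mul_nonneg (mul_nonneg A0 h0) (sub_nonneg.2 t1)
      linarith
  rw [hA] at goal
  linarith

lemma r3_A {p1 p2 p3 c1 c2 c3 : ℝ} (hp1 : p1 ≤ 1) (hp2 : p2 ≤ 1) (hp3 : p3 ≤ 1)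
    (h1 : 0 ≤ c1) (h2 : 0 ≤ c2) (h3 : 0 ≤ c3)
    (k1 : c1 ≤ 1) (k2 : c2 ≤ 1) (k3 : c3 ≤ 1)
    (g1 : p1 * (1 + c1 + c2 + c3) ≤ c1) (g2 : p2 * (1 + c1 + c2 + c3) ≤ c2)
    (g3 : p3 * (1 + c1 + c2 + c3) ≤ c3) : 27/64 ≤ (1 - p1) * (1 - p2) * (1 - p3) := by
  have hs : 0 < 1 + c1 + c2 + c3 := by linarith
  set s := 1 + c1 + c2 + c3 with hsd
  have a1 : 1 + c2 + c3 ≤ (1 - p1) * s := by nlinarith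
  have a2 : 1 + c1 + c3 ≤ (1 - p2) * s := by nlinarith
  have a3 : 1 + c1 + c2 ≤ (1 - p3) * s := by nlinarith
  have key : 27 * s ^ 3 ≤ 64 * ((1 + c2 + c3) * (1 + c1 + c3) * (1 + c1 + c2)) := by
    exact r3_A_aux h1 h2 h3 k1 k2 k3
  have m1 : (1 + c2 + c3) * (1 + c1 + c3) ≤ ((1 - p1) * s) * ((1 - p2) * s) :=
    mul_le_mul a1 a2 (by linarith) (by nlinarith)
  have m2 : (1 + c2 + c3) * (1 + c1 + c3) * (1 + c1 + c2) ≤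
      ((1 - p1) * s) * ((1 - p2) * s) * ((1 - p3) * s) :=
    mul_le_mul m1 a3 (by linarith) (le_trans (by positivity) m1)
  have : 27 * s ^ 3 ≤ 64 * ((1 - p1) * (1 - p2) * (1 - p3)) * s ^ 3 := by nlinarith
  have hs3 : 0 < s ^ 3 := by positivity
  have := le_of_mul_le_mul_right this hs3
  linarith

lemma r3_C {p1 p2 p3 c1 c2 c3 e2 e3 : ℝ}
    (hp1 : p1 ≤ 1) (hp2 : p2 ≤ 1) (hp3 : p3 ≤ 1) (o2 : 0 ≤ p2) (o3 : 0 ≤ p3)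
    (h1 : 0 ≤ c1) (h2 : 0 ≤ c2) (h3 : 0 ≤ c3)
    (k1 : c1 ≤ 1) (k2 : c2 ≤ 1) (k3 : c3 ≤ 1) (he2 : 0 ≤ e2) (he3 : 0 ≤ e3)
    (g1 : p1 * (1 + c1 + c2 + c3) ≤ c1) (g2 : p2 * e2 = (1 - p2) * c2)
    (g3 : p3 * e3 = (1 - p3) * c3) (g : 1 + c1 ≤ e2 + e3) :
    27/64 ≤ (1 - p1) * (1 - p2 * p3) := by
  obtain ⟨m, hm2, hm3, hm0, hm1, hm⟩ : ∃ m, c2 ≤ m ∧ c3 ≤ m ∧ 0 ≤ m ∧ m ≤ 1 ∧ m ≤ c2 + c3 := by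
    refine ⟨max c2 c3, le_max_left _ _, le_max_right _ _, le_max_of_le_left h2, max_le k2 k3, ?_⟩
    apply max_le <;> linarith
  have a1 : 1 + m ≤ (1 - p1) * (1 + m + c1) := by
    have : p1 * (1 + c1 + m) ≤ c1 := by
      by_cases h : 0 ≤ p1
      · nlinarith
      · nlinarith
    nlinarith
  have b2 : p2 * (m + e2) ≤ m := by nlinarith
  have b3 : p3 * (m + e3) ≤ m := by nlinarith
  have b : 1 + c1 ≤ (1 - p2 * p3) * (1 + m + c1) := by
    have hp : p2 * p3 * (m + 1 + c1) ≤ m := by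
      by_cases hm' : m = 0
      · subst hm'
        have e2' : p2 * e2 = 0 := by nlinarith
        have e3' : p3 * e3 = 0 := by nlinarith
        have : p2 * p3 * (1 + c1) ≤ p2 * p3 * (e2 + e3) := by
          apply mul_le_mul_of_nonneg_left g; positivity
        have h' : p2 * p3 * (e2 + e3) = 0 := by
          have : p2 * p3 * (e2 + e3) = p3 * (p2 * e2) + p2 * (p3 * e3) := by ring
          rw [this, e2', e3']; ring
        linarith
      · have hmp : 0 < m := lt_of_le_of_ne hm0 (Ne.symm hm')
        have : p2 * (m + e2) * (p3 * (m + e3)) ≤ m * m :=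
          mul_le_mul b2 b3 (by positivity) hm0
        have h' : p2 * p3 * (m * (m + (1 + c1))) ≤ m * m := by
          have h1 : p2 * p3 * (m * (m + (1 + c1))) ≤ p2 * p3 * ((m + e2) * (m + e3)) := by
            apply mul_le_mul_of_nonneg_left _ (by positivity)
            nlinarith [mul_nonneg he2 he3]
          nlinarith
        have : m * (p2 * p3 * (m + 1 + c1)) ≤ m * m := by nlinarith
        exact le_of_mul_le_mul_left this hmp
    nlinarith
  have hs : 0 < 1 + m + c1 := by linarith
  have m1 : (1 + m) * (1 + c1) ≤ ((1 - p1) * (1 + m + c1)) * ((1 - p2 * p3) * (1 + m + c1)) :=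
    mul_le_mul a1 b (by linarith) (by nlinarith)
  have key : 4 * (1 + m + c1) ^ 2 ≤ 9 * ((1 + m) * (1 + c1)) := r3_C_aux hm0 h1 hm1 k1
  have : 4 * (1 + m + c1) ^ 2 ≤ 9 * ((1 - p1) * (1 - p2 * p3)) * (1 + m + c1) ^ 2 := by nlinarith
  have := le_of_mul_le_mul_right this (by positivity)
  linarith

lemma maj_mono {p1 p2 p3 x1 x2 x3 : ℝ} (o1 : 0 ≤ p1) (o2 : 0 ≤ p2) (o3 : 0 ≤ p3)
    (a1 : p1 ≤ x1) (a2 : p2 ≤ x2) (a3 : p3 ≤ x3) (b1 : x1 ≤ 1) (b2 : x2 ≤ 1) (b3 : x3 ≤ 1) :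
    p2 * p3 + p1 * (p2 + p3 - 2 * p2 * p3) ≤ x2 * x3 + x1 * (x2 + x3 - 2 * x2 * x3) := by
  have f1 : p2 * p3 + p1 * (p2 + p3 - 2 * p2 * p3) ≤ p2 * p3 + x1 * (p2 + p3 - 2 * p2 * p3) := by
    have : 0 ≤ p2 + p3 - 2 * p2 * p3 := by nlinarith
    nlinarith
  have f2 : p2 * p3 + x1 * (p2 + p3 - 2 * p2 * p3) ≤ x2 * p3 + x1 * (x2 + p3 - 2 * x2 * p3) := by
    have : 0 ≤ x1 + p3 - 2 * x1 * p3 := by nlinarith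
    nlinarith
  have f3 : x2 * p3 + x1 * (x2 + p3 - 2 * x2 * p3) ≤ x2 * x3 + x1 * (x2 + x3 - 2 * x2 * x3) := by
    have : 0 ≤ x1 + x2 - 2 * x1 * x2 := by nlinarith
    nlinarith
  linarith

lemma r3_D {p1 p2 p3 c1 c2 c3 e1 e2 e3 : ℝ}
    (hp1 : p1 ≤ 1) (hp2 : p2 ≤ 1) (hp3 : p3 ≤ 1) (o1 : 0 ≤ p1) (o2 : 0 ≤ p2) (o3 : 0 ≤ p3)
    (h1 : 0 ≤ c1) (h2 : 0 ≤ c2) (h3 : 0 ≤ c3)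
    (k1 : c1 ≤ 1) (k2 : c2 ≤ 1) (k3 : c3 ≤ 1) (he1 : 0 ≤ e1) (he2 : 0 ≤ e2) (he3 : 0 ≤ e3)
    (g1 : p1 * e1 = (1 - p1) * c1) (g2 : p2 * e2 = (1 - p2) * c2)
    (g3 : p3 * e3 = (1 - p3) * c3) (u2 : 1 + c3 ≤ e1 + e2) (u3 : 1 + c2 ≤ e1 + e3) (hlt : e1 < 1) :
    p2 * p3 + p1 * (p2 + p3 - 2 * p2 * p3) ≤ 37/64 := by
  obtain ⟨h, rfl⟩ : ∃ h, e1 = 1 - h := ⟨1 - e1, by ring⟩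
  have hh0 : 0 < h := by linarith
  have hh1 : h ≤ 1 := by linarith
  have a1 : p1 ≤ 1 / (2 - h) := by rw [le_div_iff₀ (by linarith)]; nlinarith
  have hg : 0 < h + c2 + c3 := by linarith
  have a2 : p2 ≤ c2 / (h + c2 + c3) := by rw [le_div_iff₀ hg]; nlinarith
  have a3 : p3 ≤ c3 / (h + c2 + c3) := by rw [le_div_iff₀ hg]; nlinarith
  refine le_trans (maj_mono o1 o2 o3 a1 a2 a3 ?_ ?_ ?_) ?_
  · rw [div_le_one (by linarith)]; linarith
  · rw [div_le_one (by linarith)]; linarith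
  · rw [div_le_one (by linarith)]; linarith
  · have h2h : 0 < 2 - h := by linarith
    have e : c2 / (h + c2 + c3) * (c3 / (h + c2 + c3)) + 1 / (2 - h) * (c2 / (h + c2 + c3) + c3 / (h + c2 + c3) - 2 * (c2 / (h + c2 + c3)) * (c3 / (h + c2 + c3)))
        = ((c2 + c3) * (h + c2 + c3) - h * (c2 * c3)) / ((h + c2 + c3)^2 * (2 - h)) := by
      field_simp; ring
    rw [e, div_le_iff₀ (by positivity)]
    by_cases ht : c2 + c3 ≤ 1
    · have : 0 ≤ h * (c2 * c3) := by positivity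
      have k : (c2 + c3) ≤ 37/64 * ((h + c2 + c3) * (2 - h)) := by
        have := mul_nonneg hh0.le (by linarith : 0 ≤ 2 - h - (c2 + c3))
        have h9 : 0 ≤ (h + c2 + c3) * (2 - h) := by positivity
        linarith
      have h8 := mul_le_mul_of_nonneg_right k hg.le
      calc _ ≤ (c2 + c3) * (h + c2 + c3) := by linarith
        _ ≤ _ := h8
        _ = _ := by ring
    · push Not at ht
      have : c2 + c3 - 1 ≤ c2 * c3 := by nlinarith
      obtain ⟨t, ht'⟩ : ∃ t, t = c2 + c3 := ⟨_, rfl⟩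
      have t1 : 1 < t := by linarith
      have t2 : t ≤ 2 := by linarith
      have k : t * (h + t) - h * (t - 1) ≤ 37/64 * ((h + t)^2 * (2 - h)) := by
        exact r3_D_aux hh0.le hh1 t1.le t2
      have : (c2 + c3) * (h + c2 + c3) - h * (c2 * c3) ≤ t * (h + t) - h * (t - 1) := by
        rw [ht']; nlinarith
      have e2 : (h + c2 + c3) = h + t := by rw [ht']; ring
      rw [e2]; rw [e2] at this; linarith



noncomputable def I3 (x : ℝ) : ℝ := if 1 ≤ x then 1 else 0

lemma I3_le (x : ℝ) : I3 x ≤ 1 := by unfold I3; split_ifs <;> norm_num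
lemma I3_nonneg (x : ℝ) : 0 ≤ I3 x := by unfold I3; split_ifs <;> norm_num
lemma I3_zero {x : ℝ} (h : ¬ 1 ≤ x) : I3 x = 0 := by unfold I3; rw [if_neg h]

structure TP (p c e : ℝ) : Prop where
  p0 : 0 ≤ p
  p1 : p ≤ 1
  c0 : 0 ≤ c
  c1 : c ≤ 1
  e0 : 0 ≤ e
  eq : p * e = (1 - p) * c

lemma TP.single {p c e x : ℝ} (h : TP p c e) (hx : 1 + x ≤ e) : p * (1 + c + x) ≤ c := by
  have := mul_le_mul_of_nonneg_left hx h.p0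
  have := h.eq
  nlinarith

lemma TP.inv {p c e : ℝ} (h : TP p c e) : p * (1 + e) ≤ 1 := by
  have := h.eq
  have := mul_nonneg (sub_nonneg.2 h.p1) (sub_nonneg.2 h.c1)
  nlinarith

lemma TP.le_one_div {p c e : ℝ} (h : TP p c e) : p ≤ 1 / (1 + e) := by
  rw [le_div_iff₀ (by linarith [h.e0])]; exact h.inv

lemma TP.half {p c e : ℝ} (h : TP p c e) (he : 1 ≤ e) : p ≤ 1/2 := by
  have := h.inv
  have := h.p0
  nlinarith

lemma r3_F {p1 c1 e1 p2 c2 e2 : ℝ} (h1 : TP p1 c1 e1) (h2 : TP p2 c2 e2) (h : 1 ≤ e1 + e2) :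
    p1 * p2 ≤ 1/2 := by
  have a := mul_le_mul h1.inv h2.inv (mul_nonneg h2.p0 (by linarith [h2.e0])) zero_le_one
  have b := mul_nonneg h1.p0 h2.p0
  have c := mul_nonneg h1.e0 h2.e0
  have d := mul_nonneg b c
  have f := mul_le_mul_of_nonneg_left h b
  nlinarith

lemma r3_G {p1 c1 e1 p2 c2 e2 p3 c3 e3 : ℝ} (h1 : TP p1 c1 e1) (h2 : TP p2 c2 e2)
    (h3 : TP p3 c3 e3) (h : 1 ≤ e1 + e2 + e3) :
    p1 * p2 * p3 ≤ 1/2 := by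
  have a := mul_le_mul h1.inv h2.inv (mul_nonneg h2.p0 (by linarith [h2.e0])) zero_le_one
  have a' := mul_le_mul a h3.inv (mul_nonneg h3.p0 (by linarith [h3.e0])) (by norm_num)
  have b := mul_nonneg (mul_nonneg h1.p0 h2.p0) h3.p0
  have c : 2 ≤ (1 + e1) * (1 + e2) * (1 + e3) := by
    have := mul_nonneg h1.e0 h2.e0
    have := mul_nonneg h1.e0 h3.e0
    have := mul_nonneg h2.e0 h3.e0
    have := mul_nonneg (mul_nonneg h1.e0 h2.e0) h3.e0
    nlinarith
  have f := mul_le_mul_of_nonneg_left c b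
  have e : p1 * (1 + e1) * (p2 * (1 + e2)) * (p3 * (1 + e3)) = p1 * p2 * p3 * ((1 + e1) * (1 + e2) * (1 + e3)) := by ring
  rw [e] at a'
  linarith

lemma r3_D' {p1 c1 e1 p2 c2 e2 p3 c3 e3 : ℝ} (h1 : TP p1 c1 e1) (h2 : TP p2 c2 e2)
    (h3 : TP p3 c3 e3) (u2 : 1 + c3 ≤ e1 + e2) (u3 : 1 + c2 ≤ e1 + e3) (hlt : e1 < 1) :
    p2 * p3 + p1 * (p2 + p3 - 2 * p2 * p3) ≤ 37/64 :=
  r3_D h1.p1 h2.p1 h3.p1 h1.p0 h2.p0 h3.p0 h1.c0 h2.c0 h3.c0 h1.c1 h2.c1 h3.c1 h1.e0 h2.e0 h3.e0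
    h1.eq h2.eq h3.eq u2 u3 hlt

lemma r3_Dfull {p1 c1 e1 p2 c2 e2 p3 c3 e3 : ℝ} (h1 : TP p1 c1 e1) (h2 : TP p2 c2 e2)
    (h3 : TP p3 c3 e3) (u12 : 1 + c3 ≤ e1 + e2) (u13 : 1 + c2 ≤ e1 + e3) (u23 : 1 + c1 ≤ e2 + e3) :
    p2 * p3 + p1 * (p2 + p3 - 2 * p2 * p3) ≤ 37/64 := by
  by_cases l1 : e1 < 1
  · exact r3_D' h1 h2 h3 u12 u13 l1
  by_cases l2 : e2 < 1
  · have := r3_D' h2 h1 h3 (by linarith) u23 l2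
    linarith
  by_cases l3 : e3 < 1
  · have := r3_D' h3 h1 h2 (by linarith) (by linarith) l3
    linarith
  have := maj_mono h1.p0 h2.p0 h3.p0 (h1.half (not_lt.1 l1)) (h2.half (not_lt.1 l2))
    (h3.half (not_lt.1 l3)) (by norm_num) (by norm_num) (by norm_num)
  linarith

lemma r3_E {p1 c1 e1 p2 c2 e2 p3 c3 e3 : ℝ} (h1 : TP p1 c1 e1) (h2 : TP p2 c2 e2)
    (h3 : TP p3 c3 e3) (u12 : 1 + c3 ≤ e1 + e2) (u13 : 1 + c2 ≤ e1 + e3) :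
    p1 * (1 - (1 - p2) * (1 - p3)) ≤ 37/64 := by
  by_cases l1 : e1 < 1
  · have := r3_D' h1 h2 h3 u12 u13 l1
    have := mul_nonneg (mul_nonneg h2.p0 h3.p0) (sub_nonneg.2 h1.p1)
    linarith
  · have a := h1.half (not_lt.1 l1)
    have := mul_nonneg h1.p0 (mul_nonneg (sub_nonneg.2 h2.p1) (sub_nonneg.2 h3.p1))
    linarith

lemma r3_B {p1 c1 e1 p2 c2 e2 c3 : ℝ} (h1 : TP p1 c1 e1) (h2 : TP p2 c2 e2)
    (h30 : 0 ≤ c3) (h31 : c3 ≤ 1) (u1 : 1 + c2 + c3 ≤ e1) (u2 : 1 + c1 + c3 ≤ e2) :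
    27/64 ≤ (1 - p1) * (1 - p2) := by
  have := r3_A (p1 := p1) (p2 := p2) (p3 := 0) h1.p1 h2.p1 zero_le_one h1.c0 h2.c0 h30 h1.c1 h2.c1
    h31 (by have := h1.single (x := c2 + c3) (by linarith); linarith)
    (by have := h2.single (x := c1 + c3) (by linarith); linarith) (by linarith)
  linarith

lemma r3_C1 {p1 c1 e1 c2 c3 : ℝ} (h1 : TP p1 c1 e1) (h20 : 0 ≤ c2)
    (h30 : 0 ≤ c3) (u1 : 1 + c2 + c3 ≤ e1) :
    27/64 ≤ (1 - p1) := by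
  have := h1.half (by linarith)
  linarith

lemma r3_C' {p1 c1 e1 p2 c2 e2 p3 c3 e3 : ℝ} (h1 : TP p1 c1 e1) (h2 : TP p2 c2 e2)
    (h3 : TP p3 c3 e3) (u1 : 1 + c2 + c3 ≤ e1) (u23 : 1 + c1 ≤ e2 + e3) :
    27/64 ≤ (1 - p1) * (1 - p2 * p3) :=
  r3_C h1.p1 h2.p1 h3.p1 h2.p0 h3.p0 h1.c0 h2.c0 h3.c0 h1.c1 h2.c1 h3.c1 h2.e0 h3.e0
    (by have := h1.single (x := c2 + c3) (by linarith); linarith) h2.eq h3.eq u23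

lemma r3_main {p1 c1 e1 p2 c2 e2 p3 c3 e3 : ℝ} (h1 : TP p1 c1 e1) (h2 : TP p2 c2 e2)
    (h3 : TP p3 c3 e3) :
    p1 * (p2 * (p3 * I3 (e1 + e2 + e3) + (1 - p3) * I3 (e1 + e2 - c3)) +
      (1 - p2) * (p3 * I3 (e1 - c2 + e3) + (1 - p3) * I3 (e1 - c2 - c3))) +
    (1 - p1) * (p2 * (p3 * I3 (-c1 + e2 + e3) + (1 - p3) * I3 (-c1 + e2 - c3)) +
      (1 - p2) * (p3 * I3 (-c1 - c2 + e3) + (1 - p3) * I3 (-c1 - c2 - c3))) ≤ 37/64 := by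
  have hc1 := h1.c0
  have hc2 := h2.c0
  have hc3 := h3.c0
  have z0 : I3 (-c1 - c2 - c3) = 0 := I3_zero (by linarith)
  have a1 := h1.p0
  have a2 := h2.p0
  have a3 := h3.p0
  have b1 := sub_nonneg.2 h1.p1
  have b2 := sub_nonneg.2 h2.p1
  have b3 := sub_nonneg.2 h3.p1
  have w123 := mul_le_mul_of_nonneg_left (I3_le (e1 + e2 + e3)) (mul_nonneg (mul_nonneg a1 a2) a3)
  have w12 := mul_le_mul_of_nonneg_left (I3_le (e1 + e2 - c3)) (mul_nonneg (mul_nonneg a1 a2) b3)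
  have w13 := mul_le_mul_of_nonneg_left (I3_le (e1 - c2 + e3)) (mul_nonneg (mul_nonneg a1 b2) a3)
  have w23 := mul_le_mul_of_nonneg_left (I3_le (-c1 + e2 + e3)) (mul_nonneg (mul_nonneg b1 a2) a3)
  have w1 := mul_le_mul_of_nonneg_left (I3_le (e1 - c2 - c3)) (mul_nonneg (mul_nonneg a1 b2) b3)
  have w2 := mul_le_mul_of_nonneg_left (I3_le (-c1 + e2 - c3)) (mul_nonneg (mul_nonneg b1 a2) b3)
  have w3 := mul_le_mul_of_nonneg_left (I3_le (-c1 - c2 + e3)) (mul_nonneg (mul_nonneg b1 b2) a3)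
  have m12 := mul_nonneg a1 a2
  have m13 := mul_nonneg a1 a3
  have m23 := mul_nonneg a2 a3
  have m123 := mul_nonneg m12 a3
  rw [z0]
  by_cases s1 : 1 ≤ e1 - c2 - c3
  · by_cases s2 : 1 ≤ -c1 + e2 - c3
    · by_cases s3 : 1 ≤ -c1 - c2 + e3
      · have := r3_A h1.p1 h2.p1 h3.p1 h1.c0 h2.c0 h3.c0 h1.c1 h2.c1 h3.c1
          (by have := h1.single (x := c2 + c3) (by linarith); linarith)
          (by have := h2.single (x := c1 + c3) (by linarith); linarith)
          (by have := h3.single (x := c1 + c2) (by linarith); linarith)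
        linarith
      · have := r3_B h1 h2 h3.c0 h3.c1 (by linarith) (by linarith)
        rw [I3_zero s3] at w3 ⊢
        linarith
    · by_cases s3 : 1 ≤ -c1 - c2 + e3
      · have := r3_B h1 h3 h2.c0 h2.c1 (by linarith) (by linarith)
        rw [I3_zero s2] at w2 ⊢
        linarith
      · rw [I3_zero s2] at w2 ⊢
        rw [I3_zero s3] at w3 ⊢
        by_cases t : 1 ≤ -c1 + e2 + e3
        · have := r3_C' h1 h2 h3 (by linarith) (by linarith)
          linarith
        · have := r3_C1 h1 h2.c0 h3.c0 (by linarith)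
          rw [I3_zero t] at w23 ⊢
          linarith
  · rw [I3_zero s1] at w1 ⊢
    by_cases s2 : 1 ≤ -c1 + e2 - c3
    · by_cases s3 : 1 ≤ -c1 - c2 + e3
      · have := r3_B h2 h3 h1.c0 h1.c1 (by linarith) (by linarith)
        linarith
      · rw [I3_zero s3] at w3 ⊢
        by_cases t : 1 ≤ e1 - c2 + e3
        · have := r3_C' h2 h1 h3 (by linarith) (by linarith)
          linarith
        · have := r3_C1 h2 h1.c0 h3.c0 (by linarith)
          rw [I3_zero t] at w13 ⊢
          linarith
    · rw [I3_zero s2] at w2 ⊢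
      by_cases s3 : 1 ≤ -c1 - c2 + e3
      · by_cases t : 1 ≤ e1 + e2 - c3
        · have := r3_C' h3 h1 h2 (by linarith) (by linarith)
          linarith
        · have := r3_C1 h3 h1.c0 h2.c0 (by linarith)
          rw [I3_zero t] at w12 ⊢
          linarith
      · rw [I3_zero s3] at w3 ⊢
        by_cases t12 : 1 ≤ e1 + e2 - c3
        · by_cases t13 : 1 ≤ e1 - c2 + e3
          · by_cases t23 : 1 ≤ -c1 + e2 + e3
            · have := r3_Dfull h1 h2 h3 (by linarith) (by linarith) (by linarith)
              linarith
            · have := r3_E h1 h2 h3 (by linarith) (by linarith)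
              rw [I3_zero t23] at w23 ⊢
              linarith
          · rw [I3_zero t13] at w13 ⊢
            by_cases t23 : 1 ≤ -c1 + e2 + e3
            · have := r3_E h2 h1 h3 (by linarith) (by linarith)
              linarith
            · have := r3_F h1 h2 (by linarith)
              rw [I3_zero t23] at w23 ⊢
              linarith
        · rw [I3_zero t12] at w12 ⊢
          by_cases t13 : 1 ≤ e1 - c2 + e3
          · by_cases t23 : 1 ≤ -c1 + e2 + e3
            · have := r3_E h3 h1 h2 (by linarith) (by linarith)
              linarith
            · have := r3_F h1 h3 (by linarith)
              rw [I3_zero t23] at w23 ⊢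
              linarith
          · rw [I3_zero t13] at w13 ⊢
            by_cases t23 : 1 ≤ -c1 + e2 + e3
            · have := r3_F h2 h3 (by linarith)
              linarith
            · rw [I3_zero t23] at w23 ⊢
              by_cases t : 1 ≤ e1 + e2 + e3
              · have := r3_G h1 h2 h3 t
                linarith
              · rw [I3_zero t]
                norm_num

/-- two-point reduction: mean-zero finite family. -/
lemma two_point {X : Type*} [Fintype X] [Nonempty X] (f : X → ℝ) (hf : ∑ x, f x = 0)
    (h : ℝ → ℝ) : ∃ i j : X, ∃ p : ℝ, 0 ≤ p ∧ p ≤ 1 ∧ f i ≤ 0 ∧ 0 ≤ f j ∧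
      p * f j = (1 - p) * (- f i) ∧
      ∑ x, h (f x) ≤ (Fintype.card X : ℝ) * (p * h (f j) + (1 - p) * h (f i)) := by
  classical
  by_contra hcon
  push Not at hcon
  set n : ℝ := (Fintype.card X : ℝ)
  have hn : 0 < n := by simp only [n]; exact_mod_cast Fintype.card_pos
  set V := (∑ x, h (f x)) / n with hV
  have hVs : ∑ x, h (f x) = n * V := by rw [hV]; field_simp
  -- values at zero points
  have hz : ∀ x, f x = 0 → h (f x) < V := by
    intro x hx
    have := hcon x x 1 zero_le_one le_rfl hx.le hx.ge (by rw [hx]; ring)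
    rw [hVs] at this
    have := lt_of_mul_lt_mul_left this hn.le
    linarith
  have hpair : ∀ i j, f i < 0 → 0 < f j → f j * (h (f i) - V) < f i * (h (f j) - V) := by
    intro i j hi hj
    have hd : 0 < f j - f i := by linarith
    have := hcon i j (- f i / (f j - f i)) (by apply div_nonneg <;> linarith)
      (by rw [div_le_one hd]; linarith) hi.le hj.le (by field_simp; ring)
    rw [hVs] at this
    have := lt_of_mul_lt_mul_left this hn.le
    have e : (-f i / (f j - f i)) * h (f j) + (1 - (-f i / (f j - f i))) * h (f i) =
      (- f i * h (f j) + f j * h (f i)) / (f j - f i) := by field_simp; ring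
    rw [e, div_lt_iff₀ hd] at this
    nlinarith
  -- slope
  have hslope : ∃ m : ℝ, ∀ x, h (f x) ≤ V + m * f x := by
    by_cases hneg : ∃ i, f i < 0
    · obtain ⟨i0, hi0⟩ := hneg
      have hne : (Finset.univ.filter (fun i => f i < 0)).Nonempty := ⟨i0, by simp [hi0]⟩
      obtain ⟨i, hi, hmin⟩ := Finset.exists_min_image _ (fun i => (h (f i) - V) / f i) hne
      simp only [Finset.mem_filter, Finset.mem_univ, true_and] at hi hmin
      refine ⟨(h (f i) - V) / f i, fun x => ?_⟩
      rcases lt_trichotomy (f x) 0 with hx | hx | hx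
      · have := hmin x hx
        rw [le_div_iff_of_neg hx] at this
        linarith
      · have := hz x hx
        rw [hx] at this ⊢; linarith
      · have := hpair i x hi hx
        have h2 : (h (f x) - V) < (h (f i) - V) / f i * f x := by
          rw [div_mul_eq_mul_div, lt_div_iff_of_neg hi]; linarith
        linarith
    · push Not at hneg
      have hall : ∀ x, f x = 0 := by
        intro x
        exact (Finset.sum_eq_zero_iff_of_nonneg (fun i _ => hneg i)).1 hf x (Finset.mem_univ x)
      exact ⟨0, fun x => by have := hz x (hall x); linarith⟩
  obtain ⟨m, hm⟩ := hslope
  -- now contradiction: need strictness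
  have hle : ∀ x ∈ Finset.univ, h (f x) ≤ V + m * f x := fun x _ => hm x
  have hsum : ∑ x, h (f x) = ∑ x, (V + m * f x) := by
    rw [Finset.sum_add_distrib, ← Finset.mul_sum, hf, hVs]; simp [n]
  have heq := (Finset.sum_eq_sum_iff_of_le hle).1 hsum
  by_cases hneg : ∃ i, f i < 0
  · obtain ⟨i, hi⟩ := hneg
    have hpos : ∃ j, 0 < f j := by
      by_contra hno
      push Not at hno
      have : f i = 0 := (Finset.sum_eq_zero_iff_of_nonpos (fun x _ => hno x)).1 hf i (Finset.mem_univ i)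
      linarith
    obtain ⟨j, hj⟩ := hpos
    have := hpair i j hi hj
    rw [heq i (Finset.mem_univ i), heq j (Finset.mem_univ j)] at this
    linarith
  · push Not at hneg
    obtain ⟨x⟩ := ‹Nonempty X›
    have hx0 : f x = 0 := (Finset.sum_eq_zero_iff_of_nonneg (fun i _ => hneg i)).1 hf x (Finset.mem_univ x)
    have := hz x hx0
    have := heq x (Finset.mem_univ x)
    rw [hx0] at *
    linarith

/-- Three variables, scaled: values `f`, mean zero, `-1 ≤ f`. -/
lemma three_var_aux {X : Type*} [Fintype X] [Nonempty X] (f : X → ℝ) (hf : ∑ x, f x = 0)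
    (hf1 : ∀ x, -1 ≤ f x) :
    ∑ x, ∑ y, ∑ z, I3 (f x + f y + f z) ≤ 37/64 * (Fintype.card X : ℝ)^3 := by
  set n : ℝ := (Fintype.card X : ℝ) with hn
  have hn0 : 0 ≤ n := by positivity
  obtain ⟨i1, j1, p1, hp1, hp1', hi1, hj1, he1, hs1⟩ := two_point f hf (fun t => ∑ y, ∑ z, I3 (t + f y + f z))
  obtain ⟨i2, j2, p2, hp2, hp2', hi2, hj2, he2, hs2⟩ := two_point f hf
    (fun t => ∑ z, (p1 * I3 (f j1 + t + f z) + (1 - p1) * I3 (f i1 + t + f z)))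
  obtain ⟨i3, j3, p3, hp3, hp3', hi3, hj3, he3, hs3⟩ := two_point f hf
    (fun t => p2 * (p1 * I3 (f j1 + f j2 + t) + (1 - p1) * I3 (f i1 + f j2 + t)) + (1 - p2) * (p1 * I3 (f j1 + f i2 + t) + (1 - p1) * I3 (f i1 + f i2 + t)))
  have T1 : TP p1 (- f i1) (f j1) := ⟨hp1, hp1', by linarith, by linarith [hf1 i1], hj1, he1⟩
  have T2 : TP p2 (- f i2) (f j2) := ⟨hp2, hp2', by linarith, by linarith [hf1 i2], hj2, he2⟩
  have T3 : TP p3 (- f i3) (f j3) := ⟨hp3, hp3', by linarith, by linarith [hf1 i3], hj3, he3⟩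
  have main := r3_main T1 T2 T3
  simp only [sub_neg_eq_add, neg_neg] at main
  have e2 : (p1 * ∑ y, ∑ z, I3 (f j1 + f y + f z) + (1 - p1) * ∑ y, ∑ z, I3 (f i1 + f y + f z)) =
      ∑ y, ∑ z, (p1 * I3 (f j1 + f y + f z) + (1 - p1) * I3 (f i1 + f y + f z)) := by
    simp only [Finset.sum_add_distrib, Finset.mul_sum]
  have e3 : p2 * ∑ z, (p1 * I3 (f j1 + f j2 + f z) + (1 - p1) * I3 (f i1 + f j2 + f z)) +
      (1 - p2) * ∑ z, (p1 * I3 (f j1 + f i2 + f z) + (1 - p1) * I3 (f i1 + f i2 + f z)) =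
      ∑ z, (p2 * (p1 * I3 (f j1 + f j2 + f z) + (1 - p1) * I3 (f i1 + f j2 + f z)) + (1 - p2) * (p1 * I3 (f j1 + f i2 + f z) + (1 - p1) * I3 (f i1 + f i2 + f z))) := by
    rw [Finset.mul_sum, Finset.mul_sum, ← Finset.sum_add_distrib]
  simp only [← hn] at hs1 hs2 hs3
  rw [e2] at hs1
  rw [e3] at hs2
  have s2 := hs1.trans (mul_le_mul_of_nonneg_left (hs2.trans (mul_le_mul_of_nonneg_left hs3 hn0)) hn0)
  refine s2.trans ?_
  have : ∀ Q : ℝ, Q ≤ 37/64 → n * (n * (n * Q)) ≤ 37/64 * n^3 := by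
    intro Q hQ
    have := mul_le_mul_of_nonneg_left hQ (by positivity : 0 ≤ n^3)
    linarith
  apply this
  linarith

lemma three_var {X : Type*} [Fintype X] [Nonempty X] (f : X → ℝ) (hf0 : ∀ x, 0 ≤ f x)
    (hf : ∑ x, f x ≤ (Fintype.card X : ℝ) / 4) :
    (((Finset.univ : Finset (Fin 3 → X)).filter (fun g => 1 ≤ ∑ i, f (g i))).card : ℝ)
      ≤ 37/64 * (Fintype.card X : ℝ)^3 := by
  classical
  set n : ℝ := (Fintype.card X : ℝ) with hn
  have hnp : 0 < n := by rw [hn]; exact_mod_cast Fintype.card_pos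
  set S := ∑ x, f x
  set F : X → ℝ := fun x => 4 * (f x - S / n) with hF
  have hSn : S / n ≤ 1/4 := by rw [div_le_iff₀ hnp]; linarith
  have h := three_var_aux F (by
      simp only [hF, ← Finset.mul_sum, Finset.sum_sub_distrib]
      simp only [Finset.sum_const, Finset.card_univ, nsmul_eq_mul, ← hn]
      field_simp; simp [S]) (by
      intro x; simp only [hF]; linarith [hf0 x])
  refine le_trans ?_ h
  rw [Finset.card_filter]
  push_cast
  have e : ∑ g : Fin 3 → X, (if 1 ≤ ∑ i, f (g i) then (1:ℝ) else 0) =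
      ∑ x, ∑ y, ∑ z, (if 1 ≤ f x + f y + f z then (1:ℝ) else 0) := by
    rw [← (Fin.consEquiv (fun _ : Fin 3 => X)).sum_comp, Fintype.sum_prod_type]
    refine Finset.sum_congr rfl fun x _ => ?_
    rw [← (Fin.consEquiv (fun _ : Fin 2 => X)).sum_comp, Fintype.sum_prod_type]
    refine Finset.sum_congr rfl fun y _ => ?_
    rw [← (Equiv.funUnique (Fin 1) X).symm.sum_comp]
    refine Finset.sum_congr rfl fun z _ => ?_
    simp [Fin.sum_univ_three, Fin.consEquiv, add_assoc, Fin.sum_univ_succ]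
  rw [e]
  refine Finset.sum_le_sum fun x _ => Finset.sum_le_sum fun y _ => Finset.sum_le_sum fun z _ => ?_
  unfold I3
  split_ifs with a b
  · exact le_rfl
  · exfalso; apply b; simp only [hF]; linarith
  · norm_num
  · norm_num

/-! ### Two-variable bound by half-integral rounding -/

lemma tv_point (v : ℝ) (hv : 0 ≤ v) (Q : ℕ) (hQ : 0 < Q) :
    ((((range Q).filter (fun j : ℕ => ((j:ℝ)+1)/(2*Q) ≤ v)).card : ℝ) +
      (((range Q).filter (fun j : ℕ => 1 - ((j:ℝ)+1)/(2*Q) < v)).card : ℝ)) ≤ 2*Q*v + 1 := by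
  have hQ' : (0:ℝ) < Q := by exact_mod_cast hQ
  have h1 : (((range Q).filter (fun j : ℕ => ((j:ℝ)+1)/(2*Q) ≤ v)).card : ℝ) ≤ 2*Q*v := by
    have : (range Q).filter (fun j : ℕ => ((j:ℝ)+1)/(2*Q) ≤ v) ⊆ range (⌊2*Q*v⌋₊) := by
      intro j hj
      simp only [mem_filter, mem_range] at hj ⊢
      have h := hj.2
      rw [div_le_iff₀ (by positivity)] at h
      apply Nat.lt_of_succ_le
      apply Nat.le_floor
      push_cast
      linarith
    have := card_le_card this
    rw [card_range] at this
    calc (_:ℝ) ≤ (⌊2*Q*v⌋₊ : ℝ) := by exact_mod_cast this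
      _ ≤ _ := Nat.floor_le (by positivity)
  have h1' : (((range Q).filter (fun j : ℕ => ((j:ℝ)+1)/(2*Q) ≤ v)).card : ℝ) ≤ Q := by
    have := card_filter_le (range Q) (fun j : ℕ => ((j:ℝ)+1)/(2*Q) ≤ v)
    rw [card_range] at this
    exact_mod_cast this
  by_cases hv2 : v ≤ 1/2
  · have : (range Q).filter (fun j : ℕ => 1 - ((j:ℝ)+1)/(2*Q) < v) = ∅ := by
      apply filter_eq_empty_iff.2
      intro j hj
      rw [mem_range] at hj
      have hj' : (j:ℝ)+1 ≤ Q := by exact_mod_cast hj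
      have : ((j:ℝ)+1)/(2*Q) ≤ 1/2 := by
        rw [div_le_iff₀ (by positivity)]; linarith
      linarith
    rw [this]
    simp
    linarith
  · push Not at hv2
    have h2 : (((range Q).filter (fun j : ℕ => 1 - ((j:ℝ)+1)/(2*Q) < v)).card : ℝ) ≤ 2*Q*v - Q + 1 := by
      have : ((range Q).filter (fun j : ℕ => 1 - ((j:ℝ)+1)/(2*Q) < v)).card ≤ (range (⌈2*Q*v - Q⌉₊)).card := by
        apply card_le_card_of_injOn (fun j => Q - 1 - j)
        · intro j hj
          simp only [coe_filter, mem_range, Set.mem_ofPred_eq] at hj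
          simp only [coe_range, Set.mem_Iio]
          rw [Nat.lt_ceil]
          have h := hj.2
          have e : ((Q - 1 - j : ℕ) : ℝ) = Q - 1 - j := by
            rw [Nat.cast_sub (by omega), Nat.cast_sub (by omega)]; simp
          rw [e]
          have e2 : ((j:ℝ)+1)/(2*Q) * (2*Q) = j + 1 := by field_simp
          have := mul_lt_mul_of_pos_right h (by positivity : (0:ℝ) < 2*Q)
          linarith
        · intro a ha b hb hab
          simp only [coe_filter, mem_range, Set.mem_ofPred_eq] at ha hb
          simp only at hab
          omega
      rw [card_range] at this
      have hc := Nat.ceil_lt_add_one (a := 2*Q*v - Q) (by nlinarith)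
      have : (((range Q).filter (fun j : ℕ => 1 - ((j:ℝ)+1)/(2*Q) < v)).card : ℝ) ≤ (⌈2*Q*v - Q⌉₊ : ℝ) := by exact_mod_cast this
      linarith
    linarith

lemma two_var {X : Type*} [Fintype X] (φ : X → ℝ) (h0 : ∀ x, 0 ≤ φ x) (μ : ℝ) (Q : ℕ) (hQ : 0 < Q)
    (hs : ∑ x, φ x ≤ μ * Fintype.card X) (c : ℝ)
    (hc1 : 4*(μ+1/(2*Q))^2 ≤ c) (hc2 : 2*(μ+1/(2*Q)) - (μ+1/(2*Q))^2 ≤ c) :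
    ((univ.filter (fun z : X × X => 1 ≤ φ z.1 + φ z.2)).card : ℝ) ≤ c * (Fintype.card X : ℝ)^2 := by
  classical
  have hQ' : (0:ℝ) < Q := by exact_mod_cast hQ
  set m := μ+1/(2*Q) with hm
  set n : ℝ := (Fintype.card X : ℝ) with hn
  have hn0 : 0 ≤ n := by positivity
  obtain ⟨j, hj, hj2⟩ : ∃ j ∈ range Q, ((univ.filter (fun x => ((j:ℝ)+1)/(2*Q) ≤ φ x)).card : ℝ) +
      ((univ.filter (fun x => 1 - ((j:ℝ)+1)/(2*Q) < φ x)).card : ℝ) ≤ 2*m*n := by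
    apply exists_le_of_sum_le (by simpa using hQ.ne')
    rw [sum_const, card_range, nsmul_eq_mul]
    have key : ∑ j ∈ range Q, (((univ.filter (fun x => ((j:ℝ)+1)/(2*Q) ≤ φ x)).card : ℝ) +
      ((univ.filter (fun x => 1 - ((j:ℝ)+1)/(2*Q) < φ x)).card : ℝ)) =
      ∑ x, ((((range Q).filter (fun j : ℕ => ((j:ℝ)+1)/(2*Q) ≤ φ x)).card : ℝ) +
      (((range Q).filter (fun j : ℕ => 1 - ((j:ℝ)+1)/(2*Q) < φ x)).card : ℝ)) := by
      simp only [card_filter, Nat.cast_sum, sum_add_distrib]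
      rw [sum_comm]
      congr 1
      rw [sum_comm]
    rw [key]
    calc _ ≤ ∑ x, (2*Q*φ x + 1) := sum_le_sum (fun x _ => tv_point _ (h0 x) Q hQ)
      _ = 2*Q*(∑ x, φ x) + n := by
        rw [sum_add_distrib, ← mul_sum]; simp [hn]
      _ ≤ 2*Q*(μ*n) + n := by gcongr
      _ = Q * (2*m*n) := by rw [hm]; field_simp
  set θ : ℝ := ((j:ℝ)+1)/(2*Q) with hθ
  have hθ2 : θ ≤ 1/2 := by
    rw [mem_range] at hj
    have hj' : (j:ℝ)+1 ≤ Q := by exact_mod_cast hj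
    rw [hθ, div_le_iff₀ (by positivity)]; linarith
  set A := univ.filter (fun x => 1 - θ < φ x) with hA
  set B := univ.filter (fun x => θ ≤ φ x) with hB
  have hAB : A ⊆ B := by
    intro x hx
    simp only [hA, hB, mem_filter, mem_univ, true_and] at hx ⊢
    linarith
  have hsub : univ.filter (fun z : X × X => 1 ≤ φ z.1 + φ z.2) ⊆
      (univ \ (Aᶜ ×ˢ Aᶜ)) ∪ ((B \ A) ×ˢ (B \ A)) := by
    intro z hz
    simp only [mem_filter, mem_univ, true_and] at hz
    simp only [mem_union, mem_sdiff, mem_univ, true_and, mem_product, mem_compl]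
    by_cases h1 : z.1 ∈ A
    · left; tauto
    by_cases h2 : z.2 ∈ A
    · left; tauto
    right
    simp only [hA, hB, mem_filter, mem_univ, true_and] at h1 h2 ⊢
    push Not at h1 h2
    refine ⟨⟨by linarith, by linarith⟩, ⟨by linarith, by linarith⟩⟩
  have hcard := (card_le_card hsub).trans (card_union_le _ _)
  rw [card_sdiff_of_subset (subset_univ _), card_product, card_product, card_compl, card_sdiff_of_subset hAB] at hcard
  have hAn : A.card ≤ Fintype.card X := card_le_univ A
  have hABc := card_le_card hAB
  have e1 : (Fintype.card X - A.card) * (Fintype.card X - A.card) ≤ (univ : Finset (X × X)).card := by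
    rw [card_univ, Fintype.card_prod]
    exact Nat.mul_le_mul (Nat.sub_le _ _) (Nat.sub_le _ _)
  have hcr : ((univ.filter (fun z : X × X => 1 ≤ φ z.1 + φ z.2)).card : ℝ) ≤
      n*n - (n - A.card)*(n-A.card) + ((B.card:ℝ) - A.card)*((B.card:ℝ) - A.card) := by
    have := (Nat.cast_le (α := ℝ)).2 hcard
    refine this.trans (le_of_eq ?_)
    rw [Nat.cast_add, Nat.cast_sub e1, Nat.cast_mul, Nat.cast_mul, Nat.cast_sub hAn, Nat.cast_sub hABc, card_univ, Fintype.card_prod, Nat.cast_mul]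
  refine hcr.trans ?_
  have hb : (A.card:ℝ) ≤ B.card := by exact_mod_cast hABc
  have ha : (0:ℝ) ≤ A.card := by positivity
  generalize (A.card:ℝ) = a at *
  generalize (B.card:ℝ) = b at *
  have hbm : b + a ≤ 2*m*n := hj2
  have ham : a ≤ m*n := by linarith
  have hsq : (b-a)*(b-a) ≤ (2*m*n-2*a)*(2*m*n-2*a) := by
    apply mul_self_le_mul_self <;> linarith
  have hconv : 2*a*n - a^2 + (2*m*n-2*a)^2 ≤ c * n^2 := by
    by_cases hmn : m*n = 0
    · have : a = 0 := by linarith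
      subst this
      have : 2*m*n = 0 := by linarith
      rw [this]
      have : 0 ≤ c := le_trans (by positivity) hc1
      nlinarith [mul_nonneg this (sq_nonneg n)]
    · have hmn' : 0 < m*n := lt_of_le_of_ne (by linarith) (Ne.symm hmn)
      have t1 : 4*(m*n)^2 ≤ c*n^2 := by nlinarith [sq_nonneg n]
      have t2 : 2*(m*n)*n - (m*n)^2 ≤ c*n^2 := by nlinarith [sq_nonneg n]
      have : (m*n) * (2*a*n - a^2 + (2*m*n-2*a)^2) ≤ (m*n) * (c * n^2) := by
        have u1 := mul_le_mul_of_nonneg_left t1 (by linarith : 0 ≤ m*n - a)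
        have u2 := mul_le_mul_of_nonneg_left t2 ha
        have u3 : 0 ≤ m*n*(a*(m*n-a)) := mul_nonneg hmn'.le (mul_nonneg ha (by linarith))
        nlinarith
      exact le_of_mul_le_mul_left this hmn'
  nlinarith

/-- fractional bound -/
def Frac (r : ℕ) (c : ℝ) : Prop := ∀ (X : Type) [Fintype X] [Nonempty X] (φ : X → ℝ), (∀ x, 0 ≤ φ x) →
  (∑ x, φ x ≤ (Fintype.card X : ℝ) / (r+1)) →
  ((univ.filter (fun g : Fin r → X => 1 ≤ ∑ i, φ (g i))).card : ℝ) ≤ c * (Fintype.card X : ℝ)^r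

lemma frac2 : Frac 2 (0.558) := by
  intro X _ _ φ h0 hs
  have h := two_var φ h0 (1/3) 1000 (by norm_num) (by push_cast at hs; linarith) 0.558 (by norm_num) (by norm_num)
  have e : (univ.filter (fun g : Fin 2 → X => 1 ≤ ∑ i, φ (g i))).card = (univ.filter (fun z : X × X => 1 ≤ φ z.1 + φ z.2)).card := by
    apply card_equiv (finTwoArrowEquiv X)
    intro g
    simp [Fin.sum_univ_two]
  rw [e]; exact h

lemma frac3 : Frac 3 (37/64) := by
  intro X _ _ φ h0 hs
  exact three_var φ h0 (by push_cast at hs; linarith)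

lemma frac4 : Frac 4 (0.645) := by
  intro X _ _ φ h0 hs
  have hs' : ∑ z : X × X, (φ z.1 + φ z.2) ≤ 2/5 * Fintype.card (X × X) := by
    rw [Fintype.sum_prod_type]
    simp only [sum_add_distrib, sum_const, card_univ, nsmul_eq_mul, ← mul_sum, Fintype.card_prod]
    push_cast at hs ⊢
    have : (0:ℝ) ≤ Fintype.card X := by positivity
    nlinarith
  have h := two_var (fun z : X × X => φ z.1 + φ z.2) (fun z => add_nonneg (h0 _) (h0 _)) (2/5) 1000 (by norm_num) hs' 0.645 (by norm_num) (by norm_num)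
  have e : (univ.filter (fun g : Fin 4 → X => 1 ≤ ∑ i, φ (g i))).card = (univ.filter (fun z : (X × X) × (X × X) => 1 ≤ (φ z.1.1 + φ z.1.2) + (φ z.2.1 + φ z.2.2))).card := by
    apply card_bij' (fun g _ => ((g 0, g 1), (g 2, g 3))) (fun z _ => ![z.1.1, z.1.2, z.2.1, z.2.2])
    · intro g hg
      simp [Fin.sum_univ_four] at hg ⊢; linarith
    · intro g hg
      simp [Fin.sum_univ_four] at hg ⊢; linarith
    · intro g hg
      ext i; fin_cases i <;> rfl
    · intro g hg
      rfl
  rw [e]; refine h.trans (le_of_eq ?_)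
  rw [Fintype.card_prod]; push_cast; ring

/-! ### Fractional duality -/

lemma fiber_color {S X : Type*} [Fintype S] [DecidableEq X] (F : S → X) (D : ℕ)
    (h : ∀ x, (univ.filter (fun s => F s = x)).card ≤ D) :
    ∃ c : S → Fin D, Function.Injective (fun s => (F s, c s)) := by
  classical
  have : ∀ x, ∃ e : {s // F s = x} → Fin D, Function.Injective e := by
    intro x
    have hc : Fintype.card {s // F s = x} ≤ Fintype.card (Fin D) := by
      rw [Fintype.card_subtype, Fintype.card_fin]; exact h x
    obtain ⟨e⟩ := Function.Embedding.nonempty_of_card_le hc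
    exact ⟨e, e.injective⟩
  choose e he using this
  refine ⟨fun s => e (F s) ⟨s, rfl⟩, ?_⟩
  intro s t hst
  simp only [Prod.mk.injEq] at hst
  obtain ⟨h1, h2⟩ := hst
  have key : ∀ (x : X) (hx : F s = x) , e (F s) ⟨s, rfl⟩ = e x ⟨s, hx⟩ := by
    intro x hx; subst hx; rfl
  rw [key (F t) h1] at h2
  have := he _ h2
  simpa using this

lemma duality_frac {X : Type*} [Fintype X] [DecidableEq X] (r T : ℕ) (hT : 0 < T)
    (L : Finset (Fin r → X))
    (hL : ¬ ∃ φ : X → ℝ, (∀ x, 0 ≤ φ x) ∧ (∑ x, φ x ≤ T) ∧ ∀ g ∈ L, 1 ≤ ∑ i, φ (g i)) :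
    ∃ w : (Fin r → X) → ℝ, (∀ g ∈ L, 0 ≤ w g) ∧ ∑ g ∈ L, w g = 1 ∧
      ∀ x, ∑ g ∈ L, w g * ((univ.filter (fun i => g i = x)).card : ℝ) < 1 / T := by
  classical
  have hT' : (0:ℝ) < T := by exact_mod_cast hT
  set y : (Fin r → X) → (X → ℝ) := fun g x => ((univ.filter (fun i => g i = x)).card : ℝ) with hy
  have hy' : ∀ g, y g = ∑ i, Pi.single (g i) (1:ℝ) := by
    intro g; ext x
    simp only [hy, card_filter, Finset.sum_apply, Pi.single_apply, Nat.cast_sum]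
    apply sum_congr rfl
    intro i _
    by_cases h : g i = x
    · simp [h]
    · simp [h, Ne.symm h]
  set C := convexHull ℝ (y '' (L : Set (Fin r → X))) with hC
  set O : Set (X → ℝ) := {v | ∀ x, v x < 1/T} with hO
  have hOo : IsOpen O := by
    have : O = Set.pi Set.univ (fun _ => Set.Iio (1/(T:ℝ))) := by
      ext v; simp [hO]
    rw [this]
    exact isOpen_set_pi Set.finite_univ (fun _ _ => isOpen_Iio)
  have hOc : Convex ℝ O := by
    have : O = Set.pi Set.univ (fun _ => Set.Iio (1/(T:ℝ))) := by
      ext v; simp [hO]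
    rw [this]
    exact convex_pi (fun _ _ => convex_Iio _)
  by_cases hdis : Disjoint O C
  · exfalso
    obtain ⟨f, u, hfO, hfC⟩ := geometric_hahn_banach_open hOc hOo (convex_convexHull ℝ _) hdis
    have hu : 0 < u := by
      have := hfO 0 (by simp only [hO, Set.mem_ofPred_eq, Pi.zero_apply]; intro _; positivity)
      simpa using this
    have hfx : ∀ x, 0 ≤ f (Pi.single x 1) := by
      intro x
      by_contra hneg
      push Not at hneg
      have hmem : (-( (u+1) / (- f (Pi.single x 1)))) • (Pi.single x (1:ℝ) : X → ℝ) ∈ O := by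
        intro z
        have h1 : 0 < (u+1) / (- f (Pi.single x 1)) := div_pos (by linarith) (by linarith)
        have h2 : (0:ℝ) < 1/T := by positivity
        by_cases hz : z = x
        · subst hz; simp only [Pi.smul_apply, Pi.single_eq_same, smul_eq_mul, mul_one]; linarith
        · simp only [Pi.smul_apply, Pi.single_eq_of_ne hz, smul_eq_mul, mul_zero]; exact h2
      have := hfO _ hmem
      rw [map_smul, smul_eq_mul] at this
      have e : -((u + 1) / -f (Pi.single x 1)) * f (Pi.single x 1) = u+1 := by
        have : f (Pi.single x 1) ≠ 0 := hneg.ne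
        field_simp
      linarith
    apply hL
    refine ⟨fun x => f (Pi.single x 1) / u, fun x => div_nonneg (hfx x) hu.le, ?_, ?_⟩
    · rw [← sum_div, div_le_iff₀ hu, ← map_sum]
      by_contra hneg
      push Not at hneg
      set s := f (∑ x, Pi.single x (1:ℝ)) with hs
      have hs0 : 0 < s := lt_trans (by positivity) hneg
      have hmem : (u / s) • (∑ x, Pi.single x (1:ℝ) : X → ℝ) ∈ O := by
        intro z
        have : (∑ x, Pi.single x (1:ℝ) : X → ℝ) z = 1 := by
          simp [Finset.sum_apply, Pi.single_apply]
        rw [Pi.smul_apply, this, smul_eq_mul, mul_one, div_lt_div_iff₀ hs0 hT']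
        linarith
      have := hfO _ hmem
      rw [map_smul, smul_eq_mul, ← hs, div_mul_cancel₀ _ hs0.ne'] at this
      exact lt_irrefl _ this
    · intro g hg
      have := hfC (y g) (subset_convexHull ℝ _ ⟨g, hg, rfl⟩)
      rw [hy', map_sum] at this
      rw [← sum_div, le_div_iff₀ hu]
      linarith
  · rw [Set.not_disjoint_iff] at hdis
    obtain ⟨p, hpO, hpC⟩ := hdis
    have : y '' (L : Set (Fin r → X)) = ((L.image y : Finset (X → ℝ)) : Set (X → ℝ)) := by simp
    rw [hC, Set.image_eq_range] at hpC
    rw [mem_convexHull_iff_exists_fintype] at hpC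
    obtain ⟨ι, _, w, z, hw0, hw1, hz, hp⟩ := hpC
    have hz' : ∀ i, ∃ g ∈ L, y g = z i := by
      intro i
      obtain ⟨⟨g, hg⟩, h⟩ := hz i
      exact ⟨g, hg, h⟩
    choose G hGL hG using hz'
    refine ⟨fun g => ∑ i with G i = g, w i, fun g _ => sum_nonneg (fun i _ => hw0 i), ?_, ?_⟩
    · rw [sum_fiberwise_of_maps_to (fun i _ => hGL i)]
      exact hw1
    · intro x
      have := hpO x
      refine lt_of_eq_of_lt ?_ this
      rw [← hp, Finset.sum_apply]
      have e : ∀ g, (∑ i with G i = g, w i) * ((univ.filter (fun i => g i = x)).card : ℝ) = ∑ i with G i = g, w i * z i x := by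
        intro g
        rw [sum_mul]
        apply sum_congr rfl
        intro i hi
        rw [← hG i, (mem_filter.1 hi).2]
      simp only [e]
      rw [sum_fiberwise_of_maps_to (fun i _ => hGL i)]
      simp

lemma duality {X : Type*} [Fintype X] [DecidableEq X] [Nonempty X] (r T : ℕ) (hT : 0 < T)
    (L : Finset (Fin r → X))
    (hL : ¬ ∃ φ : X → ℝ, (∀ x, 0 ≤ φ x) ∧ (∑ x, φ x ≤ T) ∧ ∀ g ∈ L, 1 ≤ ∑ i, φ (g i)) :
    ∃ D : ℕ, ∃ G : Fin (T*D+1) → Fin r → X × Fin D,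
      Function.Injective (fun p : Fin (T*D+1) × Fin r => G p.1 p.2) ∧
      ∀ z, (fun i => (G z i).1) ∈ L := by
  classical
  obtain ⟨w, hw0, hw1, hwx⟩ := duality_frac r T hT L hL
  have hT' : (0:ℝ) < T := by exact_mod_cast hT
  obtain ⟨x0, hx0⟩ := Finite.exists_max (fun x => ∑ g ∈ L, w g * ((univ.filter (fun i => g i = x)).card : ℝ))
  set η := ∑ g ∈ L, w g * ((univ.filter (fun i => g i = x0)).card : ℝ) with hη
  have hη1 : η < 1/T := hwx x0
  have hη0 : 0 ≤ η := sum_nonneg (fun g hg => mul_nonneg (hw0 g hg) (by positivity))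
  have hTη : 0 < 1 - T*η := by
    rw [lt_div_iff₀ hT'] at hη1; linarith
  obtain ⟨N, hN⟩ := exists_nat_ge ((T + 1 + L.card) / (1 - T*η))
  rw [div_le_iff₀ hTη] at hN
  set v : (Fin r → X) → ℕ := fun g => ⌊N * w g⌋₊ with hv
  set D := ⌈N * η⌉₊ with hD
  have hDle : (D:ℝ) ≤ N*η + 1 := (Nat.ceil_lt_add_one (by positivity)).le
  have hvx : ∀ x, ∑ g ∈ L, v g * (univ.filter (fun i => g i = x)).card ≤ D := by
    intro x
    have : ((∑ g ∈ L, v g * (univ.filter (fun i => g i = x)).card : ℕ) : ℝ) ≤ (D:ℝ) := by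
      push_cast
      refine le_trans ?_ (Nat.le_ceil _)
      calc _ ≤ ∑ g ∈ L, (N * w g) * ((univ.filter (fun i => g i = x)).card : ℝ) := by
            apply sum_le_sum
            intro g hg
            gcongr
            exact Nat.floor_le (mul_nonneg (by positivity) (hw0 g hg))
        _ = N * ∑ g ∈ L, w g * ((univ.filter (fun i => g i = x)).card : ℝ) := by
            rw [mul_sum]; apply sum_congr rfl; intros; ring
        _ ≤ N * η := by gcongr; exact hx0 x
    exact_mod_cast this
  have hvs : T*D+1 ≤ ∑ g ∈ L, v g := by
    have h1 : (N:ℝ) - L.card ≤ ∑ g ∈ L, (v g : ℝ) := by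
      calc (N:ℝ) - L.card = ∑ g ∈ L, (N * w g - 1) := by
            rw [sum_sub_distrib, ← mul_sum, hw1]; simp
        _ ≤ _ := by
            apply sum_le_sum
            intro g hg
            have := Nat.lt_floor_add_one ((N:ℝ) * w g)
            simp only [hv]; linarith
    have : ((T*D+1 : ℕ) : ℝ) ≤ ((∑ g ∈ L, v g : ℕ) : ℝ) := by
      push_cast
      have := mul_le_mul_of_nonneg_left hDle hT'.le
      nlinarith
    exact_mod_cast this
  let S := Σ g : L, Fin (v g)
  have hcS : Fintype.card S = ∑ g ∈ L, v g := by
    simp only [S, Fintype.card_sigma, Fintype.card_fin]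
    exact sum_coe_sort L v
  obtain ⟨c, hc⟩ := fiber_color (S := S × Fin r) (fun s => s.1.1.1 s.2) D (by
    intro x
    refine le_trans (le_of_eq ?_) (hvx x)
    rw [card_filter, Fintype.sum_prod_type]
    simp only [← card_filter]
    rw [Fintype.sum_sigma]
    simp only [sum_const, card_univ, Fintype.card_fin, smul_eq_mul]
    exact sum_coe_sort L (fun g => v g * (univ.filter (fun i => g i = x)).card))
  obtain ⟨e⟩ := Function.Embedding.nonempty_of_card_le (α := Fin (T*D+1)) (β := S) (by
    rw [hcS, Fintype.card_fin]; exact hvs)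
  refine ⟨D, fun z i => ((e z).1.1 i, c (e z, i)), ?_, ?_⟩
  · rintro ⟨z, i⟩ ⟨z', i'⟩ h
    have := @hc (e z, i) (e z', i') h
    simp only [Prod.mk.injEq] at this ⊢
    exact ⟨e.injective this.1, this.2⟩
  · intro z
    exact (e z).1.2

/-! ### Blow-up lemma -/

lemma jensen_pow {S : Type*} [Fintype S] (f : S → ℝ) (hf : ∀ s, 0 ≤ f s) (ε : ℝ) (hε : 0 ≤ ε)
    (h : ε * Fintype.card S ≤ ∑ s, f s) (D : ℕ) : ε ^ D * Fintype.card S ≤ ∑ s, f s ^ D := by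
  cases D with
  | zero => simp
  | succ n =>
    by_cases hS : Fintype.card S = 0
    · rw [hS]; simp; exact sum_nonneg (fun s _ => pow_nonneg (hf s) _)
    have hS' : (0:ℝ) < Fintype.card S := by positivity
    refine le_trans ?_ (pow_sum_div_card_le_sum_pow (fun s _ => hf s) n)
    rw [card_univ, le_div_iff₀ (by positivity)]
    calc ε ^ (n+1) * Fintype.card S * (Fintype.card S:ℝ)^n = (ε * Fintype.card S)^(n+1) := by ring
      _ ≤ _ := by gcongr

lemma hom_count {A : Type*} [Fintype A] [DecidableEq A] (D : ℕ) (T : ℕ) : ∀ (P : Finset (Fin T → A)) (ε : ℝ), 0 ≤ ε →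
    ε * (Fintype.card A : ℝ)^T ≤ P.card →
    ε ^ (D^T) * (Fintype.card A : ℝ)^(T*D) ≤
      ((univ.filter (fun J : Fin T → Fin D → A => ∀ s : Fin T → Fin D, (fun j => J j (s j)) ∈ P)).card : ℝ) := by
  induction T with
  | zero =>
    intro P ε hε h
    simp only [pow_zero, mul_one, zero_mul, pow_one] at h ⊢
    refine h.trans ?_
    have hle : P.card ≤ 1 := by
      have := card_le_univ P
      simpa using this
    rcases Nat.lt_or_ge 0 P.card with hp | hp
    · obtain ⟨b, hb⟩ := card_pos.1 hp
      have : 1 ≤ (univ.filter (fun J : Fin 0 → Fin D → A => ∀ s : Fin 0 → Fin D, (fun j => J j (s j)) ∈ P)).card := by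
        apply card_pos.2
        refine ⟨fun j => j.elim0, ?_⟩
        simp only [mem_filter, mem_univ, true_and]
        intro s
        convert hb
      exact_mod_cast hle.trans this
    · have : P.card = 0 := by omega
      rw [this]; simp
  | succ T ih =>
    intro P ε hε h
    set n : ℝ := (Fintype.card A : ℝ) with hn
    have hn0 : 0 ≤ n := by positivity
    set PJ : (Fin D → A) → Finset (Fin T → A) := fun J0 => univ.filter (fun b => ∀ d, (Fin.cons (J0 d) b : Fin (T+1) → A) ∈ P) with hPJ
    by_cases hn1 : n = 0
    · by_cases hD : D = 0
      · subst hD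
        have hA : Fintype.card A = 0 := by rw [hn] at hn1; exact_mod_cast hn1
        simp only [hn1, mul_zero, pow_zero, mul_one]
        rw [zero_pow (by omega), pow_zero]
        have : 1 ≤ (univ.filter (fun J : Fin (T+1) → Fin 0 → A => ∀ s : Fin (T+1) → Fin 0, (fun j => J j (s j)) ∈ P)).card := by
          apply card_pos.2
          refine ⟨fun _ d => d.elim0, ?_⟩
          simp only [mem_filter, mem_univ, true_and]
          intro s
          exact (s 0).elim0
        exact_mod_cast this
      · rw [hn1, zero_pow (by positivity), mul_zero]
        positivity
    have hnpos : 0 < n := lt_of_le_of_ne hn0 (Ne.symm hn1)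
    have hP : (P.card : ℝ) = ∑ b : Fin T → A, ((univ.filter (fun a => (Fin.cons a b : Fin (T+1) → A) ∈ P)).card : ℝ) := by
      have : P.card = ∑ b : Fin T → A, (univ.filter (fun a => (Fin.cons a b : Fin (T+1) → A) ∈ P)).card := by
        have e1 : P.card = (univ.filter (fun z : A × (Fin T → A) => (Fin.cons z.1 z.2 : Fin (T+1) → A) ∈ P)).card := by
          symm
          apply card_bij' (fun (z : A × (Fin T → A)) _ => (Fin.cons z.1 z.2 : Fin (T+1) → A)) (fun f _ => (f 0, Fin.tail f))
          · intro z hz; simpa using hz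
          · intro f hf; simpa using hf
          · intro z hz; simp
          · intro f hf; simp
        rw [e1, card_filter, Fintype.sum_prod_type, sum_comm]
        simp only [← card_filter]
      exact_mod_cast this
    have hsum : ∑ J0, ((PJ J0).card : ℝ) = ∑ b : Fin T → A, ((univ.filter (fun a => (Fin.cons a b : Fin (T+1) → A) ∈ P)).card : ℝ)^D := by
      have : ∑ J0, (PJ J0).card = ∑ b : Fin T → A, ((univ.filter (fun a => (Fin.cons a b : Fin (T+1) → A) ∈ P)).card)^D := by
        simp only [hPJ, card_filter _ (univ : Finset (Fin T → A))]
        rw [sum_comm]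
        apply sum_congr rfl
        intro b _
        rw [← card_filter]
        have : (univ.filter (fun J0 : Fin D → A => ∀ d, (Fin.cons (J0 d) b : Fin (T+1) → A) ∈ P)) =
          Fintype.piFinset (fun _ : Fin D => univ.filter (fun a => (Fin.cons a b : Fin (T+1) → A) ∈ P)) := by
          ext J0; simp [Fintype.mem_piFinset]
        rw [this, Fintype.card_piFinset]
        simp
      exact_mod_cast this
    have hcb : ((Fintype.card (Fin T → A) : ℕ) : ℝ) = n^T := by simp [hn]
    have hcD : ((Fintype.card (Fin D → A) : ℕ) : ℝ) = n^D := by simp [hn]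
    have j1 := jensen_pow (fun b : Fin T → A => ((univ.filter (fun a => (Fin.cons a b : Fin (T+1) → A) ∈ P)).card : ℝ)) (fun _ => by positivity)
      (ε * n) (by positivity) (by rw [← hP, hcb]; refine le_trans (le_of_eq ?_) h; ring) D
    rw [← hsum, hcb] at j1
    have j2 := jensen_pow (fun J0 : Fin D → A => ((PJ J0).card : ℝ) / n^T) (fun _ => by positivity)
      (ε^D) (by positivity) (by
        rw [← sum_div, le_div_iff₀ (by positivity), hcD]
        refine le_trans (le_of_eq ?_) j1; ring) (D^T)
    rw [hcD] at j2
    have hcount : ((univ.filter (fun J : Fin (T+1) → Fin D → A => ∀ s : Fin (T+1) → Fin D, (fun j => J j (s j)) ∈ P)).card : ℝ) =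
        ∑ J0 : Fin D → A, ((univ.filter (fun J : Fin T → Fin D → A => ∀ s : Fin T → Fin D, (fun j => J j (s j)) ∈ PJ J0)).card : ℝ) := by
      have : (univ.filter (fun J : Fin (T+1) → Fin D → A => ∀ s : Fin (T+1) → Fin D, (fun j => J j (s j)) ∈ P)).card =
        ∑ J0 : Fin D → A, (univ.filter (fun J : Fin T → Fin D → A => ∀ s : Fin T → Fin D, (fun j => J j (s j)) ∈ PJ J0)).card := by
        have e1 : (univ.filter (fun J : Fin (T+1) → Fin D → A => ∀ s : Fin (T+1) → Fin D, (fun j => J j (s j)) ∈ P)).card =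
          (univ.filter (fun z : (Fin D → A) × (Fin T → Fin D → A) => ∀ s : Fin T → Fin D, (fun j => z.2 j (s j)) ∈ PJ z.1)).card := by
          have hiff : ∀ f : Fin (T+1) → Fin D → A, (∀ s : Fin (T+1) → Fin D, (fun j => f j (s j)) ∈ P) ↔
              ∀ s : Fin T → Fin D, (fun j => Fin.tail f j (s j)) ∈ PJ (f 0) := by
            intro f
            simp only [hPJ, mem_filter, mem_univ, true_and]
            have hc : ∀ (d : Fin D) (s : Fin T → Fin D), (fun j => f j ((Fin.cons d s : Fin (T+1) → Fin D) j)) =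
                (Fin.cons (f 0 d) (fun j => Fin.tail f j (s j)) : Fin (T+1) → A) := by
              intro d s
              ext j
              refine Fin.cases ?_ (fun j => ?_) j
              · simp
              · simp [Fin.tail]
            constructor
            · intro hs s d
              rw [← hc]; exact hs _
            · intro hs s
              have := hs (Fin.tail s) (s 0)
              rw [← hc] at this
              simpa using this
          symm
          apply card_bij' (fun z _ => (Fin.cons z.1 z.2 : Fin (T+1) → Fin D → A)) (fun f _ => (f 0, Fin.tail f))
          · intro z hz
            simp only [mem_filter, mem_univ, true_and] at hz ⊢
            rw [hiff]; simpa using hz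
          · intro f hf
            simp only [mem_filter, mem_univ, true_and] at hf ⊢
            exact (hiff f).1 hf
          · intro z hz; simp
          · intro f hf; simp
        rw [e1, card_filter, Fintype.sum_prod_type]
        simp only [← card_filter]
      exact_mod_cast this
    rw [hcount]
    calc ε ^ D ^ (T + 1) * n ^ ((T + 1) * D) = ((ε^D)^(D^T) * n^D) * n^(T*D) := by
          rw [← pow_mul, pow_succ, Nat.mul_comm (D^T) D]; ring
      _ ≤ (∑ J0, (((PJ J0).card : ℝ) / n^T)^(D^T)) * n^(T*D) := by gcongr
      _ = ∑ J0, (((PJ J0).card : ℝ) / n^T)^(D^T) * n^(T*D) := by rw [sum_mul]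
      _ ≤ _ := by
        apply sum_le_sum
        intro J0 _
        apply ih (PJ J0) _ (by positivity)
        rw [div_mul_cancel₀]; positivity

lemma noninj_count {I A : Type*} [Fintype I] [DecidableEq I] [Fintype A] [DecidableEq A] :
    (univ.filter (fun f : I → A => ¬ Function.Injective f)).card * Fintype.card A ≤
      (Fintype.card I)^2 * (Fintype.card A)^(Fintype.card I) := by
  classical
  have hone : ∀ i j : I, i ≠ j → (univ.filter (fun f : I → A => f i = f j)).card * Fintype.card A ≤ (Fintype.card A)^(Fintype.card I) := by
    intro i j hij
    rw [← Fintype.card_fun, ← card_univ (α := A), ← card_product, ← card_univ]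
    apply card_le_card_of_injOn (fun z => Function.update z.1 i z.2)
    · intro z _; simp
    · rintro ⟨f, a⟩ hf ⟨f', a'⟩ hf' heq
      simp only [coe_product, coe_filter, mem_univ, true_and, Set.mem_prod, Set.mem_ofPred_eq, coe_univ, Set.mem_univ, and_true] at hf hf' heq
      have ha : a = a' := by simpa using congrFun heq i
      have hff : ∀ x, x ≠ i → f x = f' x := by
        intro x hx
        have := congrFun heq x
        simpa [hx] using this
      have : f = f' := by
        ext x
        by_cases hx : x = i
        · subst hx; rw [hf, hf', hff j (Ne.symm hij)]
        · exact hff x hx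
      rw [ha, this]
  have hsub : univ.filter (fun f : I → A => ¬ Function.Injective f) ⊆
      ((univ : Finset (I × I)).filter (fun p => p.1 ≠ p.2)).biUnion (fun p => univ.filter (fun f : I → A => f p.1 = f p.2)) := by
    intro f hf
    replace hf := (mem_filter.1 hf).2
    unfold Function.Injective at hf
    push Not at hf
    obtain ⟨i, j, h1, h2⟩ := hf
    simp only [mem_biUnion, mem_filter, mem_univ, true_and]
    exact ⟨(i, j), h2, h1⟩
  calc _ ≤ (∑ p ∈ (univ : Finset (I × I)).filter (fun p => p.1 ≠ p.2), (univ.filter (fun f : I → A => f p.1 = f p.2)).card) * Fintype.card A := by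
        gcongr
        exact (card_le_card hsub).trans card_biUnion_le
    _ = ∑ p ∈ (univ : Finset (I × I)).filter (fun p => p.1 ≠ p.2), (univ.filter (fun f : I → A => f p.1 = f p.2)).card * Fintype.card A := by rw [sum_mul]
    _ ≤ ∑ p ∈ (univ : Finset (I × I)).filter (fun p => p.1 ≠ p.2), (Fintype.card A)^(Fintype.card I) := by
        apply sum_le_sum
        intro p hp
        exact hone _ _ (mem_filter.1 hp).2
    _ ≤ _ := by
        rw [sum_const, smul_eq_mul]
        gcongr
        refine (card_filter_le _ _).trans ?_
        rw [card_univ, Fintype.card_prod, sq]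

lemma blowup (T D : ℕ) (ε : ℝ) (hε : 0 < ε) : ∃ N0 : ℕ, ∀ (A : Type) [Fintype A] [DecidableEq A], N0 ≤ Fintype.card A →
    ∀ P : Finset (Fin T → A), ε * (Fintype.card A : ℝ)^T ≤ P.card →
    ∃ J : Fin T → Fin D → A, Function.Injective (fun p : Fin T × Fin D => J p.1 p.2) ∧
      ∀ s : Fin T → Fin D, (fun j => J j (s j)) ∈ P := by
  obtain ⟨N0, hN0⟩ := exists_nat_gt (((T*D : ℕ) : ℝ)^2 / ε^(D^T))
  refine ⟨N0+1, ?_⟩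
  intro A _ _ hA P hP
  have hhom := hom_count D T P ε hε.le hP
  set n : ℝ := (Fintype.card A : ℝ) with hn
  have hnpos : 0 < n := by rw [hn]; exact_mod_cast (by omega : 0 < Fintype.card A)
  have hnN : ((T*D : ℕ) : ℝ)^2 / ε^(D^T) < n := hN0.trans (by rw [hn]; exact_mod_cast (by omega : N0 < Fintype.card A))
  rw [div_lt_iff₀ (by positivity)] at hnN
  have hni := noninj_count (I := Fin T × Fin D) (A := A)
  have hni' : ((univ.filter (fun f : Fin T × Fin D → A => ¬ Function.Injective f)).card : ℝ) * n ≤ ((T*D:ℕ):ℝ)^2 * n^(T*D) := by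
    have h := (Nat.cast_le (α := ℝ)).2 hni
    simp only [Fintype.card_prod, Fintype.card_fin] at h
    push_cast at h ⊢
    exact h
  by_contra hcon
  push Not at hcon
  have hle : (univ.filter (fun J : Fin T → Fin D → A => ∀ s : Fin T → Fin D, (fun j => J j (s j)) ∈ P)).card ≤
      (univ.filter (fun f : Fin T × Fin D → A => ¬ Function.Injective f)).card := by
    apply card_le_card_of_injOn (fun J p => J p.1 p.2)
    · intro J hJ
      simp only [coe_filter, mem_univ, true_and, Set.mem_ofPred_eq] at hJ ⊢
      intro hinj
      obtain ⟨s, hs⟩ := hcon J hinj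
      exact hs (hJ s)
    · intro J _ J' _ h
      ext i j
      exact congrFun h (i, j)
  have hle' := (Nat.cast_le (α := ℝ)).2 hle
  have h1 : ε ^ (D^T) * n^(T*D) * n ≤ ((T*D:ℕ):ℝ)^2 * n^(T*D) :=
    le_trans (by gcongr; exact hhom.trans hle') hni'
  have h2 : 0 < n^(T*D) := by positivity
  nlinarith

/-! ### Almost covering -/

/-- matching -/
def IsMat {V : Type*} [DecidableEq V] (H M : Finset (Finset V)) : Prop :=
  M ⊆ H ∧ ∀ e ∈ M, ∀ f ∈ M, e ≠ f → Disjoint e f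

/-- ordered degree -/
def tdeg {V : Type*} [Fintype V] [DecidableEq V] (r : ℕ) (H : Finset (Finset V)) (u : V) : ℕ :=
  (univ.filter (fun f : Fin r → V => insert u (univ.image f) ∈ H)).card

lemma blocks {V : Type} [Fintype V] [DecidableEq V] (k : ℕ) (hk : 0 < k) (hkV : k ∣ Fintype.card V)
    (M : Finset (Finset V)) (hMk : ∀ e ∈ M, e.card = k)
    (hM : ∀ e ∈ M, ∀ f ∈ M, e ≠ f → Disjoint e f) :
    ∃ (A : Type) (_ : Fintype A) (_ : DecidableEq A) (ψ : A × Fin k ≃ V),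
      Fintype.card A * k = Fintype.card V ∧ ∀ e ∈ M, ∃ a, e = univ.image (fun i => ψ (a, i)) := by
  classical
  set C := M.biUnion id with hC
  have hCc : C.card = M.card * k := by
    rw [hC, card_biUnion (t := id) (fun e he f hf hef => hM e he f hf hef)]
    rw [sum_congr rfl (fun e he => by simpa using hMk e he), sum_const, smul_eq_mul]
  have hCle : C.card ≤ Fintype.card V := card_le_univ C
  obtain ⟨q0, hq0⟩ := hkV
  have hMq : M.card ≤ q0 := by
    rw [hCc, hq0, mul_comm] at hCle
    exact Nat.le_of_mul_le_mul_left hCle hk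
  set q := q0 - M.card with hq
  have hrest : Fintype.card {v // v ∉ C} = Fintype.card (Fin q × Fin k) := by
    rw [Fintype.card_subtype_compl, Fintype.card_coe, Fintype.card_prod, Fintype.card_fin, Fintype.card_fin, hCc, hq0, hq, Nat.sub_mul, mul_comm]
  let g := Fintype.equivOfCardEq hrest
  let en : ∀ e : M, Fin k ≃ e.1 := fun e => (finCongr (hMk e.1 e.2).symm).trans e.1.equivFin.symm
  let f : (M ⊕ Fin q) × Fin k → V := fun p => Sum.elim (fun e => ((en e p.2 : e.1) : V)) (fun j => ((g.symm (j, p.2)) : V)) p.1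
  have hf1 : ∀ e i, f (Sum.inl e, i) = ((en e i : e.1) : V) := fun _ _ => rfl
  have hf2 : ∀ j i, f (Sum.inr j, i) = ((g.symm (j, i)) : V) := fun _ _ => rfl
  have hfC : ∀ e i, f (Sum.inl e, i) ∈ C := by
    intro e i
    rw [hf1, hC, mem_biUnion]
    exact ⟨e.1, e.2, (en e i).2⟩
  have hfC2 : ∀ j i, f (Sum.inr j, i) ∉ C := by
    intro j i
    rw [hf2]
    exact (g.symm (j, i)).2
  have hinj : Function.Injective f := by
    rintro ⟨a, i⟩ ⟨b, j⟩ h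
    rcases a with e | a <;> rcases b with e' | b
    · rw [hf1, hf1] at h
      have hee : e = e' := by
        by_contra hne
        have := hM e.1 e.2 e'.1 e'.2 (fun h => hne (Subtype.ext h))
        exact (disjoint_left.1 this) (en e i).2 (by rw [h]; exact (en e' j).2)
      subst hee
      have := (en e).injective (Subtype.ext h)
      rw [this]
    · exact absurd (h ▸ hfC e i) (hfC2 b j)
    · exact absurd (h.symm ▸ hfC e' j) (hfC2 a i)
    · rw [hf2, hf2] at h
      have := g.symm.injective (Subtype.ext h)
      simp only [Prod.mk.injEq] at this
      rw [this.1, this.2]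
  have hcard : Fintype.card (M ⊕ Fin q) * k = Fintype.card V := by
    rw [Fintype.card_sum, Fintype.card_coe, Fintype.card_fin, hq, hq0, Nat.add_sub_cancel' hMq, mul_comm]
  have hbij : Function.Bijective f := by
    rw [Fintype.bijective_iff_injective_and_card]
    refine ⟨hinj, ?_⟩
    rw [Fintype.card_prod, Fintype.card_fin (n := k), hcard]
  refine ⟨M ⊕ Fin q, inferInstance, Classical.decEq _, Equiv.ofBijective f hbij, by convert hcard, ?_⟩
  intro e he
  refine ⟨Sum.inl ⟨e, he⟩, ?_⟩
  ext v
  simp only [mem_image, mem_univ, true_and, Equiv.ofBijective_apply]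
  constructor
  · intro hv
    refine ⟨(en ⟨e, he⟩).symm ⟨v, hv⟩, ?_⟩
    rw [hf1]; simp
  · rintro ⟨i, rfl⟩
    rw [hf1]
    exact (en ⟨e, he⟩ i).2

lemma augment {V A : Type} [DecidableEq V] [DecidableEq A] (k : ℕ)
    (ψ : A × Fin k ≃ V) (H M : Finset (Finset V)) (hM : IsMat H M)
    (hMψ : ∀ e ∈ M, ∃ a, e = univ.image (fun i => ψ (a, i)))
    (B : Finset A) (m : ℕ) (hB : B.card ≤ m) (E : Fin (m+1) → Finset V)
    (hEH : ∀ z, E z ∈ H) (hEne : ∀ z, (E z).Nonempty) (hEd : ∀ z z', z ≠ z' → Disjoint (E z) (E z'))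
    (hEs : ∀ z, ∀ v ∈ E z, (∀ e ∈ M, v ∉ e) ∨ (ψ.symm v).1 ∈ B) :
    ∃ M', IsMat H M' ∧ M.card < M'.card := by
  classical
  set blk : A → Finset V := fun a => univ.image (fun i => ψ (a, i)) with hblk
  set M1 := M \ (B.image blk) with hM1
  have hM1c : M.card ≤ M1.card + m := by
    have h1 := le_card_sdiff (B.image blk) M
    rw [← hM1] at h1
    have h2 : (B.image blk).card ≤ B.card := card_image_le
    omega
  have hEinj : Function.Injective E := by
    intro z z' h
    by_contra hne
    have := hEd z z' hne
    rw [← h, disjoint_self] at this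
    have h2 := hEne z
    rw [this] at h2
    simp at h2
  have hM1E : ∀ e ∈ M1, ∀ z, Disjoint e (E z) := by
    intro e he z
    rw [hM1, mem_sdiff] at he
    obtain ⟨a, ha⟩ := hMψ e he.1
    rw [disjoint_right]
    intro v hv hve
    rcases hEs z v hv with h | h
    · exact h e he.1 hve
    · apply he.2
      rw [mem_image]
      refine ⟨_, h, ?_⟩
      rw [ha] at hve ⊢
      obtain ⟨i, _, hi⟩ := mem_image.1 hve
      rw [← hi]
      simp [hblk]
  refine ⟨M1 ∪ univ.image E, ⟨?_, ?_⟩, ?_⟩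
  · apply union_subset
    · exact sdiff_subset.trans hM.1
    · intro e he
      obtain ⟨z, _, rfl⟩ := mem_image.1 he
      exact hEH z
  · intro e he f hf hef
    rw [mem_union] at he hf
    rcases he with he | he <;> rcases hf with hf | hf
    · exact hM.2 e (mem_sdiff.1 he).1 f (mem_sdiff.1 hf).1 hef
    · obtain ⟨z, _, rfl⟩ := mem_image.1 hf
      exact hM1E e he z
    · obtain ⟨z, _, rfl⟩ := mem_image.1 he
      exact (hM1E f hf z).symm
    · obtain ⟨z, _, rfl⟩ := mem_image.1 he
      obtain ⟨z', _, rfl⟩ := mem_image.1 hf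
      exact hEd z z' (fun h => hef (by rw [h]))
  · rw [card_union_of_disjoint, card_image_of_injective _ hEinj, card_univ, Fintype.card_fin]
    · omega
    · rw [disjoint_left]
      intro e he he'
      obtain ⟨z, _, rfl⟩ := mem_image.1 he'
      have := hM1E _ he z
      rw [disjoint_self] at this
      have h2 := hEne z
      rw [this] at h2
      simp at h2

lemma comp_count {I J A : Type*} [Fintype I] [Fintype J] [Fintype A] [DecidableEq I] [DecidableEq J]
    (τ : I → J) (hτ : Function.Injective τ) (Q : (I → A) → Prop) [DecidablePred Q] :
    (univ.filter (fun b : J → A => Q (b ∘ τ))).card * (Fintype.card A)^(Fintype.card I) =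
      (Fintype.card A)^(Fintype.card J) * (univ.filter (fun a : I → A => Q a)).card := by
  classical
  rw [← Fintype.card_fun, ← Fintype.card_fun, ← card_univ, ← card_univ, ← card_product, ← card_product]
  have hext : ∀ (b : J → A) (a : I → A), Function.extend τ (b ∘ τ) (Function.extend τ a b) = b := by
    intro b a
    ext j
    by_cases hj : ∃ i, τ i = j
    · obtain ⟨i, rfl⟩ := hj
      rw [hτ.extend_apply]; rfl
    · rw [Function.extend_apply' _ _ _ hj, Function.extend_apply' _ _ _ hj]
  refine card_bij' (fun z _ => (Function.extend τ z.2 z.1, z.1 ∘ τ)) (fun z _ => (Function.extend τ z.2 z.1, z.1 ∘ τ)) ?_ ?_ ?_ ?_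
  · intro z hz
    simpa using hz
  · intro z hz
    simp only [mem_product, mem_univ, mem_filter, true_and, and_true] at hz ⊢
    have : Function.extend τ z.2 z.1 ∘ τ = z.2 := by
      ext i; exact hτ.extend_apply _ _ i
    rw [this]; exact hz
  · rintro ⟨b, a⟩ hz
    simp only [Prod.mk.injEq]
    exact ⟨hext b a, by ext i; exact hτ.extend_apply _ _ i⟩
  · rintro ⟨b, a⟩ hz
    simp only [Prod.mk.injEq]
    exact ⟨hext b a, by ext i; exact hτ.extend_apply _ _ i⟩

/-- link system -/
def Lk {V A : Type} [DecidableEq V] (r T : ℕ) (ψ : A × Fin (r+1) → V) (H : Finset (Finset V)) (u : V) (b : Fin T → A) :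
    Finset (Fin r → Fin T × Fin (r+1)) := by
  classical
  exact univ.filter (fun g => Function.Injective (fun i => (g i).1) ∧ insert u (univ.image (fun i => ψ (b (g i).1, (g i).2))) ∈ H)

lemma sum_Lk {V A : Type} [Fintype V] [DecidableEq V] [Fintype A] [DecidableEq A] (r T : ℕ) (ψ : A × Fin (r+1) ≃ V)
    (H : Finset (Finset V)) (u : V) :
    (∑ b : Fin T → A, (Lk r T ψ H u b).card) * (Fintype.card A)^r =
      (univ.filter (fun τ : Fin r → Fin T => Function.Injective τ)).card * (Fintype.card A)^T * tdeg r H u := by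
  classical
  have h1 : ∀ b : Fin T → A, (Lk r T ψ H u b).card =
      ∑ τ ∈ univ.filter (fun τ : Fin r → Fin T => Function.Injective τ), ∑ ι : Fin r → Fin (r+1),
        if insert u (univ.image (fun i => ψ (b (τ i), ι i))) ∈ H then 1 else 0 := by
    intro b
    rw [sum_filter]
    have : (Lk r T ψ H u b).card = (univ.filter (fun z : (Fin r → Fin T) × (Fin r → Fin (r+1)) =>
        Function.Injective z.1 ∧ insert u (univ.image (fun i => ψ (b (z.1 i), z.2 i))) ∈ H)).card := by
      unfold Lk
      refine card_bij' (fun g _ => ((fun i => (g i).1), (fun i => (g i).2))) (fun z _ => fun i => (z.1 i, z.2 i)) ?_ ?_ ?_ ?_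
      · intro g hg; simpa using hg
      · intro g hg; simpa using hg
      · intro g hg; rfl
      · intro g hg; rfl
    rw [this, card_filter, Fintype.sum_prod_type]
    apply sum_congr rfl
    intro τ _
    by_cases hτ : Function.Injective τ
    · simp [hτ]
    · simp [hτ]
  simp only [h1]
  rw [sum_comm, sum_mul]
  have h2 : ∀ τ ∈ univ.filter (fun τ : Fin r → Fin T => Function.Injective τ),
      (∑ b : Fin T → A, ∑ ι : Fin r → Fin (r+1), if insert u (univ.image (fun i => ψ (b (τ i), ι i))) ∈ H then 1 else 0) * (Fintype.card A)^r
        = (Fintype.card A)^T * tdeg r H u := by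
    intro τ hτ
    have hτ' := (mem_filter.1 hτ).2
    rw [sum_comm, sum_mul]
    have h3 : ∀ ι : Fin r → Fin (r+1), (∑ b : Fin T → A, if insert u (univ.image (fun i => ψ (b (τ i), ι i))) ∈ H then 1 else 0) * (Fintype.card A)^r =
        (Fintype.card A)^T * (univ.filter (fun a : Fin r → A => insert u (univ.image (fun i => ψ (a i, ι i))) ∈ H)).card := by
      intro ι
      have := comp_count (A := A) τ hτ' (fun a => insert u (univ.image (fun i => ψ (a i, ι i))) ∈ H)
      simp only [Fintype.card_fin] at this
      rw [← this, card_filter]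
      rfl
    simp only [h3]
    rw [← mul_sum]
    congr 1
    have : tdeg r H u = (univ.filter (fun z : (Fin r → Fin (r+1)) × (Fin r → A) => insert u (univ.image (fun i => ψ (z.2 i, z.1 i))) ∈ H)).card := by
      unfold tdeg
      refine card_bij' (fun f _ => ((fun i => (ψ.symm (f i)).2), (fun i => (ψ.symm (f i)).1))) (fun z _ => fun i => ψ (z.2 i, z.1 i)) ?_ ?_ ?_ ?_
      · intro f hf
        simp only [mem_filter, mem_univ, true_and, Prod.mk.eta, Equiv.apply_symm_apply] at hf ⊢
        exact hf
      · intro f hf; simpa using hf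
      · intro f hf; simp
      · intro f hf; simp
    rw [this, card_filter, Fintype.sum_prod_type]
    simp only [← card_filter]
  rw [sum_congr rfl h2, sum_const, smul_eq_mul, mul_assoc]

lemma switch {V A : Type} [DecidableEq V] [DecidableEq A] (r T D : ℕ) (hT : 0 < T)
    (ψ : A × Fin (r+1) ≃ V) (H M : Finset (Finset V)) (hM : IsMat H M)
    (hMψ : ∀ e ∈ M, ∃ a, e = univ.image (fun i => ψ (a, i)))
    (i0 : Fin (r+1)) (L0 : Finset (Fin r → Fin T × Fin (r+1)))
    (G : Fin (T*D+1) → Fin r → (Fin T × Fin (r+1)) × Fin D)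
    (hG : Function.Injective (fun p : Fin (T*D+1) × Fin r => G p.1 p.2))
    (hGL : ∀ z, (fun i => (G z i).1) ∈ L0)
    (J : Fin (T+1) → Fin (T*D+1) → A)
    (hJ : Function.Injective (fun p : Fin (T+1) × Fin (T*D+1) => J p.1 p.2))
    (hJP : ∀ s : Fin (T+1) → Fin (T*D+1), (∀ e ∈ M, ψ (J 0 (s 0), i0) ∉ e) ∧
      Lk r T ψ H (ψ (J 0 (s 0), i0)) (fun j => J j.succ (s j.succ)) = L0) :
    ∃ M', IsMat H M' ∧ M.card < M'.card := by
  classical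
  have hDle : D ≤ T*D+1 := by nlinarith
  let em : Fin D → Fin (T*D+1) := Fin.castLE hDle
  have hem : Function.Injective em := Fin.castLE_injective hDle
  have hJ' : ∀ a b a' b', J a b = J a' b' → a = a' ∧ b = b' := by
    intro a b a' b' h
    have := @hJ (a, b) (a', b') h
    simpa using this
  let E : Fin (T*D+1) → Finset V := fun z => insert (ψ (J 0 z, i0))
    (univ.image (fun i => ψ (J (G z i).1.1.succ (em (G z i).2), (G z i).1.2)))
  let B : Finset A := univ.image (fun p : Fin T × Fin D => J p.1.succ (em p.2))
  have hBc : B.card ≤ T*D := by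
    refine card_image_le.trans ?_
    simp
  refine augment (r+1) ψ H M hM hMψ B (T*D) hBc E ?_ ?_ ?_ ?_
  · intro z
    have hg := hGL z
    have hτ : Function.Injective (fun i => (G z i).1.1) := by
      rw [← (hJP (fun _ => z)).2] at hg
      exact (mem_filter.1 hg).2.1
    let s : Fin (T+1) → Fin (T*D+1) := Fin.cons z (Function.extend (fun i => (G z i).1.1) (fun i => em (G z i).2) (fun _ => z))
    have hs := (hJP s).2
    rw [← hs] at hg
    have h2 := (mem_filter.1 hg).2.2
    have e0 : s 0 = z := rfl
    have e1 : ∀ i, s (G z i).1.1.succ = em (G z i).2 := by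
      intro i
      simp only [s, Fin.cons_succ]
      exact hτ.extend_apply _ _ i
    simp only [e0, e1] at h2
    exact h2
  · intro z
    exact ⟨_, mem_insert_self _ _⟩
  · intro z z' hzz
    rw [disjoint_left]
    intro v hv hv'
    simp only [E, mem_insert, mem_image, mem_univ, true_and] at hv hv'
    rcases hv with hv | ⟨i, hv⟩ <;> rcases hv' with hv' | ⟨i', hv'⟩
    · have := ψ.injective (hv.symm.trans hv')
      simp only [Prod.mk.injEq] at this
      exact hzz (hJ' _ _ _ _ this.1).2
    · have := ψ.injective (hv.symm.trans hv'.symm)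
      simp only [Prod.mk.injEq] at this
      exact absurd (hJ' _ _ _ _ this.1).1 (Fin.succ_ne_zero _).symm
    · have := ψ.injective (hv.trans hv')
      simp only [Prod.mk.injEq] at this
      exact absurd (hJ' _ _ _ _ this.1).1 (Fin.succ_ne_zero _)
    · have := ψ.injective (hv.trans hv'.symm)
      simp only [Prod.mk.injEq] at this
      have h1 := hJ' _ _ _ _ this.1
      have h2 : (G z i).1.1 = (G z' i').1.1 := Fin.succ_injective _ h1.1
      have h3 : (G z i).2 = (G z' i').2 := hem h1.2
      have : G z i = G z' i' := Prod.ext (Prod.ext h2 this.2) h3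
      have := @hG (z, i) (z', i') this
      simp only [Prod.mk.injEq] at this
      exact hzz this.1
  · intro z v hv
    simp only [E, mem_insert, mem_image, mem_univ, true_and] at hv
    rcases hv with hv | ⟨i, hv⟩
    · left
      rw [hv]
      exact (hJP (fun _ => z)).1
    · right
      rw [← hv]
      simp only [Equiv.symm_apply_apply, B, mem_image, mem_univ, true_and]
      exact ⟨((G z i).1.1, (G z i).2), rfl⟩

lemma thr (r T : ℕ) (hT : 0 < T) (c0 : ℝ) (hF : Frac r c0) (ε : ℝ) (hε : 0 < ε) :
    ∃ N0 : ℕ, ∀ (A : Type) [Fintype A] [DecidableEq A], N0 ≤ Fintype.card A →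
    ∀ P : Finset (Fin (T+1) → A), ε * (Fintype.card A : ℝ)^(T+1) ≤ P.card →
    ∀ L0 : Finset (Fin r → Fin T × Fin (r+1)), c0 * ((T:ℝ)*(r+1))^r < L0.card →
    ∃ (D : ℕ) (G : Fin (T*D+1) → Fin r → (Fin T × Fin (r+1)) × Fin D) (J : Fin (T+1) → Fin (T*D+1) → A),
      Function.Injective (fun p : Fin (T*D+1) × Fin r => G p.1 p.2) ∧ (∀ z, (fun i => (G z i).1) ∈ L0) ∧
      Function.Injective (fun p : Fin (T+1) × Fin (T*D+1) => J p.1 p.2) ∧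
      ∀ s : Fin (T+1) → Fin (T*D+1), (fun j => J j (s j)) ∈ P := by
  classical
  have : ∀ L0 : Finset (Fin r → Fin T × Fin (r+1)), ∃ N0 : ℕ, ∀ (A : Type) [Fintype A] [DecidableEq A], N0 ≤ Fintype.card A →
    ∀ P : Finset (Fin (T+1) → A), ε * (Fintype.card A : ℝ)^(T+1) ≤ P.card →
    c0 * ((T:ℝ)*(r+1))^r < L0.card →
    ∃ (D : ℕ) (G : Fin (T*D+1) → Fin r → (Fin T × Fin (r+1)) × Fin D) (J : Fin (T+1) → Fin (T*D+1) → A),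
      Function.Injective (fun p : Fin (T*D+1) × Fin r => G p.1 p.2) ∧ (∀ z, (fun i => (G z i).1) ∈ L0) ∧
      Function.Injective (fun p : Fin (T+1) × Fin (T*D+1) => J p.1 p.2) ∧
      ∀ s : Fin (T+1) → Fin (T*D+1), (fun j => J j (s j)) ∈ P := by
    intro L0
    by_cases hL0 : c0 * ((T:ℝ)*(r+1))^r < L0.card
    swap
    · exact ⟨0, fun A _ _ _ P _ h => absurd h hL0⟩
    have : Nonempty (Fin T × Fin (r+1)) := ⟨(⟨0, hT⟩, 0)⟩
    have hX : (Fintype.card (Fin T × Fin (r+1)) : ℝ) = T * (r+1) := by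
      rw [Fintype.card_prod, Fintype.card_fin, Fintype.card_fin]; push_cast; ring
    obtain ⟨D, G, hG, hGL⟩ := duality r T hT L0 (by
      rintro ⟨φ, h0, hs, hL⟩
      have h := hF (Fin T × Fin (r+1)) φ h0 (by
        rw [hX]
        have : (T:ℝ) * (r+1) / (r+1) = T := by field_simp
        rw [this]; exact hs)
      rw [hX] at h
      have hle : L0.card ≤ (univ.filter (fun g : Fin r → Fin T × Fin (r+1) => 1 ≤ ∑ i, φ (g i))).card := by
        apply card_le_card
        intro g hg
        rw [mem_filter]
        exact ⟨mem_univ _, hL g hg⟩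
      have hle' := (Nat.cast_le (α := ℝ)).2 hle
      linarith)
    obtain ⟨N0, hN0⟩ := blowup (T+1) (T*D+1) ε hε
    refine ⟨N0, fun A _ _ hA P hP _ => ?_⟩
    obtain ⟨J, hJ, hJP⟩ := hN0 A hA P hP
    exact ⟨D, G, J, hG, hGL, hJ, hJP⟩
  choose N0 hN0 using this
  refine ⟨univ.sup N0, fun A _ _ hA P hP L0 hL0 => ?_⟩
  exact hN0 L0 A ((le_sup (mem_univ L0)).trans hA) P hP hL0

set_option maxHeartbeats 1000000 in
lemma almost_cover (r : ℕ) (c0 c γ : ℝ) (hF : Frac r c0) (hc0 : 0 ≤ c0) (hc : c0 < c) (hγ : 0 < γ) :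
    ∃ n0 : ℕ, ∀ (V : Type) [Fintype V] [DecidableEq V], n0 ≤ Fintype.card V → (r+1) ∣ Fintype.card V →
    ∀ H : Finset (Finset V), HyperUniform (r+1) H → ∀ M, IsMat H M → (∀ M', IsMat H M' → M'.card ≤ M.card) →
    ((univ.filter (fun u : V => (∀ e ∈ M, u ∉ e) ∧ c * (Fintype.card V : ℝ)^r ≤ tdeg r H u)).card : ℝ) < γ * Fintype.card V := by
  classical
  have hcpos : 0 < c := lt_of_le_of_lt hc0 hc
  set δ := (c - c0)/2 with hδ
  have hδ0 : 0 < δ := by rw [hδ]; linarith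
  obtain ⟨T, hT⟩ := exists_nat_gt (max (c * (r:ℝ)^2 / δ) 1)
  have hT1 : (1:ℝ) < T := lt_of_le_of_lt (le_max_right _ _) hT
  have hT2 : c * (r:ℝ)^2 / δ < T := lt_of_le_of_lt (le_max_left _ _) hT
  have hTpos : 0 < T := by
    have : (0:ℝ) < T := by linarith
    exact_mod_cast this
  have hTr : (0:ℝ) < T := by linarith
  rw [div_lt_iff₀ hδ0] at hT2
  have hcT : c0 + δ ≤ c * (1 - (r:ℝ)^2/T) := by
    have : c * ((r:ℝ)^2/T) ≤ δ := by
      rw [← mul_div_assoc, div_le_iff₀ hTr]; linarith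
    have h2 : c0 + 2*δ = c := by rw [hδ]; ring
    linarith
  have hfac : 0 < 1 - (r:ℝ)^2/T := by
    by_contra h
    push Not at h
    have := mul_nonneg hcpos.le (sub_nonneg.2 h)
    nlinarith
  have hinj : (T:ℝ)^r * (1 - (r:ℝ)^2/T) ≤ ((univ.filter (fun τ : Fin r → Fin T => Function.Injective τ)).card : ℝ) := by
    have h1 := noninj_count (I := Fin r) (A := Fin T)
    have h1' := (Nat.cast_le (α := ℝ)).2 h1
    have h2 := card_filter_add_card_filter_not (s := (univ : Finset (Fin r → Fin T))) (fun τ => Function.Injective τ)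
    have h2' := congrArg (Nat.cast : ℕ → ℝ) h2
    simp only [Fintype.card_fin, card_univ, Fintype.card_fun] at h1' h2'
    push_cast at h1' h2'
    rw [← le_div_iff₀ hTr] at h1'
    have e : (T:ℝ)^r * (1 - (r:ℝ)^2/T) = T^r - (r:ℝ)^2 * T^r / T := by ring
    rw [e]; linarith
  let Cl := Fin (r+1) × Finset (Fin r → Fin T × Fin (r+1))
  have hClpos : (0:ℝ) < Fintype.card Cl := by
    have : 0 < Fintype.card Cl := Fintype.card_pos
    exact_mod_cast this
  set ε := γ * δ / Fintype.card Cl with hε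
  have hε0 : 0 < ε := by positivity
  obtain ⟨N0, hN0⟩ := thr r T hTpos c0 hF ε hε0
  refine ⟨(N0+1)*(r+1), ?_⟩
  intro V _ _ hV hdvd H hH M hM hmax
  by_contra hcon
  push Not at hcon
  obtain ⟨A, _, _, ψ, hAV, hMψ⟩ := blocks (r+1) (by omega) hdvd M (fun e he => hH e (hM.1 he)) hM.2
  have hAN : N0 + 1 ≤ Fintype.card A := by
    rw [← hAV] at hV
    exact Nat.le_of_mul_le_mul_right hV (by omega)
  set a : ℝ := (Fintype.card A : ℝ) with ha
  have hapos : 0 < a := by rw [ha]; exact_mod_cast (by omega : 0 < Fintype.card A)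
  have hn : (Fintype.card V : ℝ) = a * (r+1) := by rw [← hAV]; push_cast; rfl
  set K : ℝ := ((T:ℝ)*(r+1))^r with hK
  have hKpos : 0 < K := by positivity
  set U := univ.filter (fun u : V => (∀ e ∈ M, u ∉ e) ∧ c * (Fintype.card V : ℝ)^r ≤ tdeg r H u) with hU
  have hLK : ∀ u (b : Fin T → A), ((Lk r T ψ H u b).card : ℝ) ≤ K := by
    intro u b
    have := card_le_univ (Lk r T ψ H u b)
    have := (Nat.cast_le (α := ℝ)).2 this
    simp only [Fintype.card_fun, Fintype.card_prod, Fintype.card_fin] at this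
    push_cast at this
    exact this
  have hgood : ∀ u ∈ U, δ * a^T ≤ ((univ.filter (fun b : Fin T → A => c0 * K < ((Lk r T ψ H u b).card : ℝ))).card : ℝ) := by
    intro u hu
    have hdeg : c * (a * (r+1))^r ≤ tdeg r H u := by
      have := (mem_filter.1 hu).2.2
      rwa [hn] at this
    have hs := congrArg (Nat.cast : ℕ → ℝ) (sum_Lk r T ψ H u)
    push_cast at hs
    rw [← ha] at hs
    have hS : (c0 + δ) * K * a^T ≤ ∑ b : Fin T → A, ((Lk r T ψ H u b).card : ℝ) := by
      have har : 0 < a^r := by positivity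
      refine le_of_mul_le_mul_right ?_ har
      rw [hs]
      calc (c0 + δ) * K * a^T * a^r ≤ (c * (1 - (r:ℝ)^2/T)) * K * a^T * a^r := by gcongr
        _ = ((T:ℝ)^r * (1 - (r:ℝ)^2/T)) * a^T * (c * (a * (r+1))^r) := by
          rw [hK, mul_pow, mul_pow]; ring
        _ ≤ _ := by gcongr
    have hS2 : ∑ b : Fin T → A, ((Lk r T ψ H u b).card : ℝ) ≤ ∑ b : Fin T → A, (c0 * K + (if c0 * K < ((Lk r T ψ H u b).card : ℝ) then 1 else 0) * K) := by
      apply sum_le_sum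
      intro b _
      split_ifs with h
      · have := hLK u b
        have : 0 ≤ c0 * K := by positivity
        linarith
      · push Not at h; linarith
    rw [sum_add_distrib, sum_const, ← sum_mul, card_univ, Fintype.card_fun, Fintype.card_fin, nsmul_eq_mul] at hS2
    have e1 : (∑ b : Fin T → A, if c0 * K < ((Lk r T ψ H u b).card : ℝ) then (1:ℝ) else 0) =
        ((univ.filter (fun b : Fin T → A => c0 * K < ((Lk r T ψ H u b).card : ℝ))).card : ℝ) := by
      rw [card_filter]; push_cast; rfl
    rw [e1] at hS2
    push_cast at hS2
    rw [← ha] at hS2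
    have := hS.trans hS2
    have h3 : (δ * a^T) * K ≤ ((univ.filter (fun b : Fin T → A => c0 * K < ((Lk r T ψ H u b).card : ℝ))).card : ℝ) * K := by linarith
    exact le_of_mul_le_mul_right h3 hKpos
  set Ω := (univ : Finset (V × (Fin T → A))).filter (fun z => z.1 ∈ U ∧ c0 * K < ((Lk r T ψ H z.1 z.2).card : ℝ)) with hΩ
  have hΩc : γ * δ * a^(T+1) ≤ (Ω.card : ℝ) := by
    have e : (Ω.card : ℝ) = ∑ u ∈ U, ((univ.filter (fun b : Fin T → A => c0 * K < ((Lk r T ψ H u b).card : ℝ))).card : ℝ) := by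
      have : Ω.card = ∑ u ∈ U, (univ.filter (fun b : Fin T → A => c0 * K < ((Lk r T ψ H u b).card : ℝ))).card := by
        rw [hΩ, card_filter, Fintype.sum_prod_type]
        rw [← sum_filter_add_sum_filter_not univ (fun u => u ∈ U)]
        have z1 : ∑ u ∈ univ.filter (fun u => ¬ u ∈ U), ∑ b : Fin T → A, (if u ∈ U ∧ c0 * K < ((Lk r T ψ H u b).card : ℝ) then 1 else 0) = 0 := by
          apply sum_eq_zero
          intro u hu
          apply sum_eq_zero
          intro b _
          rw [if_neg]
          intro h
          exact (mem_filter.1 hu).2 h.1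
        simp only at z1 ⊢
        rw [z1, add_zero, filter_mem_eq_inter, univ_inter]
        apply sum_congr rfl
        intro u hu
        simp only [hu, true_and, ← card_filter]
      exact_mod_cast this
    rw [e]
    calc γ * δ * a^(T+1) = (γ * a) * (δ * a^T) := by ring
      _ ≤ (γ * Fintype.card V) * (δ * a^T) := by
        gcongr
        rw [hn]
        have : (0:ℝ) ≤ r := by positivity
        nlinarith
      _ ≤ U.card * (δ * a^T) := by gcongr
      _ = ∑ u ∈ U, δ * a^T := by rw [sum_const, nsmul_eq_mul]
      _ ≤ _ := sum_le_sum hgood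
  let cl : V × (Fin T → A) → Cl := fun z => ((ψ.symm z.1).2, Lk r T ψ H z.1 z.2)
  obtain ⟨⟨i0, L0⟩, _, hcl⟩ := exists_le_card_fiber_of_nsmul_le_card_of_maps_to (s := Ω) (t := (univ : Finset Cl)) (f := cl) (b := ε * a^(T+1))
    (fun _ _ => mem_univ _) ⟨(0, ∅), mem_univ _⟩ (by
      rw [card_univ, nsmul_eq_mul]
      refine le_trans (le_of_eq ?_) hΩc
      rw [hε]; field_simp)
  have hne : (Ω.filter (fun z => cl z = (i0, L0))).Nonempty := by
    rw [← card_pos]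
    have : (0:ℝ) < (Ω.filter (fun z => cl z = (i0, L0))).card := lt_of_lt_of_le (by positivity) hcl
    exact_mod_cast this
  obtain ⟨z0, hz0⟩ := hne
  have hL0 : c0 * K < (L0.card : ℝ) := by
    rw [mem_filter, hΩ, mem_filter] at hz0
    have h1 := hz0.1.2.2
    have h2 : Lk r T ψ H z0.1 z0.2 = L0 := congrArg Prod.snd hz0.2
    rwa [h2] at h1
  set P : Finset (Fin (T+1) → A) := univ.filter (fun β => (∀ e ∈ M, ψ (β 0, i0) ∉ e) ∧
      Lk r T ψ H (ψ (β 0, i0)) (fun j => β j.succ) = L0) with hP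
  have hPc : (Ω.filter (fun z => cl z = (i0, L0))).card ≤ P.card := by
    apply card_le_card_of_injOn (fun z => (Fin.cons (ψ.symm z.1).1 z.2 : Fin (T+1) → A))
    · rintro ⟨u, b⟩ hz
      rw [mem_coe, mem_filter, hΩ, mem_filter] at hz
      have h1 : (ψ.symm u).2 = i0 := congrArg Prod.fst hz.2
      have h2 : Lk r T ψ H u b = L0 := congrArg Prod.snd hz.2
      have h3 : ψ ((ψ.symm u).1, i0) = u := by rw [← h1]; simp
      have h4 := (mem_filter.1 hz.1.2.1).2.1
      rw [mem_coe, hP, mem_filter]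
      simp only [mem_univ, Fin.cons_zero, Fin.cons_succ, true_and, h3]
      exact ⟨h4, h2⟩
    · rintro ⟨u, b⟩ hz ⟨u', b'⟩ hz' heq
      rw [mem_coe, mem_filter] at hz hz'
      have h1 : (ψ.symm u).2 = i0 := congrArg Prod.fst hz.2
      have h1' : (ψ.symm u').2 = i0 := congrArg Prod.fst hz'.2
      have hc := Fin.cons_injective2 heq
      have hu : ψ.symm u = ψ.symm u' := Prod.ext hc.1 (h1.trans h1'.symm)
      exact Prod.ext (ψ.symm.injective hu) hc.2
  have hPc' : ε * a^(T+1) ≤ P.card := hcl.trans (by exact_mod_cast hPc)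
  obtain ⟨D, G, J, hG, hGL, hJ, hJP⟩ := hN0 A (by omega) P hPc' L0 hL0
  obtain ⟨M', hM', hlt⟩ := switch r T D hTpos ψ H M hM hMψ i0 L0 G hG hGL J hJ (by
    intro s
    exact (mem_filter.1 (hJP s)).2)
  exact absurd (hmax M' hM') (by omega)

/-! ### Absorption -/

/-- the set `S` is perfectly matched by edges of `H` -/
def PMset {V : Type*} [DecidableEq V] (H : Finset (Finset V)) (S : Finset V) : Prop :=
  ∃ M, IsMat H M ∧ M.biUnion id = S

lemma PMset_edge {V : Type*} [DecidableEq V] {H : Finset (Finset V)} {e : Finset V} (he : e ∈ H) : PMset H e := by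
  refine ⟨{e}, ⟨by simpa using he, ?_⟩, by simp⟩
  intro a ha b hb hab
  rw [mem_singleton] at ha hb
  exact absurd (ha.trans hb.symm) hab

lemma PMset_biUnion {V ι : Type*} [DecidableEq V] [DecidableEq ι] {H : Finset (Finset V)} (s : Finset ι) (f : ι → Finset V)
    (hd : ∀ i ∈ s, ∀ j ∈ s, i ≠ j → Disjoint (f i) (f j)) (hf : ∀ i ∈ s, PMset H (f i)) : PMset H (s.biUnion f) := by
  classical
  have : ∀ i : ι, ∃ M, i ∈ s → IsMat H M ∧ M.biUnion id = f i := by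
    intro i
    by_cases hi : i ∈ s
    · obtain ⟨M, hM⟩ := hf i hi
      exact ⟨M, fun _ => hM⟩
    · exact ⟨∅, fun h => absurd h hi⟩
  choose M hM using this
  have hsub : ∀ i ∈ s, ∀ e ∈ M i, e ⊆ f i := by
    intro i hi e he
    rw [← (hM i hi).2]
    exact subset_biUnion_of_mem id he
  refine ⟨s.biUnion M, ⟨?_, ?_⟩, ?_⟩
  · intro e he
    obtain ⟨i, hi, he⟩ := mem_biUnion.1 he
    exact (hM i hi).1.1 he
  · intro e he g hg heg
    obtain ⟨i, hi, he⟩ := mem_biUnion.1 he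
    obtain ⟨j, hj, hg⟩ := mem_biUnion.1 hg
    by_cases hij : i = j
    · subst hij
      exact (hM i hi).1.2 e he g hg heg
    · exact disjoint_of_subset_left (hsub i hi e he) (disjoint_of_subset_right (hsub j hj g hg) (hd i hi j hj hij))
  · ext v
    simp only [mem_biUnion, id]
    constructor
    · rintro ⟨e, ⟨i, hi, he⟩, hv⟩
      exact ⟨i, hi, hsub i hi e he hv⟩
    · rintro ⟨i, hi, hv⟩
      rw [← (hM i hi).2, mem_biUnion] at hv
      obtain ⟨e, he, hv⟩ := hv
      exact ⟨e, ⟨i, hi, he⟩, hv⟩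

lemma PMset_union {V : Type*} [DecidableEq V] {H : Finset (Finset V)} {A B : Finset V} (hd : Disjoint A B)
    (hA : PMset H A) (hB : PMset H B) : PMset H (A ∪ B) := by
  have := PMset_biUnion (H := H) (univ : Finset Bool) (fun b => if b then A else B) (by
    intro i _ j _ hij
    cases i <;> cases j <;> simp_all [disjoint_comm]) (by
    intro i _
    cases i <;> simp_all)
  have e : (univ : Finset Bool).biUnion (fun b => if b then A else B) = A ∪ B := by
    ext v; simp [or_comm]
  rwa [e] at this

/-- raw absorbing conditions -/
def AbsRaw {V : Type*} [DecidableEq V] (r : ℕ) (H : Finset (Finset V)) (t : Fin (r+1) → V) (o : Fin r × Fin (r+1) → V) : Prop :=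
  insert (t 0) (univ.image (fun i => o (i, 0))) ∈ H ∧
  ∀ i : Fin r, insert (t i.succ) (univ.image (fun j : Fin r => o (i, j.succ))) ∈ H ∧
    insert (o (i, 0)) (univ.image (fun j : Fin r => o (i, j.succ))) ∈ H

/-- valid absorber -/
def AbsVal {V : Type*} [DecidableEq V] (r : ℕ) (H : Finset (Finset V)) (o : Fin r × Fin (r+1) → V) : Prop :=
  Function.Injective o ∧ ∀ i : Fin r, insert (o (i, 0)) (univ.image (fun j : Fin r => o (i, j.succ))) ∈ H

/-- absorber of t -/
def Abs {V : Type*} [DecidableEq V] (r : ℕ) (H : Finset (Finset V)) (t : Fin (r+1) → V) (o : Fin r × Fin (r+1) → V) : Prop :=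
  AbsVal r H o ∧ AbsRaw r H t o ∧ ∀ p a, o p ≠ t a

lemma PM_of_val {V : Type*} [DecidableEq V] {r : ℕ} {H : Finset (Finset V)} {o : Fin r × Fin (r+1) → V}
    (h : AbsVal r H o) : PMset H (univ.image o) := by
  have := PMset_biUnion (H := H) (univ : Finset (Fin r)) (fun i => insert (o (i, 0)) (univ.image (fun j : Fin r => o (i, j.succ)))) (by
    intro i _ i' _ hii
    rw [disjoint_left]
    intro v hv hv'
    simp only [mem_insert, mem_image, mem_univ, true_and] at hv hv'
    have h1 : ∃ a, v = o (i, a) := by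
      rcases hv with hv | ⟨j, hv⟩
      · exact ⟨_, hv⟩
      · exact ⟨_, hv.symm⟩
    have h2 : ∃ a, v = o (i', a) := by
      rcases hv' with hv | ⟨j, hv⟩
      · exact ⟨_, hv⟩
      · exact ⟨_, hv.symm⟩
    obtain ⟨a, ha⟩ := h1
    obtain ⟨b, hb⟩ := h2
    have := h.1 (ha.symm.trans hb)
    simp only [Prod.mk.injEq] at this
    exact hii this.1) (fun i _ => PMset_edge (h.2 i))
  have e : (univ : Finset (Fin r)).biUnion (fun i => insert (o (i, 0)) (univ.image (fun j : Fin r => o (i, j.succ)))) = univ.image o := by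
    ext v
    simp only [mem_biUnion, mem_univ, true_and, mem_insert, mem_image, Prod.exists]
    constructor
    · rintro ⟨i, hv | ⟨j, hv⟩⟩
      · exact ⟨i, 0, hv.symm⟩
      · exact ⟨i, j.succ, hv⟩
    · rintro ⟨i, a, hv⟩
      refine ⟨i, ?_⟩
      revert hv
      refine Fin.cases ?_ (fun j => ?_) a
      · intro hv; exact Or.inl hv.symm
      · intro hv; exact Or.inr ⟨j, hv⟩
  rwa [e] at this

lemma PM_of_abs {V : Type*} [DecidableEq V] {r : ℕ} {H : Finset (Finset V)} {t : Fin (r+1) → V} {o : Fin r × Fin (r+1) → V}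
    (ht : Function.Injective t) (h : Abs r H t o) : PMset H (univ.image o ∪ univ.image t) := by
  obtain ⟨⟨hinj, _⟩, ⟨h0, h1⟩, hne⟩ := h
  set E : Fin (r+1) → Finset V := Fin.cons (insert (t 0) (univ.image (fun i => o (i, 0))))
    (fun i => insert (t i.succ) (univ.image (fun j : Fin r => o (i, j.succ)))) with hE
  have hE0 : E 0 = insert (t 0) (univ.image (fun i => o (i, 0))) := rfl
  have hE1 : ∀ i : Fin r, E i.succ = insert (t i.succ) (univ.image (fun j : Fin r => o (i, j.succ))) := fun i => rfl
  have hm : ∀ a v, v ∈ E a → v = t a ∨ ∃ p : Fin r × Fin (r+1), v = o p ∧ (if p.2 = 0 then (0 : Fin (r+1)) else p.1.succ) = a := by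
    intro a v
    refine Fin.cases ?_ (fun i => ?_) a
    · intro hv
      rw [hE0] at hv
      simp only [mem_insert, mem_image, mem_univ, true_and] at hv
      rcases hv with hv | ⟨i, hv⟩
      · exact Or.inl hv
      · exact Or.inr ⟨(i, 0), hv.symm, by simp⟩
    · intro hv
      rw [hE1] at hv
      simp only [mem_insert, mem_image, mem_univ, true_and] at hv
      rcases hv with hv | ⟨j, hv⟩
      · exact Or.inl hv
      · exact Or.inr ⟨(i, j.succ), hv.symm, by simp [Fin.succ_ne_zero]⟩
  have := PMset_biUnion (H := H) (univ : Finset (Fin (r+1))) E (by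
    intro a _ b _ hab
    rw [disjoint_left]
    intro v hv hv'
    rcases hm a v hv with h | ⟨p, h, hp⟩ <;> rcases hm b v hv' with h' | ⟨p', h', hp'⟩
    · exact hab (ht (h.symm.trans h'))
    · exact hne p' a (h'.symm.trans h)
    · exact hne p b (h.symm.trans h')
    · have := hinj (h.symm.trans h')
      rw [this] at hp
      exact hab (hp.symm.trans hp')) (by
    intro a _
    refine Fin.cases ?_ (fun i => ?_) a
    · exact PMset_edge h0
    · exact PMset_edge (h1 i).1)
  have e : (univ : Finset (Fin (r+1))).biUnion E = univ.image o ∪ univ.image t := by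
    ext v
    simp only [mem_biUnion, mem_univ, true_and, mem_union, mem_image]
    constructor
    · rintro ⟨a, hv⟩
      rcases hm a v hv with h | ⟨p, h, hp⟩
      · exact Or.inr ⟨a, h.symm⟩
      · exact Or.inl ⟨p, h.symm⟩
    · rintro (⟨⟨i, a⟩, hv⟩ | ⟨a, hv⟩)
      · revert hv
        refine Fin.cases ?_ (fun j => ?_) a
        · intro hv
          refine ⟨0, ?_⟩
          rw [hE0, ← hv]
          simp only [mem_insert, mem_image, mem_univ, true_and]
          exact Or.inr ⟨i, rfl⟩
        · intro hv
          refine ⟨i.succ, ?_⟩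
          rw [hE1, ← hv]
          simp only [mem_insert, mem_image, mem_univ, true_and]
          exact Or.inr ⟨j, rfl⟩
      · revert hv
        refine Fin.cases ?_ (fun j => ?_) a
        · intro hv
          refine ⟨0, ?_⟩
          rw [hE0, ← hv]
          exact mem_insert_self _ _
        · intro hv
          refine ⟨j.succ, ?_⟩
          rw [hE1, ← hv]
          exact mem_insert_self _ _
  rwa [e] at this

lemma raw_count {V : Type*} [Fintype V] [DecidableEq V] (r : ℕ) (H : Finset (Finset V)) (c : ℝ) (hc : 1/2 < c)
    (hdeg : ∀ u, c * (Fintype.card V : ℝ)^r ≤ tdeg r H u) (t : Fin (r+1) → V)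
    [DecidablePred (AbsRaw r H t)] :
    c * (2*c-1)^r * (Fintype.card V : ℝ)^(r*(r+1)) ≤ ((univ.filter (AbsRaw r H t)).card : ℝ) := by
  classical
  set n : ℝ := (Fintype.card V : ℝ) with hn
  have hn0 : 0 ≤ n := by positivity
  set Rr : Fin r → V → Finset (Fin r → V) := fun i u => univ.filter (fun f : Fin r → V => insert (t i.succ) (univ.image f) ∈ H ∧ insert u (univ.image f) ∈ H) with hRr
  have hR : ∀ i u, (2*c-1) * n^r ≤ ((Rr i u).card : ℝ) := by
    intro i u
    have h1 := hdeg (t i.succ)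
    have h2 := hdeg u
    unfold tdeg at h1 h2
    have h3 := card_union_add_card_inter (univ.filter (fun f : Fin r → V => insert (t i.succ) (univ.image f) ∈ H)) (univ.filter (fun f : Fin r → V => insert u (univ.image f) ∈ H))
    rw [← filter_and] at h3
    have h4 := card_le_univ (univ.filter (fun f : Fin r → V => insert (t i.succ) (univ.image f) ∈ H) ∪ univ.filter (fun f : Fin r → V => insert u (univ.image f) ∈ H))
    have h3' := congrArg (Nat.cast : ℕ → ℝ) h3
    have h4' := (Nat.cast_le (α := ℝ)).2 h4
    simp only [Fintype.card_fun, Fintype.card_fin] at h4'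
    push_cast at h3' h4'
    rw [← hn] at h4'
    simp only [hRr]
    linarith
  have hcount : (univ.filter (AbsRaw r H t)).card = ∑ u ∈ univ.filter (fun u : Fin r → V => insert (t 0) (univ.image u) ∈ H), ∏ i, (Rr i (u i)).card := by
    have e1 : (univ.filter (AbsRaw r H t)).card = (univ.filter (fun z : (Fin r → V) × (Fin r → Fin r → V) =>
        insert (t 0) (univ.image z.1) ∈ H ∧ ∀ i, z.2 i ∈ Rr i (z.1 i))).card := by
      refine card_bij' (fun o _ => ((fun i => o (i, 0)), (fun i j => o (i, j.succ))))
        (fun z _ => fun p => (Fin.cons (z.1 p.1) (z.2 p.1) : Fin (r+1) → V) p.2) ?_ ?_ ?_ ?_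
      · intro o ho
        simp only [mem_filter, mem_univ, true_and, hRr] at ho ⊢
        exact ho
      · intro z hz
        simp only [mem_filter, mem_univ, true_and, hRr] at hz ⊢
        exact hz
      · intro o ho
        ext ⟨i, j⟩
        refine Fin.cases ?_ (fun j => ?_) j
        · rfl
        · rfl
      · intro z hz
        rfl
    rw [e1, card_filter, Fintype.sum_prod_type, sum_filter]
    apply sum_congr rfl
    intro u _
    by_cases hu : insert (t 0) (univ.image u) ∈ H
    · simp only [hu, true_and, if_true]
      rw [← card_filter, ← Fintype.card_piFinset]
      congr 1
      ext U
      simp [Fintype.mem_piFinset]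
    · simp [hu]
  rw [hcount]
  push_cast
  have h2c : 0 ≤ 2*c-1 := by linarith
  calc c * (2*c-1)^r * n^(r*(r+1)) = (c * n^r) * ((2*c-1) * n^r)^r := by
        rw [mul_pow, ← pow_mul]; ring
    _ ≤ ((univ.filter (fun u : Fin r → V => insert (t 0) (univ.image u) ∈ H)).card : ℝ) * ((2*c-1) * n^r)^r := by
        gcongr
        exact hdeg (t 0)
    _ = ∑ u ∈ univ.filter (fun u : Fin r → V => insert (t 0) (univ.image u) ∈ H), ((2*c-1) * n^r)^r := by
        rw [sum_const, nsmul_eq_mul]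
    _ ≤ _ := by
        apply sum_le_sum
        intro u _
        calc ((2*c-1) * n^r)^r = ∏ i : Fin r, ((2*c-1) * n^r) := by simp
          _ ≤ _ := by
            apply prod_le_prod
            · intros; positivity
            · intro i _; exact hR i (u i)

lemma hit_count {I A : Type*} [Fintype I] [DecidableEq I] [Fintype A] [DecidableEq A] (W : Finset A) :
    (univ.filter (fun f : I → A => ∃ i, f i ∈ W)).card * Fintype.card A ≤
      Fintype.card I * W.card * (Fintype.card A)^(Fintype.card I) := by
  classical
  have hone : ∀ i : I, (univ.filter (fun f : I → A => f i ∈ W)).card * Fintype.card A ≤ W.card * (Fintype.card A)^(Fintype.card I) := by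
    intro i
    rw [← Fintype.card_fun, ← card_univ (α := A), ← card_product, ← card_univ, ← card_product]
    apply card_le_card_of_injOn (fun z => (z.1 i, Function.update z.1 i z.2))
    · rintro ⟨f, a⟩ hz
      simp only [coe_product, coe_filter, mem_univ, true_and, Set.mem_prod, Set.mem_ofPred_eq, coe_univ, Set.mem_univ, and_true, mem_coe] at hz ⊢
      exact hz
    · rintro ⟨f, a⟩ hf ⟨f', a'⟩ hf' heq
      simp only [Prod.mk.injEq] at heq ⊢
      obtain ⟨h1, h2⟩ := heq
      have ha : a = a' := by simpa using congrFun h2 i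
      refine ⟨?_, ha⟩
      ext x
      by_cases hx : x = i
      · subst hx; exact h1
      · have := congrFun h2 x
        simpa [hx] using this
  have hsub : univ.filter (fun f : I → A => ∃ i, f i ∈ W) ⊆
      (univ : Finset I).biUnion (fun i => univ.filter (fun f : I → A => f i ∈ W)) := by
    intro f hf
    simpa using hf
  calc _ ≤ (∑ i : I, (univ.filter (fun f : I → A => f i ∈ W)).card) * Fintype.card A := by
        gcongr
        exact (card_le_card hsub).trans card_biUnion_le
    _ = ∑ i : I, (univ.filter (fun f : I → A => f i ∈ W)).card * Fintype.card A := by rw [sum_mul]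
    _ ≤ ∑ i : I, W.card * (Fintype.card A)^(Fintype.card I) := sum_le_sum (fun i _ => hone i)
    _ = _ := by rw [sum_const, smul_eq_mul, card_univ]; ring

lemma abs_count {V : Type*} [Fintype V] [DecidableEq V] (r : ℕ) (H : Finset (Finset V)) (c : ℝ) (hc : 1/2 < c)
    (hdeg : ∀ u, c * (Fintype.card V : ℝ)^r ≤ tdeg r H u) (W : Finset V) (hV : 0 < Fintype.card V)
    (hW : (r*(r+1) : ℝ) * W.card ≤ c * (2*c-1)^r / 4 * Fintype.card V)
    (hn : (r*(r+1) : ℝ)^2 + (r*(r+1)) * (r+1) ≤ c * (2*c-1)^r / 4 * Fintype.card V)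
    (t : Fin (r+1) → V)
    [DecidablePred (fun o : Fin r × Fin (r+1) → V => Abs r H t o ∧ ∀ p, o p ∉ W)] :
    c * (2*c-1)^r / 2 * (Fintype.card V : ℝ)^(r*(r+1)) ≤
      ((univ.filter (fun o : Fin r × Fin (r+1) → V => Abs r H t o ∧ ∀ p, o p ∉ W)).card : ℝ) := by
  classical
  set q := c * (2*c-1)^r with hq
  set n : ℝ := (Fintype.card V : ℝ) with hn'
  have hn0 : 0 < n := by rw [hn']; exact_mod_cast hV
  have h1 := raw_count r H c hc hdeg t
  rw [← hq, ← hn'] at h1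
  set W' := W ∪ univ.image t with hW'
  have hW'c : (W'.card : ℝ) ≤ W.card + (r+1) := by
    have h1 := card_union_le W (univ.image t)
    have h2 : (univ.image t).card ≤ r+1 := by
      refine card_image_le.trans ?_; simp
    rw [← hW'] at h1
    have : W'.card ≤ W.card + (r+1) := by omega
    exact_mod_cast this
  have hsub : univ.filter (AbsRaw r H t) ⊆ univ.filter (fun o : Fin r × Fin (r+1) → V => Abs r H t o ∧ ∀ p, o p ∉ W) ∪
      (univ.filter (fun o : Fin r × Fin (r+1) → V => ¬ Function.Injective o) ∪ univ.filter (fun o : Fin r × Fin (r+1) → V => ∃ p, o p ∈ W')) := by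
    intro o ho
    replace ho := (mem_filter.1 ho).2
    by_cases hi : Function.Injective o
    · by_cases hw : ∃ p, o p ∈ W'
      · exact mem_union_right _ (mem_union_right _ (mem_filter.2 ⟨mem_univ _, hw⟩))
      · refine mem_union_left _ (mem_filter.2 ⟨mem_univ _, ?_⟩)
        push Not at hw
        refine ⟨⟨⟨hi, fun i => (ho.2 i).2⟩, ho, ?_⟩, ?_⟩
        · intro p a h
          apply hw p
          rw [h]
          exact mem_union_right _ (mem_image_of_mem _ (mem_univ _))
        · intro p h
          exact hw p (mem_union_left _ h)
    · exact mem_union_right _ (mem_union_left _ (mem_filter.2 ⟨mem_univ _, hi⟩))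
  have h2 := (Nat.cast_le (α := ℝ)).2 ((card_le_card hsub).trans ((card_union_le _ _).trans (Nat.add_le_add_left (card_union_le _ _) _)))
  push_cast at h2
  have h3 := (Nat.cast_le (α := ℝ)).2 (noninj_count (I := Fin r × Fin (r+1)) (A := V))
  have h4 := (Nat.cast_le (α := ℝ)).2 (hit_count (I := Fin r × Fin (r+1)) W')
  simp only [Fintype.card_prod, Fintype.card_fin] at h3 h4
  push_cast at h3 h4
  rw [← hn'] at h3 h4
  set N := n^(r*(r+1)) with hN
  have hNpos : 0 < N := by positivity
  set x1 : ℝ := ((univ.filter (fun o : Fin r × Fin (r+1) → V => ¬ Function.Injective o)).card : ℝ)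
  set x2 : ℝ := ((univ.filter (fun o : Fin r × Fin (r+1) → V => ∃ p, o p ∈ W')).card : ℝ)
  have h5 : (x1 + x2) * n ≤ (q/2 * N) * n := by
    have hk : (0:ℝ) ≤ r*(r+1) := by positivity
    have := mul_le_mul_of_nonneg_left hW'c hk
    have h6 : (r*(r+1):ℝ)^2 + r*(r+1) * W'.card ≤ q/2 * n := by linarith
    have := mul_le_mul_of_nonneg_right h6 hNpos.le
    linarith
  have h6 := le_of_mul_le_mul_right h5 hn0
  linarith


lemma potential_step {T O : Type*} [Fintype T] [DecidableEq O] (A : T → O → Prop) [∀ t, DecidablePred (A t)] (cand : Finset O)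
    (hne : cand.Nonempty) (w : T → ℝ) (hw : ∀ t, 0 ≤ w t) (p N : ℝ) (hp : 0 ≤ p) (hN : (cand.card : ℝ) ≤ N)
    (h : ∀ t, p * N ≤ ((cand.filter (A t)).card : ℝ)) :
    ∃ o ∈ cand, p * ∑ t, w t ≤ ∑ t, if A t o then w t else 0 := by
  by_contra hcon
  push Not at hcon
  have h1 : ∑ o ∈ cand, ∑ t, (if A t o then w t else 0) < ∑ o ∈ cand, p * ∑ t, w t :=
    sum_lt_sum_of_nonempty hne hcon
  rw [sum_comm, sum_const, nsmul_eq_mul] at h1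
  have h2 : ∀ t, w t * (p * N) ≤ ∑ o ∈ cand, (if A t o then w t else 0) := by
    intro t
    rw [← sum_filter, sum_const, nsmul_eq_mul, mul_comm]
    exact mul_le_mul_of_nonneg_right (h t) (hw t)
  have h3 := sum_le_sum (fun t (_ : t ∈ (univ : Finset T)) => h2 t)
  rw [← sum_mul] at h3
  have h4 : 0 ≤ p * ∑ t, w t := mul_nonneg hp (sum_nonneg (fun t _ => hw t))
  have h5 := mul_le_mul_of_nonneg_right hN h4
  linarith [mul_comm (∑ t, w t) (p * N), mul_comm p N, mul_assoc N p (∑ t, w t)]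

set_option maxHeartbeats 1000000 in
lemma abs_build {V : Type*} [Fintype V] [DecidableEq V] (r : ℕ) (hr : 0 < r) (H : Finset (Finset V)) (c : ℝ) (hc : 1/2 < c)
    (hdeg : ∀ u, c * (Fintype.card V : ℝ)^r ≤ tdeg r H u) (hV : 0 < Fintype.card V)
    (hn : (r*(r+1) : ℝ)^2 + (r*(r+1)) * (r+1) ≤ c * (2*c-1)^r / 4 * Fintype.card V)
    [∀ t, DecidablePred (Abs r H t)] (m : ℕ)
    (hm : (r*(r+1) : ℝ) * ((r*(r+1)) * m) ≤ c * (2*c-1)^r / 4 * Fintype.card V) :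
    ∃ S : Finset (Fin r × Fin (r+1) → V), S.card = m ∧ (∀ o ∈ S, AbsVal r H o) ∧
      (∀ o ∈ S, ∀ o' ∈ S, o ≠ o' → Disjoint (univ.image o) (univ.image o')) ∧
      ∑ t, ((1:ℝ)/2)^((S.filter (Abs r H t)).card) ≤ (1 - c * (2*c-1)^r / 4)^m * (Fintype.card V : ℝ)^(r+1) := by
  classical
  induction m with
  | zero =>
    refine ⟨∅, by simp, by simp, by simp, ?_⟩
    simp
  | succ m ih =>
    have hrp : (0:ℝ) < r*(r+1) := by positivity
    obtain ⟨S, hSc, hSv, hSd, hSp⟩ := ih (by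
      refine le_trans ?_ hm
      push_cast
      have : (m:ℝ) ≤ m + 1 := by linarith
      gcongr)
    set W : Finset V := S.biUnion (fun o => univ.image o) with hW
    have hWc : W.card ≤ (r*(r+1)) * m := by
      refine card_biUnion_le.trans ?_
      rw [← hSc, mul_comm]
      refine (sum_le_card_nsmul _ _ (r*(r+1)) ?_).trans (by simp)
      intro o _
      refine card_image_le.trans ?_
      simp
    have hWr : (r*(r+1) : ℝ) * W.card ≤ c * (2*c-1)^r / 4 * Fintype.card V := by
      refine le_trans ?_ hm
      have : (W.card : ℝ) ≤ (r*(r+1)) * m := by exact_mod_cast hWc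
      gcongr
      push_cast
      nlinarith
    have hcnt := abs_count r H c hc hdeg W hV hWr hn
    set q := c * (2*c-1)^r with hq
    have hq0 : 0 < q := by
      have : 0 < 2*c-1 := by linarith
      positivity
    set cand : Finset (Fin r × Fin (r+1) → V) := univ.filter (fun o => AbsVal r H o ∧ ∀ p, o p ∉ W) with hcand
    have hcnt' : ∀ t, q/2 * (Fintype.card V : ℝ)^(r*(r+1)) ≤ ((cand.filter (Abs r H t)).card : ℝ) := by
      intro t
      let _ : DecidablePred (fun o : Fin r × Fin (r+1) → V => Abs r H t o ∧ ∀ p, o p ∉ W) := fun _ => Classical.propDecidable _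
      refine (hcnt t).trans ?_
      have hsub : univ.filter (fun o : Fin r × Fin (r+1) → V => Abs r H t o ∧ ∀ p, o p ∉ W) ⊆ cand.filter (Abs r H t) := by
        intro o ho
        rw [mem_filter] at ho
        rw [mem_filter, hcand, mem_filter]
        exact ⟨⟨mem_univ _, ho.2.1.1, ho.2.2⟩, ho.2.1⟩
      exact_mod_cast card_le_card hsub
    have : Nonempty V := Fintype.card_pos_iff.mp hV
    have hVr : (0:ℝ) < Fintype.card V := by exact_mod_cast hV
    have hne : cand.Nonempty := by
      have h1 := hcnt' (fun _ => Classical.arbitrary V)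
      have h2 : 0 < q/2 * (Fintype.card V : ℝ)^(r*(r+1)) := by positivity
      have h3 : 0 < (cand.filter (Abs r H (fun _ => Classical.arbitrary V))).card := by
        exact_mod_cast h2.trans_le h1
      obtain ⟨o, ho⟩ := card_pos.mp h3
      exact ⟨o, (mem_filter.mp ho).1⟩
    have hcc : (cand.card : ℝ) ≤ (Fintype.card V : ℝ)^(r*(r+1)) := by
      have : cand.card ≤ (Fintype.card V)^(r*(r+1)) := by
        refine (card_le_univ _).trans ?_
        simp
      exact_mod_cast this
    obtain ⟨o, ho, hos⟩ := potential_step (fun t o => Abs r H t o) cand hne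
      (fun t => ((1:ℝ)/2)^((S.filter (Abs r H t)).card)) (fun t => by positivity) (q/2) _ (by positivity) hcc hcnt'
    rw [hcand, mem_filter] at ho
    obtain ⟨_, hov, hoW⟩ := ho
    have hoS : o ∉ S := by
      intro h
      apply hoW (⟨0, hr⟩, 0)
      rw [hW, mem_biUnion]
      exact ⟨o, h, mem_image_of_mem _ (mem_univ _)⟩
    have hdis : ∀ o' ∈ S, Disjoint (univ.image o) (univ.image o') := by
      intro o' ho'
      rw [disjoint_left]
      intro v hv hv'
      rw [mem_image] at hv
      obtain ⟨p, _, rfl⟩ := hv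
      apply hoW p
      rw [hW, mem_biUnion]
      exact ⟨o', ho', hv'⟩
    refine ⟨insert o S, by rw [card_insert_of_notMem hoS, hSc], ?_, ?_, ?_⟩
    · intro o' ho'
      rcases mem_insert.mp ho' with rfl | h
      · exact hov
      · exact hSv _ h
    · intro a ha b hb hab
      rcases mem_insert.mp ha with rfl | ha' <;> rcases mem_insert.mp hb with rfl | hb'
      · exact absurd rfl hab
      · exact hdis _ hb'
      · exact (hdis _ ha').symm
      · exact hSd _ ha' _ hb' hab
    · have hterm : ∀ t, ((1:ℝ)/2)^(((insert o S).filter (Abs r H t)).card) =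
          ((1:ℝ)/2)^((S.filter (Abs r H t)).card) - (1/2) * (if Abs r H t o then ((1:ℝ)/2)^((S.filter (Abs r H t)).card) else 0) := by
        intro t
        rw [filter_insert]
        by_cases h : Abs r H t o
        · rw [if_pos h, if_pos h, card_insert_of_notMem (by simp [hoS]), pow_succ]
          ring
        · rw [if_neg h, if_neg h]
          ring
      rw [sum_congr rfl (fun t _ => hterm t), sum_sub_distrib, ← mul_sum]
      have hq4 : 0 ≤ 1 - q/4 := by
        have h1 := hcnt' (fun _ => Classical.arbitrary V)
        have h2 : ((cand.filter (Abs r H (fun _ => Classical.arbitrary V))).card : ℝ) ≤ cand.card := by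
          exact_mod_cast card_filter_le _ _
        have h3 : q/2 * (Fintype.card V : ℝ)^(r*(r+1)) ≤ 1 * (Fintype.card V : ℝ)^(r*(r+1)) := by linarith
        have := le_of_mul_le_mul_right h3 (by positivity)
        linarith
      have h5 := mul_le_mul_of_nonneg_left hSp hq4
      rw [pow_succ]
      calc _ ≤ (1 - q/4) * ∑ t, ((1:ℝ)/2)^((S.filter (Abs r H t)).card) := by linarith
        _ ≤ _ := h5
        _ = _ := by ring


lemma abs_family (r : ℕ) (hr : 0 < r) (c ω : ℝ) (hc : 1/2 < c) (hc1 : c ≤ 1) (hω : 0 < ω) :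
    ∃ β : ℝ, 0 < β ∧ ∃ n0 : ℕ, ∀ (V : Type) [Fintype V] [DecidableEq V], n0 ≤ Fintype.card V →
      ∀ H : Finset (Finset V), (∀ u, c * (Fintype.card V : ℝ)^r ≤ tdeg r H u) →
      ∀ [∀ t, DecidablePred (Abs r H t)],
      ∃ S : Finset (Fin r × Fin (r+1) → V), (∀ o ∈ S, AbsVal r H o) ∧
      (∀ o ∈ S, ∀ o' ∈ S, o ≠ o' → Disjoint (univ.image o) (univ.image o')) ∧
      ((S.biUnion (fun o => univ.image o)).card : ℝ) ≤ ω * Fintype.card V ∧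
      ∀ t, β * Fintype.card V ≤ ((S.filter (Abs r H t)).card : ℝ) := by
  set K : ℝ := r*(r+1) with hK
  have hK0 : 0 < K := by positivity
  set q := c * (2*c-1)^r with hq
  have hc2 : 0 < 2*c-1 := by linarith
  have hq0 : 0 < q := by positivity
  have hq1 : q ≤ 1 := by
    have : (2*c-1)^r ≤ 1 := pow_le_one₀ hc2.le (by linarith)
    nlinarith
  set θ := min (ω/K) (q/(4*K^2)) with hθ
  have hθ0 : 0 < θ := by
    rw [hθ, lt_min_iff]; constructor <;> positivity
  have hθ1 : K * θ ≤ ω := by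
    have : θ ≤ ω/K := min_le_left _ _
    rw [le_div_iff₀ hK0] at this
    linarith
  have hθ2 : K * (K * θ) ≤ q/4 := by
    have : θ ≤ q/(4*K^2) := min_le_right _ _
    rw [le_div_iff₀ (by positivity)] at this
    nlinarith
  obtain ⟨B, hB⟩ := exists_pow_lt_of_lt_one (show (0:ℝ) < 1/4 by norm_num) (show 1 - q/4 < 1 by linarith)
  have hB1 : 0 < B := by
    rcases Nat.eq_zero_or_pos B with h | h
    · rw [h] at hB; norm_num at hB
    · exact h
  have hBr : (1:ℝ) ≤ B := by exact_mod_cast hB1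
  set β := θ/(2*B) with hβ
  have hβ0 : 0 < β := by positivity
  have h2β : (1:ℝ) < (2:ℝ)^β := Real.one_lt_rpow (by norm_num) hβ0
  have hev := (tendsto_pow_const_div_const_pow_of_one_lt (r+1) h2β).eventually (gt_mem_nhds (show (0:ℝ) < 1 by norm_num))
  obtain ⟨n1, hn1⟩ := Filter.eventually_atTop.mp hev
  obtain ⟨n2, hn2⟩ := exists_nat_ge (4*B/θ)
  obtain ⟨n3, hn3⟩ := exists_nat_ge ((K^2 + K*(r+1))/(q/4))
  refine ⟨β, hβ0, n1 + n2 + n3 + 1, ?_⟩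
  intro V _ _ hV H hdeg _
  have hVp : 0 < Fintype.card V := by omega
  have hn1' := hn1 (Fintype.card V) (by omega)
  set n : ℝ := (Fintype.card V : ℝ) with hn
  have hn0 : 0 < n := by rw [hn]; exact_mod_cast hVp
  have hn2' : 4*B ≤ θ * n := by
    have : 4*B/θ ≤ n := hn2.trans (by rw [hn]; exact_mod_cast (show n2 ≤ Fintype.card V by omega))
    rw [div_le_iff₀ hθ0] at this
    linarith
  have hn3' : K^2 + K*(r+1) ≤ q/4*n := by
    have : (K^2 + K*(r+1))/(q/4) ≤ n := hn3.trans (by rw [hn]; exact_mod_cast (show n3 ≤ Fintype.card V by omega))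
    rw [div_le_iff₀ (by positivity)] at this
    linarith
  set m := ⌊θ * n⌋₊ with hm
  have hm1 : (m:ℝ) ≤ θ * n := Nat.floor_le (by positivity)
  have hm2 : θ * n < m + 1 := Nat.lt_floor_add_one _
  obtain ⟨S, hSc, hSv, hSd, hSp⟩ := abs_build r hr H c hc hdeg hVp hn3' m (by
    rw [← hK, ← hq, ← hn]
    calc K * (K * m) ≤ K * (K * (θ * n)) := by gcongr
      _ = K * (K * θ) * n := by ring
      _ ≤ q/4 * n := by gcongr)
  rw [← hq, ← hn] at hSp
  refine ⟨S, hSv, hSd, ?_, ?_⟩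
  · have h1 : (S.biUnion (fun o => univ.image o)).card ≤ (r*(r+1)) * m := by
      refine card_biUnion_le.trans ?_
      rw [← hSc, mul_comm]
      refine (sum_le_card_nsmul _ _ (r*(r+1)) ?_).trans (by simp)
      intro o _
      refine card_image_le.trans ?_
      simp
    have h2 : ((S.biUnion (fun o => univ.image o)).card : ℝ) ≤ K * m := by
      rw [hK]; exact_mod_cast h1
    calc _ ≤ K * m := h2
      _ ≤ K * (θ * n) := by gcongr
      _ = K * θ * n := by ring
      _ ≤ ω * n := by gcongr
  · set x := m / B with hx
    have hx1 : B * x ≤ m := Nat.mul_div_le m B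
    have hx2 : m < B * x + B := Nat.lt_mul_div_succ m hB1
    have hx2r : (m:ℝ) + 1 ≤ B * x + B := by exact_mod_cast hx2
    have hxβ : β * n ≤ x := by
      rw [hβ, div_mul_eq_mul_div, div_le_iff₀ (by positivity)]
      nlinarith
    have hpow : n^(r+1) ≤ 2^x := by
      rw [div_lt_one (by positivity)] at hn1'
      refine hn1'.le.trans ?_
      rw [← Real.rpow_natCast, ← Real.rpow_mul (by norm_num), ← Real.rpow_natCast]
      exact Real.rpow_le_rpow_of_exponent_le (by norm_num) hxβ
    have hΦ : (1 - q/4)^m * n^(r+1) ≤ (1/2)^x := by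
      have h1 : (1 - q/4)^m ≤ (1/4)^x := by
        calc (1 - q/4)^m ≤ (1 - q/4)^(B*x) := pow_le_pow_of_le_one (by linarith) (by linarith) hx1
          _ = ((1 - q/4)^B)^x := pow_mul _ _ _
          _ ≤ (1/4)^x := pow_le_pow_left₀ (pow_nonneg (by linarith) _) hB.le _
      calc (1 - q/4)^m * n^(r+1) ≤ (1/4)^x * 2^x := by gcongr
        _ = (1/2)^x := by rw [← mul_pow]; norm_num
    intro t
    refine hxβ.trans ?_
    have h1 : ((1:ℝ)/2)^((S.filter (Abs r H t)).card) ≤ (1/2)^x := by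
      refine le_trans ?_ (hSp.trans hΦ)
      exact single_le_sum (f := fun t => ((1:ℝ)/2)^((S.filter (Abs r H t)).card)) (fun t _ => by positivity) (mem_univ t)
    have := (pow_le_pow_iff_right_of_lt_one₀ (show (0:ℝ) < 1/2 by norm_num) (by norm_num)).mp h1
    exact_mod_cast this


lemma PMset_card {V : Type*} [DecidableEq V] {k : ℕ} {H : Finset (Finset V)} (hH : HyperUniform k H) {A : Finset V}
    (h : PMset H A) : k ∣ A.card := by
  obtain ⟨M, ⟨hMs, hMd⟩, rfl⟩ := h
  rw [card_biUnion (t := id) (fun a ha b hb hab => hMd a ha b hb hab)]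
  exact dvd_sum (fun e he => by rw [id, hH e (hMs he)])

lemma absorb {V : Type*} [Fintype V] [DecidableEq V] (r : ℕ) (H : Finset (Finset V)) [∀ t, DecidablePred (Abs r H t)]
    (S : Finset (Fin r × Fin (r+1) → V)) (hSv : ∀ o ∈ S, AbsVal r H o)
    (hSd : ∀ o ∈ S, ∀ o' ∈ S, o ≠ o' → Disjoint (univ.image o) (univ.image o'))
    (R : Finset V) (hR : Disjoint (S.biUnion (fun o => univ.image o)) R) (hdvd : (r+1) ∣ R.card)
    (hc : ∀ t, R.card ≤ (S.filter (Abs r H t)).card) :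
    PMset H (S.biUnion (fun o => univ.image o) ∪ R) := by
  classical
  obtain ⟨q, hq⟩ := hdvd
  have hcard : Fintype.card (Fin q × Fin (r+1)) = Fintype.card R := by
    simp [hq, mul_comm]
  let e := Fintype.equivOfCardEq hcard
  set t : Fin q → Fin (r+1) → V := fun j a => (e (j, a)).1 with ht
  have htR : ∀ j a, t j a ∈ R := fun j a => (e (j,a)).2
  have htinj : ∀ j a j' a', t j a = t j' a' → j = j' ∧ a = a' := by
    intro j a j' a' h
    have := e.injective (Subtype.ext h)
    exact Prod.mk.injEq _ _ _ _ ▸ this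
  have htsurj : ∀ v ∈ R, ∃ j a, t j a = v := by
    intro v hv
    refine ⟨(e.symm ⟨v, hv⟩).1, (e.symm ⟨v, hv⟩).2, ?_⟩
    simp [ht]
  have hqR : q ≤ R.card := by rw [hq]; nlinarith
  obtain ⟨g, hginj, hg⟩ := (Finset.all_card_le_biUnion_card_iff_exists_injective (fun j : Fin q => S.filter (Abs r H (t j)))).mp (by
    intro s
    rcases s.eq_empty_or_nonempty with rfl | ⟨j, hj⟩
    · simp
    · have h1 : s.card ≤ q := by simpa using card_le_univ s
      have h2 := card_le_card (subset_biUnion_of_mem (fun j : Fin q => S.filter (Abs r H (t j))) hj)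
      exact h1.trans (hqR.trans ((hc (t j)).trans h2)))
  have hgS : ∀ j, g j ∈ S := fun j => (mem_filter.mp (hg j)).1
  have hgA : ∀ j, Abs r H (t j) (g j) := fun j => (mem_filter.mp (hg j)).2
  have hWR : ∀ o ∈ S, ∀ p, o p ∉ R := by
    intro o ho p hp
    exact (disjoint_left.mp hR) (mem_biUnion.mpr ⟨o, ho, mem_image_of_mem _ (mem_univ p)⟩) hp
  have h1 : PMset H ((univ : Finset (Fin q)).biUnion (fun j => univ.image (g j) ∪ univ.image (t j))) := by
    apply PMset_biUnion
    · intro i _ j _ hij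
      have hgij := hSd _ (hgS i) _ (hgS j) (fun h => hij (hginj h))
      rw [disjoint_left] at hgij ⊢
      intro v hv hv'
      rw [mem_union] at hv hv'
      rcases hv with hv | hv <;> rcases hv' with hv' | hv'
      · exact hgij hv hv'
      · obtain ⟨p, _, rfl⟩ := mem_image.mp hv
        obtain ⟨a, _, ha⟩ := mem_image.mp hv'
        exact hWR _ (hgS i) p (ha ▸ htR j a)
      · obtain ⟨p, _, rfl⟩ := mem_image.mp hv'
        obtain ⟨a, _, ha⟩ := mem_image.mp hv
        exact hWR _ (hgS j) p (ha ▸ htR i a)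
      · obtain ⟨a, _, ha⟩ := mem_image.mp hv
        obtain ⟨b, _, hb⟩ := mem_image.mp hv'
        exact hij (htinj _ _ _ _ (ha.trans hb.symm)).1
    · intro j _
      exact PM_of_abs (fun a b h => (htinj _ _ _ _ h).2) (hgA j)
  have h2 : PMset H ((S \ univ.image g).biUnion (fun o => univ.image o)) := by
    apply PMset_biUnion
    · intro i hi j hj hij
      exact hSd _ (mem_sdiff.mp hi).1 _ (mem_sdiff.mp hj).1 hij
    · intro o ho
      exact PM_of_val (hSv o (mem_sdiff.mp ho).1)
  have h3 := PMset_union (by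
    rw [disjoint_left]
    intro v hv hv'
    obtain ⟨j, _, hj⟩ := mem_biUnion.mp hv
    obtain ⟨o, ho, ho'⟩ := mem_biUnion.mp hv'
    obtain ⟨hoS, hog⟩ := mem_sdiff.mp ho
    rcases mem_union.mp hj with hj | hj
    · refine disjoint_left.mp (hSd _ (hgS j) _ hoS ?_) hj ho'
      rintro rfl
      exact hog (mem_image_of_mem _ (mem_univ j))
    · obtain ⟨a, _, ha⟩ := mem_image.mp hj
      obtain ⟨p, _, hp⟩ := mem_image.mp ho'
      exact hWR _ hoS p ((hp.trans ha.symm) ▸ htR j a)) h1 h2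
  convert h3 using 1
  ext v
  constructor
  · intro hv
    rcases mem_union.mp hv with hv | hv
    · obtain ⟨o, ho, ho'⟩ := mem_biUnion.mp hv
      by_cases h : o ∈ univ.image g
      · obtain ⟨j, _, rfl⟩ := mem_image.mp h
        exact mem_union_left _ (mem_biUnion.mpr ⟨j, mem_univ _, mem_union_left _ ho'⟩)
      · exact mem_union_right _ (mem_biUnion.mpr ⟨o, mem_sdiff.mpr ⟨ho, h⟩, ho'⟩)
    · obtain ⟨j, a, rfl⟩ := htsurj v hv
      exact mem_union_left _ (mem_biUnion.mpr ⟨j, mem_univ _, mem_union_right _ (mem_image_of_mem _ (mem_univ a))⟩)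
  · intro hv
    rcases mem_union.mp hv with hv | hv
    · obtain ⟨j, _, hj⟩ := mem_biUnion.mp hv
      rcases mem_union.mp hj with hj | hj
      · exact mem_union_left _ (mem_biUnion.mpr ⟨g j, hgS j, hj⟩)
      · obtain ⟨a, _, rfl⟩ := mem_image.mp hj
        exact mem_union_right _ (htR j a)
    · obtain ⟨o, ho, ho'⟩ := mem_biUnion.mp hv
      exact mem_union_left _ (mem_biUnion.mpr ⟨o, (mem_sdiff.mp ho).1, ho'⟩)

lemma pm_tdeg (r : ℕ) (hr : 0 < r) (c0 c : ℝ) (hF : Frac r c0) (hc0 : 0 ≤ c0) (hcc : c0 < c) (hc : 1/2 < c) (hc1 : c ≤ 1) :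
    ∃ n0 : ℕ, ∀ (V : Type) [Fintype V] [DecidableEq V], n0 ≤ Fintype.card V → (r+1) ∣ Fintype.card V →
      ∀ H : Finset (Finset V), HyperUniform (r+1) H → (∀ u, c * (Fintype.card V : ℝ)^r ≤ tdeg r H u) →
      PMset H univ := by
  classical
  have hrr : (0:ℝ) < r := by exact_mod_cast hr
  set ω := (c - c0)/(2*r) with hω
  have hω0 : 0 < ω := div_pos (by linarith) (by positivity)
  have hωc : c - r * ω = (c + c0)/2 := by rw [hω]; field_simp; ring
  obtain ⟨β, hβ, n1, h1⟩ := abs_family r hr c ω hc hc1 hω0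
  obtain ⟨n2, h2⟩ := almost_cover r c0 (c - r*ω) β hF hc0 (by rw [hωc]; linarith) hβ
  refine ⟨n1 + n2 + 1, ?_⟩
  intro V _ _ hV hdvd H hH hdeg
  obtain ⟨S, hSv, hSd, hSW, hSc⟩ := h1 V (by omega) H hdeg
  set W := S.biUnion (fun o => univ.image o) with hW
  set H' := H.filter (fun e => Disjoint e W) with hH'
  have hH's : H' ⊆ H := filter_subset _ _
  obtain ⟨M, hM, hMmax⟩ := exists_max_image (H'.powerset.filter (IsMat H')) card ⟨∅, by
    simp [IsMat]⟩
  have hMM : IsMat H' M := (mem_filter.mp hM).2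
  have h3 := h2 V (by omega) hdvd H' (fun e he => hH e (hH's he)) M hMM (by
    intro M' hM'
    exact hMmax M' (mem_filter.mpr ⟨mem_powerset.mpr hM'.1, hM'⟩))
  have hVp : 0 < Fintype.card V := by omega
  have hVr : (0:ℝ) < Fintype.card V := by exact_mod_cast hVp
  have hdeg' : ∀ u, u ∉ W → (c - r*ω) * (Fintype.card V : ℝ)^r ≤ tdeg r H' u := by
    intro u hu
    have hle : tdeg r H u ≤ tdeg r H' u + (univ.filter (fun f : Fin r → V => ∃ i, f i ∈ W)).card := by
      unfold tdeg
      refine le_trans (card_le_card ?_) (card_union_le _ _)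
      intro f hf
      rw [mem_filter] at hf
      rw [mem_union]
      by_cases hh : ∃ i, f i ∈ W
      · exact Or.inr (mem_filter.mpr ⟨mem_univ _, hh⟩)
      · refine Or.inl (mem_filter.mpr ⟨mem_univ _, ?_⟩)
        rw [hH', mem_filter]
        refine ⟨hf.2, ?_⟩
        rw [disjoint_left]
        intro v hv
        rw [mem_insert, mem_image] at hv
        rcases hv with rfl | ⟨i, _, rfl⟩
        · exact hu
        · exact fun h => hh ⟨i, h⟩
    have hhit : (univ.filter (fun f : Fin r → V => ∃ i, f i ∈ W)).card * Fintype.card V ≤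
        Fintype.card (Fin r) * W.card * (Fintype.card V)^(Fintype.card (Fin r)) := by
      convert hit_count (I := Fin r) W using 3
      ext f
      simp only [mem_filter, mem_univ, true_and]
    rw [Fintype.card_fin] at hhit
    have hhit' : ((univ.filter (fun f : Fin r → V => ∃ i, f i ∈ W)).card : ℝ) * Fintype.card V ≤
        r * W.card * (Fintype.card V : ℝ)^r := by exact_mod_cast hhit
    have hhit2 : ((univ.filter (fun f : Fin r → V => ∃ i, f i ∈ W)).card : ℝ) ≤ r * ω * (Fintype.card V : ℝ)^r := by
      refine le_of_mul_le_mul_right (hhit'.trans ?_) hVr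
      calc r * W.card * (Fintype.card V : ℝ)^r ≤ r * (ω * Fintype.card V) * (Fintype.card V : ℝ)^r := by gcongr
        _ = _ := by ring
    have hle' : (tdeg r H u : ℝ) ≤ tdeg r H' u + (univ.filter (fun f : Fin r → V => ∃ i, f i ∈ W)).card := by
      exact_mod_cast hle
    have := hdeg u
    linarith
  set C := M.biUnion id with hC
  have hPC : PMset H C := ⟨M, ⟨hMM.1.trans hH's, hMM.2⟩, rfl⟩
  have hPW : PMset H W := PMset_biUnion S _ hSd (fun o ho => PM_of_val (hSv o ho))
  have hWC : Disjoint W C := by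
    rw [disjoint_left]
    intro v hv hv'
    obtain ⟨e, he, hve⟩ := mem_biUnion.mp hv'
    exact disjoint_left.mp (mem_filter.mp (hMM.1 he)).2 hve hv
  set R := univ \ (W ∪ C) with hR
  have hRd : (r+1) ∣ R.card := by
    have := PMset_card hH (PMset_union hWC hPW hPC)
    rw [hR, card_sdiff_of_subset (subset_univ _), card_univ]
    exact Nat.dvd_sub hdvd this
  have hRc : (R.card : ℝ) < β * Fintype.card V := by
    refine lt_of_le_of_lt ?_ h3
    refine Nat.cast_le.mpr (card_le_card ?_)
    intro u hu
    rw [hR, mem_sdiff, mem_union] at hu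
    rw [mem_filter]
    refine ⟨mem_univ _, ?_, hdeg' u (fun h => hu.2 (Or.inl h))⟩
    intro e he hue
    exact hu.2 (Or.inr (mem_biUnion.mpr ⟨e, he, hue⟩))
  have hPR := absorb r H S hSv hSd R (by
    rw [← hW, disjoint_left]
    intro v hv hv'
    exact (mem_sdiff.mp hv').2 (mem_union_left _ hv)) hRd (by
    intro t
    have := hRc.le.trans (hSc t)
    exact_mod_cast this)
  rw [← hW] at hPR
  have := PMset_union (by
    rw [disjoint_union_left]
    refine ⟨hWC, ?_⟩
    rw [disjoint_left]
    intro v hv hv'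
    exact (mem_sdiff.mp hv).2 (mem_union_right _ hv')) hPR hPC
  convert this using 1
  ext v
  simp only [hR, mem_union, mem_sdiff, mem_univ, true_and, true_iff]
  tauto


lemma tdeg_ge {V : Type*} [Fintype V] [DecidableEq V] (r : ℕ) (H : Finset (Finset V)) (hH : HyperUniform (r+1) H) (u : V) :
    r.factorial * hdeg H u ≤ tdeg r H u := by
  classical
  unfold tdeg hdeg
  rw [card_eq_sum_card_fiberwise (f := fun f : Fin r → V => insert u (univ.image f)) (t := H.filter (fun e => u ∈ e)) (by
    intro f hf
    have hf' := (mem_filter.mp (mem_coe.mp hf)).2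
    exact mem_coe.mpr (mem_filter.mpr ⟨hf', mem_insert_self _ _⟩))]
  rw [mul_comm, ← smul_eq_mul]
  refine card_nsmul_le_sum _ _ _ ?_
  intro e he
  obtain ⟨heH, hue⟩ := mem_filter.mp he
  have hec : (e.erase u).card = r := by
    rw [card_erase_of_mem hue, hH e heH]; rfl
  have hemb : Fintype.card (Fin r ↪ (e.erase u)) = r.factorial := by
    rw [Fintype.card_embedding_eq, Fintype.card_coe, hec, Fintype.card_fin, Nat.descFactorial_self]
  rw [← hemb, ← card_univ]
  refine card_le_card_of_injOn (fun g i => (g i).1) ?_ ?_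
  · intro g _
    have himg : univ.image (fun i => (g i).1) = e.erase u := by
      apply eq_of_subset_of_card_le
      · intro v hv
        obtain ⟨i, _, rfl⟩ := mem_image.mp hv
        exact (g i).2
      · rw [hec, card_image_of_injective _ (fun i j h => g.injective (Subtype.ext h))]
        simp
    have h2 : insert u (univ.image (fun i => (g i).1)) = e := by rw [himg, insert_erase hue]
    exact mem_coe.mpr (mem_filter.mpr ⟨mem_filter.mpr ⟨mem_univ _, by rw [h2]; exact heH⟩, h2⟩)
  · intro g _ g' _ h
    ext i
    exact congrFun h i

lemma choose_ge (r n : ℕ) (hr : 0 < r) (hn : r < n) (c c1 : ℝ) (hc : 0 < c)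
    (h : c * (r:ℝ)^2 + r.factorial ≤ (c - c1) * n) :
    c1 * (n:ℝ)^r ≤ r.factorial * (c * ((n-1).choose r : ℝ)) - r.factorial := by
  obtain ⟨s, rfl⟩ : ∃ s, r = s + 1 := ⟨r - 1, by omega⟩
  set r := s + 1 with hrs
  have hn0 : (0:ℝ) < n := by exact_mod_cast (show 0 < n by omega)
  have hn1 : (1:ℝ) ≤ n := by exact_mod_cast (show 1 ≤ n by omega)
  have h1 : (n - r)^r ≤ (n-1).descFactorial r := by
    have := Nat.pow_sub_le_descFactorial (n-1) r
    rwa [Nat.sub_add_cancel (by omega)] at this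
  rw [Nat.descFactorial_eq_factorial_mul_choose] at h1
  have h2 : ((n:ℝ) - r)^r ≤ r.factorial * ((n-1).choose r : ℝ) := by
    rw [← Nat.cast_sub hn.le]; exact_mod_cast h1
  have hrn : (r:ℝ) / n ≤ 1 := by
    rw [div_le_one hn0]; exact_mod_cast hn.le
  have h3 := one_add_mul_le_pow (show (-2:ℝ) ≤ -(r/n) by linarith) r
  have h4 : ((n:ℝ) - r)^r = (1 + -(r/n))^r * n^r := by
    rw [← mul_pow]; congr 1; field_simp; ring
  have hpow : (n:ℝ)^r = n^s * n := by rw [hrs, pow_succ]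
  have hps : (1:ℝ) ≤ n^s := one_le_pow₀ hn1
  have h5 : n^s * n - (r:ℝ)^2 * n^s ≤ r.factorial * ((n-1).choose r : ℝ) := by
    refine le_trans ?_ h2
    rw [h4]
    refine le_trans (le_of_eq ?_) (mul_le_mul_of_nonneg_right h3 (by positivity))
    rw [hpow]; field_simp; ring
  have h6 := mul_le_mul_of_nonneg_left h5 hc.le
  have h7 := mul_le_mul_of_nonneg_left h (show (0:ℝ) ≤ n^s by positivity)
  have h8 : (0:ℝ) ≤ r.factorial := by positivity
  have h9 := mul_le_mul_of_nonneg_right hps h8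
  rw [hpow]
  nlinarith

lemma mThr_le (r : ℕ) (hr : 0 < r) (c0 c1 c : ℝ) (hF : Frac r c0) (hc0 : 0 ≤ c0) (hcc : c0 < c1) (hc1 : 1/2 < c1) (hc : c1 < c)
    (hc' : c ≤ 1) :
    ∃ n0 : ℕ, ∀ n, n0 ≤ n → (r+1) ∣ n → (mThr (r+1) n : ℝ) ≤ c * ((n-1).choose r : ℝ) := by
  obtain ⟨n1, h1⟩ := pm_tdeg r hr c0 c1 hF hc0 hcc hc1 (by linarith)
  obtain ⟨n2, h2⟩ := exists_nat_ge ((c * (r:ℝ)^2 + r.factorial)/(c - c1))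
  refine ⟨n1 + n2 + r + 1, ?_⟩
  intro n hn hdvd
  have hcp : 0 < c := by linarith
  have hnn : c * (r:ℝ)^2 + r.factorial ≤ (c - c1) * n := by
    have : (c * (r:ℝ)^2 + r.factorial)/(c - c1) ≤ n := h2.trans (by exact_mod_cast (show n2 ≤ n by omega))
    rw [div_le_iff₀ (by linarith)] at this
    linarith
  have hch := choose_ge r n hr (by omega) c c1 hcp hnn
  refine le_trans ?_ (Nat.floor_le (show 0 ≤ c * ((n-1).choose r : ℝ) by positivity))
  refine Nat.cast_le.mpr (Nat.sInf_le ?_)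
  intro H hH hmin
  have hPM : PMset H univ := by
    refine h1 (Fin n) (by simp; omega) (by simpa using hdvd) H hH ?_
    intro u
    rw [Fintype.card_fin]
    refine hch.trans ?_
    have h3 : c * ((n-1).choose r : ℝ) < hdeg H u + 1 := by
      refine (Nat.lt_floor_add_one _).trans_le ?_
      have := hmin u
      have : ((⌊c * ((n-1).choose r : ℝ)⌋₊ : ℕ) : ℝ) ≤ hdeg H u := by exact_mod_cast this
      linarith
    have h4 : (r.factorial : ℝ) * hdeg H u ≤ tdeg r H u := by exact_mod_cast tdeg_ge r H hH u
    have h5 := mul_le_mul_of_nonneg_left h3.le (show (0:ℝ) ≤ r.factorial by positivity)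
    linarith
  obtain ⟨M, ⟨hMs, hMd⟩, hMu⟩ := hPM
  refine ⟨M, hMs, hMd, ?_⟩
  intro v
  have : v ∈ M.biUnion id := by rw [hMu]; exact mem_univ _
  exact mem_biUnion.mp this

lemma fThr_le (r : ℕ) (hr : 0 < r) (c0 c1 c : ℝ) (hF : Frac r c0) (hc0 : 0 ≤ c0) (hcc : c0 < c1) (hc1 : 1/2 < c1) (hc : c1 < c)
    (hc' : c ≤ 1) : fThr (r+1) ≤ c := by
  obtain ⟨n0, h⟩ := mThr_le r hr c0 c1 c hF hc0 hcc hc1 hc hc'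
  unfold fThr
  have : (Filter.atTop ⊓ Filter.principal {n : ℕ | (r+1) ∣ n}).NeBot := by
    rw [← Filter.frequently_iff_neBot, Filter.frequently_atTop]
    intro a
    exact ⟨(r+1) * a, by nlinarith, dvd_mul_right _ _⟩
  refine Filter.limsup_le_of_le (Filter.isCoboundedUnder_le_of_le _ (x := 0) (fun n => by positivity)) ?_
  rw [Filter.eventually_inf_principal]
  filter_upwards [Filter.eventually_ge_atTop n0] with n hn hd
  exact div_le_of_le_mul₀ (by positivity) (by linarith) (h n hn hd)

theorem g_gt_f_cases_aux : fThr 3 < 9/16 ∧ fThr 4 < 125/216 ∧ fThr 5 < 6561/10000 := by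
  refine ⟨?_, ?_, ?_⟩
  · exact (fThr_le 2 (by norm_num) _ 0.559 0.56 frac2 (by norm_num) (by norm_num) (by norm_num) (by norm_num) (by norm_num)).trans_lt (by norm_num)
  · exact (fThr_le 3 (by norm_num) _ 0.5783 0.5785 frac3 (by norm_num) (by norm_num) (by norm_num) (by norm_num) (by norm_num)).trans_lt (by norm_num)
  · exact (fThr_le 4 (by norm_num) _ 0.646 0.65 frac4 (by norm_num) (by norm_num) (by norm_num) (by norm_num) (by norm_num)).trans_lt (by norm_num)

theorem g_gt_f_cases :
    (fThr 3 < gThr 3 2 ∧ gThr 3 2 = gfun 3 2 (fun _ => 1)) ∧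
    (fThr 4 < gThr 4 2 ∧ gThr 4 2 = gfun 4 2 (fun i => if i = 0 then 1 else 2)) ∧
    (fThr 5 < gThr 5 2 ∧ gThr 5 2 = gfun 5 2 (fun i => if i = 0 then 0 else 4)) ∧
    (fThr 3 < gThr 3 3 ∧ gThr 3 3 = gfun 3 3 (fun i => if i < 2 then 0 else 2)) ∧
    (fThr 4 < gThr 4 3 ∧ gThr 4 3 = gfun 4 3 (fun i => if i < 2 then 0 else 3)) ∧
    (fThr 3 < gThr 3 4 ∧ gThr 3 4 = gfun 3 4 (fun i => if i < 3 then 0 else 2)) := by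
  obtain ⟨h3, h4, h5⟩ := g_gt_f_cases_aux
  exact g_gt_f_of h3 h4 h5
end

section
/- Let n, k, r be positive integers with n ≥ 2k² and r ≥ 2, let H be an n-vertex k-graph with an r-edge-coloring c: E(H) → {C_1,…,C_r}, assume δ(H) > (1/2)·C(n−1,k−1) + ((k²+1)/2)·C(n−2,k−2), and assume H contains no good gadget of the first, second, or third kind. Then for any three distinct vertices u_1, u_2, u_3 of H: if (u_1,u_2) is type S and (u_1,u_3) is type C_iC_j (for some i ≠ j in [r]), then (u_2,u_3) is also type C_iC_j. -/
open Finset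

def nbr {V : Type*} [Fintype V] [DecidableEq V] (H : Finset (Finset V)) (u : V) :
    Finset (Finset V) :=
  (Finset.univ : Finset V).powerset.filter (fun T => u ∉ T ∧ insert u T ∈ H)

def cprof {V : Type*} {r : ℕ} (c : Finset V → Fin r) (M : Finset (Finset V)) : Fin r → ℕ :=
  fun i => (M.filter (fun e => c e = i)).card

def Gadget1 {V : Type*} [Fintype V] [DecidableEq V] {r : ℕ} (H : Finset (Finset V))
    (c : Finset V → Fin r) : Prop :=
  ∃ u v : V, u ≠ v ∧ ∃ T₁ T₂ : Finset V,
    T₁ ∈ nbr H u ∧ T₁ ∈ nbr H v ∧ T₂ ∈ nbr H u ∧ T₂ ∈ nbr H v ∧ Disjoint T₁ T₂ ∧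
    cprof c {insert u T₁, insert v T₂} ≠ cprof c {insert v T₁, insert u T₂}

def Gadget2 {V : Type*} [Fintype V] [DecidableEq V] {r : ℕ} (H : Finset (Finset V))
    (c : Finset V → Fin r) : Prop :=
  ∃ u₁ u₂ u₃ : V, u₁ ≠ u₂ ∧ u₁ ≠ u₃ ∧ u₂ ≠ u₃ ∧ ∃ T₁ T₂ T₃ : Finset V,
    T₁ ∈ nbr H u₂ ∧ T₁ ∈ nbr H u₃ ∧ T₂ ∈ nbr H u₁ ∧ T₂ ∈ nbr H u₃ ∧
    T₃ ∈ nbr H u₁ ∧ T₃ ∈ nbr H u₂ ∧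
    Disjoint T₁ T₂ ∧ Disjoint T₁ T₃ ∧ Disjoint T₂ T₃ ∧
    u₁ ∉ T₁ ∧ u₂ ∉ T₂ ∧ u₃ ∉ T₃ ∧
    cprof c {insert u₂ T₁, insert u₃ T₂, insert u₁ T₃} ≠
      cprof c {insert u₃ T₁, insert u₁ T₂, insert u₂ T₃}

def Gadget3 {V : Type*} [Fintype V] [DecidableEq V] {r : ℕ} (k : ℕ) (H : Finset (Finset V))
    (c : Finset V → Fin r) : Prop :=
  ∃ e ∈ H, ∃ f ∈ H, ∃ ℓ : ℕ, 1 ≤ ℓ ∧ ℓ ≤ k ∧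
    ∃ u v : Fin ℓ → V, ∃ T : Fin ℓ → Finset V,
      Function.Injective u ∧ Function.Injective v ∧
      Finset.image u Finset.univ = e \ f ∧ Finset.image v Finset.univ = f \ e ∧
      (∀ i, T i ∈ nbr H (u i) ∧ T i ∈ nbr H (v i)) ∧
      (∀ i j, i ≠ j → Disjoint (T i) (T j)) ∧
      (∀ i, Disjoint (T i) (e ∪ f)) ∧
      cprof c (insert f (Finset.image (fun i => insert (u i) (T i)) Finset.univ)) ≠
        cprof c (insert e (Finset.image (fun i => insert (v i) (T i)) Finset.univ))

def GadgetFree {V : Type*} [Fintype V] [DecidableEq V] {r : ℕ} (k : ℕ) (H : Finset (Finset V))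
    (c : Finset V → Fin r) : Prop :=
  ¬ Gadget1 H c ∧ ¬ Gadget2 H c ∧ ¬ Gadget3 k H c

def TypeS {V : Type*} [Fintype V] [DecidableEq V] {r : ℕ} (k : ℕ) (H : Finset (Finset V))
    (c : Finset V → Fin r) (u v : V) : Prop :=
  k ^ 2 * ((Fintype.card V - 2).choose (k - 2)) ≤
    ((nbr H u ∩ nbr H v).filter (fun T => c (insert u T) = c (insert v T))).card

def TypeCC {V : Type*} [Fintype V] [DecidableEq V] {r : ℕ} (k : ℕ) (H : Finset (Finset V))
    (c : Finset V → Fin r) (i j : Fin r) (u v : V) : Prop :=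
  k ^ 2 * ((Fintype.card V - 2).choose (k - 2)) ≤
    ((nbr H u ∩ nbr H v).filter (fun T => c (insert u T) = i ∧ c (insert v T) = j)).card


lemma mem_nbr_iff' {n : ℕ} {H : Finset (Finset (Fin n))} {u : Fin n} {T : Finset (Fin n)} :
    T ∈ nbr H u ↔ u ∉ T ∧ insert u T ∈ H := by
  simp [nbr]

lemma nbr_card_mem {n k : ℕ} {H : Finset (Finset (Fin n))} (hH : HyperUniform k H)
    {u : Fin n} {T : Finset (Fin n)} (h : T ∈ nbr H u) : T.card + 1 = k := by
  rw [mem_nbr_iff'] at h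
  have := hH _ h.2
  rwa [card_insert_of_notMem h.1] at this

lemma card_nbr_eq {n : ℕ} (H : Finset (Finset (Fin n))) (u : Fin n) :
    (nbr H u).card = hdeg H u := by
  unfold hdeg
  refine Finset.card_bij' (fun T _ => insert u T) (fun e _ => e.erase u) ?_ ?_ ?_ ?_
  · intro T hT
    rw [mem_nbr_iff'] at hT
    simp [hT.2]
  · intro e he
    rw [mem_filter] at he
    rw [mem_nbr_iff']
    simp [insert_erase he.2, he.1]
  · intro T hT
    rw [mem_nbr_iff'] at hT
    simp [hT.1]
  · intro e he
    rw [mem_filter] at he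
    exact insert_erase he.2

lemma nbr_contain_le {n k : ℕ} (hk : 2 ≤ k) {H : Finset (Finset (Fin n))}
    (hH : HyperUniform k H) (u x : Fin n) :
    ((nbr H u).filter (fun T => x ∈ T)).card ≤ (n - 2).choose (k - 2) := by
  by_cases hx : x = u
  · subst hx
    have : (nbr H x).filter (fun T => x ∈ T) = ∅ := by
      apply filter_eq_empty_iff.2
      intro T hT
      exact (mem_nbr_iff'.1 hT).1
    simp [this]
  · have hc : (powersetCard (k - 2) ((univ : Finset (Fin n)) \ {u, x})).card
        = (n - 2).choose (k - 2) := by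
      rw [card_powersetCard, card_sdiff_of_subset (subset_univ _), card_pair (Ne.symm hx)]
      simp
    rw [← hc]
    apply Finset.card_le_card_of_injOn (fun T => T.erase x)
    · intro T hT
      have hT' := mem_filter.1 (mem_coe.1 hT)
      have h1 := nbr_card_mem hH hT'.1
      have h2 := (mem_nbr_iff'.1 hT'.1).1
      simp only [mem_coe, mem_powersetCard]
      refine ⟨?_, ?_⟩
      · intro y hy
        have hy' := mem_erase.1 hy
        simp only [mem_sdiff, mem_univ, true_and, mem_insert, mem_singleton, not_or]
        exact ⟨fun h => h2 (h ▸ hy'.2), hy'.1⟩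
      · rw [card_erase_of_mem hT'.2]; omega
    · intro T hT S hS h
      have hT' := mem_filter.1 (mem_coe.1 hT)
      have hS' := mem_filter.1 (mem_coe.1 hS)
      have := congrArg (insert x) h
      simpa [insert_erase hT'.2, insert_erase hS'.2] using this

lemma exists_disj {n k : ℕ} (hk : 2 ≤ k) {H : Finset (Finset (Fin n))}
    (hH : HyperUniform k H) (u : Fin n) (F : Finset (Finset (Fin n))) (hF : F ⊆ nbr H u)
    (X : Finset (Fin n)) (hX : X.card * (n - 2).choose (k - 2) < F.card) :
    ∃ T ∈ F, Disjoint T X := by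
  by_contra! hcon
  have hsub : F ⊆ X.biUnion (fun x => (nbr H u).filter (fun T => x ∈ T)) := by
    intro T hT
    obtain ⟨x, hx1, hx2⟩ := Finset.not_disjoint_iff.1 (hcon T hT)
    exact mem_biUnion.2 ⟨x, hx2, mem_filter.2 ⟨hF hT, hx1⟩⟩
  have h1 := card_le_card hsub
  have h2 := card_biUnion_le_card_mul X (fun x => (nbr H u).filter (fun T => x ∈ T))
    ((n - 2).choose (k - 2)) (fun x _ => nbr_contain_le hk hH u x)
  omega

lemma inter_lower {n k : ℕ} (hk : 2 ≤ k) (hn : 2 ≤ n) {H : Finset (Finset (Fin n))}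
    (hH : HyperUniform k H) {u v : Fin n} (huv : u ≠ v) :
    hdeg H u + hdeg H v ≤
      (nbr H u ∩ nbr H v).card + (n - 1).choose (k - 1) + (n - 2).choose (k - 2) := by
  have hu := card_filter_add_card_filter_not (s := nbr H u) (fun T => v ∈ T)
  have hv := card_filter_add_card_filter_not (s := nbr H v) (fun T => u ∈ T)
  have hu' := nbr_contain_le hk hH u v
  have hv' := nbr_contain_le hk hH v u
  have hP : (n - 1).choose (k - 1) = (n - 2).choose (k - 2) + (n - 2).choose (k - 1) := by
    obtain ⟨m, rfl⟩ := Nat.exists_eq_add_of_le hn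
    obtain ⟨l, rfl⟩ := Nat.exists_eq_add_of_le hk
    have e1 : 2 + m - 1 = m + 1 := by omega
    have e2 : 2 + l - 1 = l + 1 := by omega
    have e3 : 2 + m - 2 = m := by omega
    have e4 : 2 + l - 2 = l := by omega
    rw [e1, e2, e3, e4, Nat.choose_succ_succ]
  have hc : (powersetCard (k - 1) ((univ : Finset (Fin n)) \ {u, v})).card
        = (n - 2).choose (k - 1) := by
    rw [card_powersetCard, card_sdiff_of_subset (subset_univ _), card_pair huv]
    simp
  have hsub : (nbr H u).filter (fun T => ¬ v ∈ T) ∪ (nbr H v).filter (fun T => ¬ u ∈ T)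
      ⊆ powersetCard (k - 1) ((univ : Finset (Fin n)) \ {u, v}) := by
    intro T hT
    have key : u ∉ T ∧ v ∉ T ∧ T.card + 1 = k := by
      rcases mem_union.1 hT with h | h
      · have h' := mem_filter.1 h
        exact ⟨(mem_nbr_iff'.1 h'.1).1, h'.2, nbr_card_mem hH h'.1⟩
      · have h' := mem_filter.1 h
        exact ⟨h'.2, (mem_nbr_iff'.1 h'.1).1, nbr_card_mem hH h'.1⟩
    rw [mem_powersetCard]
    refine ⟨?_, by omega⟩
    intro y hy
    simp only [mem_sdiff, mem_univ, true_and, mem_insert, mem_singleton, not_or]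
    exact ⟨fun h => key.1 (h ▸ hy), fun h => key.2.1 (h ▸ hy)⟩
  have h1 := card_le_card hsub
  have h2 := card_union_add_card_inter ((nbr H u).filter (fun T => ¬ v ∈ T))
    ((nbr H v).filter (fun T => ¬ u ∈ T))
  have h3 : ((nbr H u).filter (fun T => ¬ v ∈ T) ∩ (nbr H v).filter (fun T => ¬ u ∈ T)).card
      ≤ (nbr H u ∩ nbr H v).card := by
    apply card_le_card
    exact inter_subset_inter (filter_subset _ _) (filter_subset _ _)
  rw [card_nbr_eq] at hu hv
  omega

lemma cprof_two {n r : ℕ} (c : Finset (Fin n) → Fin r) {a b : Finset (Fin n)} (h : a ≠ b)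
    (x : Fin r) :
    cprof c {a, b} x = (if c a = x then 1 else 0) + (if c b = x then 1 else 0) := by
  unfold cprof
  rw [card_filter, sum_pair h]

lemma cprof_three {n r : ℕ} (c : Finset (Fin n) → Fin r) {a b d : Finset (Fin n)} (h : a ≠ b)
    (h' : a ≠ d) (h'' : b ≠ d) (x : Fin r) :
    cprof c {a, b, d} x = (if c a = x then 1 else 0) + ((if c b = x then 1 else 0)
      + (if c d = x then 1 else 0)) := by
  unfold cprof
  rw [card_filter, sum_insert (by simp [h, h']), sum_pair h'']

lemma ne_of_mem_ins {n : ℕ} {u : Fin n} {T S : Finset (Fin n)} (h : u ∉ S) :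
    insert u T ≠ S := fun e => h (e ▸ mem_insert_self u T)

theorem typeS_typeCC_propagate (n k r : ℕ) (hn : 2 * k ^ 2 ≤ n) (hk : 1 ≤ k) (hr : 2 ≤ r)
    (H : Finset (Finset (Fin n))) (hH : HyperUniform k H) (c : Finset (Fin n) → Fin r)
    (hdegree : ∀ v : Fin n,
      (1 / 2 : ℝ) * (((n - 1).choose (k - 1) : ℕ) : ℝ) +
        (((k ^ 2 + 1 : ℕ) : ℝ) / 2) * (((n - 2).choose (k - 2) : ℕ) : ℝ) < (hdeg H v : ℝ))
    (hfree : GadgetFree k H c)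
    (u₁ u₂ u₃ : Fin n) (h12 : u₁ ≠ u₂) (h13 : u₁ ≠ u₃) (h23 : u₂ ≠ u₃)
    (i j : Fin r) (hij : i ≠ j)
    (hS : TypeS k H c u₁ u₂) (hCC : TypeCC k H c i j u₁ u₃) :
    TypeCC k H c i j u₂ u₃ := by
  have hn0 : 0 < n := lt_of_le_of_lt (Nat.zero_le _) u₁.isLt
  have hk2 : 2 ≤ k := by
    by_contra hlt
    have hk1 : k = 1 := by omega
    subst hk1
    have h1 := hdegree u₁
    have h2 : hdeg H u₁ ≤ 1 := by
      rw [← card_nbr_eq]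
      apply card_le_one.2
      intro a ha b hb
      have e1 := nbr_card_mem hH ha
      have e2 := nbr_card_mem hH hb
      rw [card_eq_zero.1 (by omega : a.card = 0), card_eq_zero.1 (by omega : b.card = 0)]
    have h3 : (hdeg H u₁ : ℝ) ≤ 1 := by exact_mod_cast h2
    norm_num at h1
    linarith
  have hn2 : k ≤ n := by nlinarith
  have hB : 0 < (n - 2).choose (k - 2) := Nat.choose_pos (by omega)
  have hbig : k ^ 2 * (n - 2).choose (k - 2) < (nbr H u₂ ∩ nbr H u₃).card := by
    have h := inter_lower hk2 (by omega) hH h23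
    have h2 := hdegree u₂
    have h3 := hdegree u₃
    have h' : (hdeg H u₂ : ℝ) + hdeg H u₃ ≤ (nbr H u₂ ∩ nbr H u₃).card
      + ((n - 1).choose (k - 1) : ℕ) + ((n - 2).choose (k - 2) : ℕ) := by exact_mod_cast h
    have : ((k ^ 2 * (n - 2).choose (k - 2) : ℕ) : ℝ) < (nbr H u₂ ∩ nbr H u₃).card := by
      push_cast at *
      linarith
    exact_mod_cast this
  unfold TypeS at hS
  unfold TypeCC at hCC ⊢
  rw [Fintype.card_fin] at hS hCC ⊢
  generalize hBdef : (n - 2).choose (k - 2) = B at *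
  obtain ⟨hf1, hf2, -⟩ := hfree
  -- sets avoiding the first vertex
  have step1 : ∀ T₁ ∈ nbr H u₂ ∩ nbr H u₃, u₁ ∉ T₁ →
      c (insert u₂ T₁) = i ∧ c (insert u₃ T₁) = j := by
    intro T₁ hT₁ hu1
    obtain ⟨hT12, hT13⟩ := mem_inter.1 hT₁
    have hc1 := nbr_card_mem hH hT12
    obtain ⟨T₃, hT3, hd3⟩ := exists_disj hk2 hH u₁ _
      ((filter_subset _ _).trans inter_subset_left) (insert u₃ T₁)
      (lt_of_lt_of_le (by
        rw [card_insert_of_notMem (mem_nbr_iff'.1 hT13).1, hBdef, hc1]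
        apply Nat.mul_lt_mul_of_pos_right _ hB
        nlinarith) hS)
    obtain ⟨hT3i, hs⟩ := mem_filter.1 hT3
    obtain ⟨hT31, hT32⟩ := mem_inter.1 hT3i
    have hc3 := nbr_card_mem hH hT31
    obtain ⟨T₂, hT2, hd2⟩ := exists_disj hk2 hH u₁ _
      ((filter_subset _ _).trans inter_subset_left) (insert u₂ (T₁ ∪ T₃))
      (lt_of_lt_of_le (by
        rw [hBdef]
        apply Nat.mul_lt_mul_of_pos_right _ hB
        have a1 := card_insert_le u₂ (T₁ ∪ T₃)
        have a2 := card_union_le T₁ T₃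
        have : (insert u₂ (T₁ ∪ T₃)).card ≤ 2 * k - 1 := by omega
        have : 2 * k ≤ k ^ 2 := by nlinarith
        omega) hCC)
    obtain ⟨hT2i, hci, hcj⟩ := mem_filter.1 hT2
    obtain ⟨hT21, hT23⟩ := mem_inter.1 hT2i
    rw [disjoint_insert_right] at hd3 hd2
    rw [disjoint_union_right] at hd2
    obtain ⟨hu3T3, hd3⟩ := hd3
    obtain ⟨hu2T2, hd21, hd23⟩ := hd2
    have heq : cprof c {insert u₂ T₁, insert u₃ T₂, insert u₁ T₃} =
      cprof c {insert u₃ T₁, insert u₁ T₂, insert u₂ T₃} := by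
      by_contra hne
      exact hf2 ⟨u₁, u₂, u₃, h12, h13, h23, T₁, T₂, T₃, hT12, hT13, hT21, hT23, hT31, hT32,
        hd21.symm, hd3.symm, hd23, hu1, hu2T2, hu3T3, hne⟩
    have n11 := (mem_nbr_iff'.1 hT12).1
    have n12 := (mem_nbr_iff'.1 hT13).1
    have n21 := (mem_nbr_iff'.1 hT21).1
    have n22 := (mem_nbr_iff'.1 hT23).1
    have n31 := (mem_nbr_iff'.1 hT31).1
    have n32 := (mem_nbr_iff'.1 hT32).1
    have E : ∀ x, _ := fun x => congrFun heq x
    have Ei := E i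
    have Ej := E j
    rw [cprof_three c (ne_of_mem_ins (by simp [*])) (ne_of_mem_ins (by simp [*, Ne.symm h12]))
      (ne_of_mem_ins (by simp [*, Ne.symm h13])),
      cprof_three c (ne_of_mem_ins (by simp [*, Ne.symm h13]))
      (ne_of_mem_ins (by simp [*, Ne.symm h23]))
      (ne_of_mem_ins (by simp [*]))] at Ei Ej
    rw [hci, hcj, hs] at Ei Ej
    simp only [hij, hij.symm, if_true, if_false] at Ei Ej
    constructor
    · by_contra hne
      simp only [hne, if_false] at Ei
      omega
    · by_contra hne
      simp only [hne, if_false] at Ej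
      omega
  have step2 : ∀ T₁ ∈ nbr H u₂ ∩ nbr H u₃, c (insert u₂ T₁) = i ∧ c (insert u₃ T₁) = j := by
    intro T₁ hT₁
    by_cases hu1 : u₁ ∈ T₁
    · obtain ⟨hT12, hT13⟩ := mem_inter.1 hT₁
      have hc1 := nbr_card_mem hH hT12
      obtain ⟨T₂, hT2, hd⟩ := exists_disj hk2 hH u₂ (nbr H u₂ ∩ nbr H u₃)
        inter_subset_left T₁ (lt_of_le_of_lt (by
          rw [hBdef]
          apply Nat.mul_le_mul_right
          nlinarith) hbig)
      obtain ⟨hT22, hT23⟩ := mem_inter.1 hT2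
      obtain ⟨hci, hcj⟩ := step1 T₂ hT2 (fun h => (disjoint_left.1 hd h) hu1)
      have heq : cprof c {insert u₂ T₁, insert u₃ T₂} = cprof c {insert u₃ T₁, insert u₂ T₂} := by
        by_contra hne
        exact hf1 ⟨u₂, u₃, h23, T₁, T₂, hT12, hT13, hT22, hT23, hd.symm, hne⟩
      have n11 := (mem_nbr_iff'.1 hT12).1
      have n12 := (mem_nbr_iff'.1 hT13).1
      have n21 := (mem_nbr_iff'.1 hT22).1
      have n22 := (mem_nbr_iff'.1 hT23).1
      have Ei := congrFun heq i
      have Ej := congrFun heq j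
      rw [cprof_two c (ne_of_mem_ins (by simp [*])),
        cprof_two c (ne_of_mem_ins (by simp [*, Ne.symm h23]))] at Ei Ej
      rw [hci, hcj] at Ei Ej
      simp only [hij, hij.symm, if_true, if_false] at Ei Ej
      constructor
      · by_contra hne
        simp only [hne, if_false] at Ei
        omega
      · by_contra hne
        simp only [hne, if_false] at Ej
        omega
    · exact step1 T₁ hT₁ hu1
  rw [filter_true_of_mem step2]
  exact hbig.le
end
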